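/- Let (p_n)_{n≥1} be a convex sequence of non-negative real numbers with p_1 > 0 such that the series ∑_{n=1}^∞ p_n/n converges. Then for every f ∈ 𝒮 with logarithmic coefficients γ_n, the inequality ∑_{n=1}^∞ n p_n |γ_n|² ≤ ∑_{n=1}^∞ p_n/n holds; moreover the inequality is strict unless f(z) = z/(1−e^{iθ}z)² for some θ ∈ ℝ. -/

import Mathlib

/-!
The inequality is reduced to Milin's inequalities
`∑_{k=1}^{n} (n + 1 - k) (k |γ_k|² - 1 / k) ≤ 0` for all `n ≥ 1`, which are combined by summing by parts
twice: the second differences of the convex weight `p` are nonnegative, and the summability of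
`p_n / n` removes the boundary terms (`weighted_bound`). If equality holds, one of Milin's sums is zero.

Milin's inequality is proved by de Branges' method, in a form that avoids Loewner's differential
equation. A univalent self-map `g` of the disk with `g 0 = 0` and `g' 0 = b < ρ < 1` omits a value of
modulus `ρ`, so by Koebe's square-root transform it factors as `ω ∘ g₁` with `ω` an explicit Blaschke
product of degree two and `g₁` a univalent self-map with larger derivative (`Good.koebe_step`). Iterating
this with `ρ → 1` approximates the logarithmic coefficients of any `f ∈ 𝒮` by those of finite
compositions of such `ω` close to the identity. A `C¹` functional of `(s, c)`, with `c` the vector of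
coefficients `2 γ_k` and `s` a time variable, which is monotone under the infinitesimal step and
nonpositive at `c = 0`, is therefore nonpositive on `𝒮` at `s = 1` (`classS_bound`).

The functional for Milin's inequality is `∑ τ_k(s) (k |c_k|² - 4 / k)`, with de Branges' weights `τ_k`. Its
derivative under an infinitesimal step is a sum of squares with coefficients `y_k(s)`
(`hasDerivAt_milinPhi`), where `s τ_k' = k y_k`. The `y_k` are Laurent coefficients of the character of a
symmetric power at a product `R · D Rᵀ D⁻¹` with `R` a rotation and `D` diagonal; this exhibits them as
sums of squares (`dbY_eval_eq`), so `y_k ≥ 0` without any appeal to Jacobi polynomials.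

The case of equality uses two more monotone functionals. A small perturbation of the one above shows
that Milin's inequality is strict when `|γ_1| < 1` (`milin_lt`). When `|γ_1| = 1`, a weighted sum of the
squared deviations `|k c_k - 2 (c_1 / 2)^k|²` together with `|c_1|² - 4` is monotone, so all deviations
vanish (`rigidity`), and `f` is a rotation of the Koebe function (`koebe_of_coeffs`).
-/

open Complex Metric Real

/-- The class `𝒮` of normalized univalent (analytic and injective) functions
on the unit disk. -/
def InClassS (f : ℂ → ℂ) : Prop :=
  AnalyticOnNhd ℂ f (ball (0 : ℂ) 1) ∧ Set.InjOn f (ball (0 : ℂ) 1) ∧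
    f 0 = 0 ∧ deriv f 0 = 1

/-- `γ` are the logarithmic coefficients of `f`: there is an analytic branch `g`
of `log (f z / z)` on the unit disk with `g 0 = 0` whose Taylor coefficients at `0`
are `2 * γ n` for `n ≥ 1`. -/
def IsLogCoeffs (f : ℂ → ℂ) (γ : ℕ → ℂ) : Prop :=
  ∃ g : ℂ → ℂ, AnalyticOnNhd ℂ g (ball (0 : ℂ) 1) ∧ g 0 = 0 ∧
    (∀ z ∈ ball (0 : ℂ) 1, z ≠ 0 → Complex.exp (g z) = f z / z) ∧
    ∀ n : ℕ, 1 ≤ n → iteratedDeriv n g 0 = (n.factorial : ℂ) * (2 * γ n)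

/-- `f` coincides on the unit disk with a rotation `z / (1 - e^{iθ} z)^2`
of the Koebe function. -/
def IsKoebeRotation (f : ℂ → ℂ) : Prop :=
  ∃ θ : ℝ, Set.EqOn f
    (fun z => z / (1 - Complex.exp (θ * Complex.I) * z) ^ 2) (ball (0 : ℂ) 1)

/-! ### Polynomials behind the weights, and symmetric powers of 2×2 matrices -/

noncomputable section

open Polynomial in
/-- The coefficient `y_{n,k}(X)` of `T ^ k` in the Laurent polynomial `Y_n` over `ℝ[X]` given by
`Y_0 = 0`, `Y_1 = 1`, `Y_{n+2} = (2 + X (T - 2 + T⁻¹)) Y_{n+1} - Y_n`, i.e. in the Chebyshev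
polynomial of the second kind `U_{n-1}` at half the bracket. Up to the change of variable
`s = e^{-t}`, these polynomials are the time derivatives of de Branges' weight functions. -/
def dbY : ℕ → ℤ → Polynomial ℝ
  | 0, _ => 0
  | 1, k => if k = 0 then 1 else 0
  | n + 2, k => 2 * dbY (n + 1) k +
      X * (dbY (n + 1) (k - 1) - 2 * dbY (n + 1) k + dbY (n + 1) (k + 1)) - dbY n k

lemma dbY_eq_zero (n : ℕ) : ∀ k : ℤ, (n : ℤ) ≤ k → dbY n k = 0 := by
  induction n using Nat.twoStepInduction with
  | zero => intro k _; simp [dbY]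
  | one => intro k hk; simp only [dbY]; rw [if_neg]; push_cast at hk; omega
  | more n h1 h2 =>
    intro k hk
    push_cast at hk h2
    simp only [dbY]
    rw [h2 k (by omega), h2 (k - 1) (by omega), h2 (k + 1) (by omega), h1 k (by omega)]
    simp

open Polynomial in
/-- The differential system of de Branges' weights, in the variable `X = s`. -/
lemma dbY_deriv (n : ℕ) : ∀ k : ℤ, X * derivative (dbY n k + dbY n (k + 1)) =
    (k : Polynomial ℝ) * dbY n k - ((k : Polynomial ℝ) + 1) * dbY n (k + 1) := by
  induction n using Nat.twoStepInduction with
  | zero => intro k; simp [dbY]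
  | one =>
    intro k; simp only [dbY]
    split_ifs with h1 h2 h2
    · omega
    · simp [h1]
    · have : (k : Polynomial ℝ) = -1 := by
        have : k = -1 := by omega
        rw [this]; simp
      simp [this]
    · simp
  | more n h1 h2 =>
    intro k
    have e1 := h2 (k - 1)
    have e2 := h2 k
    have e3 := h2 (k + 1)
    have e4 := h1 k
    simp only [dbY]
    simp only [sub_add_cancel, add_sub_cancel_right] at *
    push_cast at e1 e2 e3 e4
    simp only [derivative_add, derivative_mul, derivative_sub, derivative_X, derivative_ofNat,
      zero_mul, one_mul, zero_add] at *
    linear_combination 2 * e2 + X * (e1 - 2 * e2 + e3) - e4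

/-- The value at `X = 1`, where the weights take their terminal values. -/
lemma dbY_one (n : ℕ) : ∀ k : ℤ, (dbY n k).eval 1 + (dbY n (k + 1)).eval 1 =
    if -(n : ℤ) ≤ k ∧ k < n then 1 else 0 := by
  induction n using Nat.twoStepInduction with
  | zero => intro k; simp [dbY]
  | one =>
    intro k; simp only [dbY]
    split_ifs <;> simp <;> omega
  | more n h1 h2 =>
    intro k
    have e1 := h2 (k - 1)
    have e2 := h2 k
    have e3 := h2 (k + 1)
    have e4 := h1 k
    simp only [dbY]
    simp only [sub_add_cancel, add_sub_cancel_right] at *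
    simp only [Polynomial.eval_add, Polynomial.eval_sub, Polynomial.eval_mul, Polynomial.eval_X,
      Polynomial.eval_ofNat]
    have key : (if -((n + 1 : ℕ) : ℤ) ≤ k - 1 ∧ k - 1 < ((n + 1 : ℕ) : ℤ) then (1 : ℝ) else 0) +
        (if -((n + 1 : ℕ) : ℤ) ≤ k + 1 ∧ k + 1 < ((n + 1 : ℕ) : ℤ) then (1 : ℝ) else 0) -
        (if -(n : ℤ) ≤ k ∧ k < (n : ℤ) then (1 : ℝ) else 0) =
        if -((n + 2 : ℕ) : ℤ) ≤ k ∧ k < ((n + 2 : ℕ) : ℤ) then (1 : ℝ) else 0 := by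
      push_cast
      split_ifs <;> first | (exfalso; omega) | norm_num
    linear_combination e1 + e3 - e4 + key

section sym
open Polynomial Finset
variable {R : Type*} [CommRing R]

/-- The image of the monomial `1^(n-i) X^i` under the `n`-th symmetric power of the substitution
`1 ↦ a + b X`, `X ↦ c + d X`, for `i ≤ n` (truncated subtraction makes it meaningless for `i > n`). -/
def symQ (a b c d : R) (n i : ℕ) : R[X] := (C a + C b * X) ^ (n - i) * (C c + C d * X) ^ i

/-- The `(i, j)` entry of the `n`-th symmetric power of the matrix `!![a, b; c, d]`. -/
def symM (a b c d : R) (n i j : ℕ) : R := (symQ a b c d n i).coeff j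

/-- The trace of the `n`-th symmetric power of `!![a, b; c, d]`. -/
def symT (a b c d : R) (n : ℕ) : R := ∑ i ∈ range (n + 1), symM a b c d n i i

variable (a b c d : R)

lemma symQ_succ_left {n i : ℕ} (h : i ≤ n) :
    symQ a b c d (n + 1) i = (C a + C b * X) * symQ a b c d n i := by
  simp only [symQ, Nat.succ_sub h, Nat.succ_eq_add_one, pow_succ]; ring

lemma symQ_succ_right (n i : ℕ) :
    symQ a b c d (n + 1) (i + 1) = (C c + C d * X) * symQ a b c d n i := by
  simp only [symQ, Nat.add_sub_add_right, pow_succ]; ring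

lemma symQ_natDegree {n i : ℕ} (h : i ≤ n) : (symQ a b c d n i).natDegree ≤ n := by
  have h1 : ∀ u v : R, (C u + C v * X : R[X]).natDegree ≤ 1 := fun u v => by
    compute_degree
  have := natDegree_mul_le_of_le (natDegree_pow_le_of_le (n - i) (h1 a b))
    (natDegree_pow_le_of_le i (h1 c d))
  unfold symQ
  omega

lemma coeff_lin_succ (u v : R) (q : R[X]) (j : ℕ) :
    ((C u + C v * X) * q).coeff (j + 1) = u * q.coeff (j + 1) + v * q.coeff j := by
  rw [add_mul, coeff_add, coeff_C_mul, mul_assoc, coeff_C_mul, coeff_X_mul]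

lemma coeff_lin_zero (u v : R) (q : R[X]) :
    ((C u + C v * X) * q).coeff 0 = u * q.coeff 0 := by
  simp [mul_coeff_zero]

/-- The Chebyshev recurrence for characters: `tr Sym^{n+2} = tr · tr Sym^{n+1} - det · tr Sym^n`. -/
lemma symT_rec (n : ℕ) : symT a b c d (n + 2) =
    (a + d) * symT a b c d (n + 1) - (a * d - b * c) * symT a b c d n := by
  have hT : symT a b c d (n + 2) = a * symT a b c d (n + 1) +
      b * ∑ i ∈ range (n + 1), symM a b c d (n + 1) (i + 1) i +
      d * symM a b c d (n + 1) (n + 1) (n + 1) := by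
    have hlast : symM a b c d (n + 2) (n + 2) (n + 2) = d * symM a b c d (n + 1) (n + 1) (n + 1) := by
      unfold symM
      rw [symQ_succ_right, coeff_lin_succ, coeff_eq_zero_of_natDegree_lt, mul_zero, zero_add]
      exact lt_of_le_of_lt (symQ_natDegree a b c d le_rfl) (by omega)
    have hz : symM a b c d (n + 2) 0 0 = a * symM a b c d (n + 1) 0 0 := by
      unfold symM
      rw [symQ_succ_left _ _ _ _ (Nat.zero_le _), coeff_lin_zero]
    have hm : ∀ i ∈ range (n + 1), symM a b c d (n + 2) (i + 1) (i + 1) =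
        a * symM a b c d (n + 1) (i + 1) (i + 1) + b * symM a b c d (n + 1) (i + 1) i := by
      intro i hi
      have := mem_range.1 hi
      unfold symM
      rw [symQ_succ_left _ _ _ _ (by omega), coeff_lin_succ]
    unfold symT
    rw [sum_range_succ, hlast, sum_range_succ', hz, sum_congr rfl hm, sum_add_distrib,
      ← mul_sum, ← mul_sum, sum_range_succ' (fun i => symM a b c d (n + 1) i i)]
    ring
  have hS : symT a b c d (n + 1) = ∑ i ∈ range (n + 1), symM a b c d (n + 1) i i +
      symM a b c d (n + 1) (n + 1) (n + 1) := by
    unfold symT; rw [sum_range_succ]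
  have hD : b * ∑ i ∈ range (n + 1), symM a b c d (n + 1) (i + 1) i -
      d * ∑ i ∈ range (n + 1), symM a b c d (n + 1) i i = - (a * d - b * c) * symT a b c d n := by
    unfold symT
    rw [mul_sum, mul_sum, mul_sum, ← sum_sub_distrib]
    refine sum_congr rfl fun i hi => ?_
    have := mem_range.1 hi
    unfold symM
    rw [symQ_succ_right, symQ_succ_left _ _ _ _ (by omega), ← coeff_C_mul, ← coeff_C_mul,
      ← coeff_C_mul, ← coeff_sub]
    congr 1
    simp only [C_neg, C_sub, C_mul]
    ring
  rw [hT]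
  rw [hS] at *
  linear_combination hD

/-- The defining expansion of the rows of the symmetric power, homogenized: the two basis vectors
`1, X` may be replaced by arbitrary polynomials `P, Q`. This yields multiplicativity. -/
lemma symM_hom {n i : ℕ} (h : i ≤ n) (P Q : R[X]) :
    ∑ j ∈ range (n + 1), C (symM a b c d n i j) * (P ^ (n - j) * Q ^ j) =
      (C a * P + C b * Q) ^ (n - i) * (C c * P + C d * Q) ^ i := by
  have key : ∀ (n : ℕ) (q : R[X]) (u v : R), q.natDegree ≤ n →
      ∑ j ∈ range (n + 2), C (((C u + C v * X) * q).coeff j) * (P ^ (n + 1 - j) * Q ^ j) =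
      (C u * P + C v * Q) * ∑ j ∈ range (n + 1), C (q.coeff j) * (P ^ (n - j) * Q ^ j) := by
    intro n q u v hq
    have h1 : ∑ j ∈ range (n + 2), C (((C u + C v * X) * q).coeff j) * (P ^ (n + 1 - j) * Q ^ j) =
        ∑ j ∈ range (n + 2), C (u * q.coeff j) * (P ^ (n + 1 - j) * Q ^ j) +
        ∑ j ∈ range (n + 1), C (v * q.coeff j) * (P ^ (n - j) * Q ^ (j + 1)) := by
      rw [sum_range_succ', sum_range_succ' _ (n + 1), coeff_lin_zero]
      simp only [coeff_lin_succ, Nat.add_sub_add_right]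
      simp only [C_add, add_mul, sum_add_distrib]
      ring
    rw [h1, sum_range_succ, coeff_eq_zero_of_natDegree_lt (by omega : q.natDegree < n + 1),
      mul_sum, mul_zero, C_0, zero_mul, add_zero, ← sum_add_distrib]
    refine sum_congr rfl fun j hj => ?_
    have := mem_range.1 hj
    rw [show n + 1 - j = (n - j) + 1 by omega, pow_succ, pow_succ, C_mul, C_mul]
    ring
  induction n generalizing i with
  | zero =>
    obtain rfl : i = 0 := by omega
    simp [symM, symQ]
  | succ n ih =>
    by_cases hi : i ≤ n
    · simp only [symM, symQ_succ_left _ _ _ _ hi]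
      rw [key n _ _ _ (symQ_natDegree a b c d hi)]
      have := ih hi
      simp only [symM] at this
      rw [this, show n + 1 - i = (n - i) + 1 by omega, pow_succ]
      ring
    · obtain rfl : i = n + 1 := by omega
      simp only [symM, symQ_succ_right]
      rw [key n _ _ _ (symQ_natDegree a b c d le_rfl)]
      have := ih le_rfl
      simp only [symM] at this
      rw [this]
      simp only [Nat.sub_self, pow_succ]
      ring

/-- The trace of the symmetric power of a product of two matrices. -/
lemma symT_mul (a' b' c' d' : R) (n : ℕ) :
    symT (a * a' + b * c') (a * b' + b * d') (c * a' + d * c') (c * b' + d * d') n =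
      ∑ i ∈ range (n + 1), ∑ j ∈ range (n + 1), symM a b c d n i j * symM a' b' c' d' n j i := by
  unfold symT
  refine sum_congr rfl fun i hi => ?_
  have hi' : i ≤ n := by have := mem_range.1 hi; omega
  have := congrArg (fun p => p.coeff i)
    (symM_hom a b c d hi' (C a' + C b' * X) (C c' + C d' * X))
  simp only [finsetSum_coeff, coeff_C_mul] at this
  unfold symM at *
  unfold symQ at *
  rw [this]
  congr 1
  simp only [C_add, C_mul]
  ring

/-- In the basis rescaled by binomial coefficients, the symmetric power of the transpose is the
transpose of the symmetric power. -/
lemma symM_transpose (n : ℕ) : ∀ i j : ℕ, i ≤ n → j ≤ n →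
    (n.choose i : R) * symM a b c d n i j = (n.choose j : R) * symM a c b d n j i := by
  -- The weighted matrix `choose n i * symM n i j` obeys a Pascal-type recurrence that is
  -- symmetric under transposition.
  let W : R → R → ℕ → ℕ → ℕ → R := fun b c n i j => (n.choose i : R) * symM a b c d n i j
  have w0 : ∀ b c n i, n < i → ∀ j, W b c n i j = 0 := fun b c n i h j => by
    simp [W, Nat.choose_eq_zero_of_lt h]
  have r00 : ∀ b c n, W b c (n + 1) 0 0 = a * W b c n 0 0 := fun b c n => by
    simp only [W, symM, symQ_succ_left _ _ _ _ (Nat.zero_le _), coeff_lin_zero]; simp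
  have r0s : ∀ b c n j, W b c (n + 1) 0 (j + 1) = a * W b c n 0 (j + 1) + b * W b c n 0 j :=
    fun b c n j => by
    simp only [W, symM, symQ_succ_left _ _ _ _ (Nat.zero_le _), coeff_lin_succ]; simp
  have hch : ∀ b c n i j, W b c (n + 1) (i + 1) j =
      (n.choose (i + 1) : R) * ((C a + C b * X) * symQ a b c d n (i + 1)).coeff j +
      (n.choose i : R) * ((C c + C d * X) * symQ a b c d n i).coeff j := fun b c n i j => by
    simp only [W, Nat.choose_succ_succ', Nat.cast_add, symM]
    rw [← symQ_succ_right]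
    by_cases h : i + 1 ≤ n
    · rw [← symQ_succ_left _ _ _ _ h]; ring
    · rw [Nat.choose_eq_zero_of_lt (by omega : n < i + 1)]; simp
  have rs0 : ∀ b c n i, W b c (n + 1) (i + 1) 0 = a * W b c n (i + 1) 0 + c * W b c n i 0 :=
    fun b c n i => by
    rw [hch, coeff_lin_zero, coeff_lin_zero]; simp only [W, symM]; ring
  have rss : ∀ b c n i j, W b c (n + 1) (i + 1) (j + 1) = a * W b c n (i + 1) (j + 1) +
      b * W b c n (i + 1) j + c * W b c n i (j + 1) + d * W b c n i j :=
    fun b c n i j => by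
    rw [hch, coeff_lin_succ, coeff_lin_succ]; simp only [W, symM]; ring
  have w0' : ∀ b c n i j, n < j → W b c n i j = 0 := fun b c n i j h => by
    by_cases hi : i ≤ n
    · simp only [W, symM]
      rw [coeff_eq_zero_of_natDegree_lt (lt_of_le_of_lt (symQ_natDegree a b c d hi) h), mul_zero]
    · exact w0 _ _ _ _ (by omega) _
  have main : ∀ n i j, W b c n i j = W c b n j i := by
    intro n
    induction n with
    | zero =>
      intro i j
      by_cases hi : 0 < i
      · rw [w0 _ _ _ _ hi, w0' _ _ _ _ _ hi]
      · by_cases hj : 0 < j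
        · rw [w0' _ _ _ _ _ hj, w0 _ _ _ _ hj]
        · obtain rfl : i = 0 := by omega
          obtain rfl : j = 0 := by omega
          simp [W, symM, symQ]
    | succ n ih =>
      rintro (_ | i) (_ | j)
      · rw [r00, r00, ih]
      · rw [r0s, rs0, ih, ih]
      · rw [r0s, rs0, ih, ih]
      · rw [rss, rss, ih, ih, ih, ih]; ring
  exact fun i j _ _ => main n i j
end sym
end

/-! ### Positivity of the weights -/

noncomputable section
section positivity
open LaurentPolynomial Finset

lemma laurent_coeff_T_mul (f : ℝ[T;T⁻¹]) (k m : ℤ) :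
    (T m * f).coeff k = f.coeff (k - m) := by
  rw [T, AddMonoidAlgebra.coeff_single_mul_apply, one_mul]
  congr 1; ring

lemma laurent_coeff_C_mul (f : ℝ[T;T⁻¹]) (r : ℝ) (k : ℤ) : (C r * f).coeff k = r * f.coeff k := by
  rw [← smul_eq_C_mul]; simp

lemma symM_map {R S : Type*} [CommRing R] [CommRing S] (φ : R →+* S) (a b c d : R) (n i j : ℕ) :
    symM (φ a) (φ b) (φ c) (φ d) n i j = φ (symM a b c d n i j) := by
  unfold symM symQ
  rw [← Polynomial.coeff_map]
  simp

/-- Conjugation by a diagonal matrix. -/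
lemma symM_conj {R : Type*} [CommRing R] (a b c d w z : R) (h : w * z = 1) (n i j : ℕ) :
    symM a (b * w) (c * z) d n i j = z ^ i * w ^ j * symM a b c d n i j := by
  have : symQ a (b * w) (c * z) d n i =
      Polynomial.C (z ^ i) * (symQ a b c d n i).comp (Polynomial.C w * Polynomial.X) := by
    unfold symQ
    have h2 : Polynomial.C w * Polynomial.C z = 1 := by rw [← Polynomial.C_mul, h, Polynomial.C_1]
    simp only [Polynomial.mul_comp, Polynomial.pow_comp, Polynomial.add_comp, Polynomial.C_comp,
      Polynomial.X_comp, Polynomial.C_mul, Polynomial.C_pow]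
    rw [mul_left_comm, ← mul_pow, mul_add]
    congr 2
    · ring
    · linear_combination (-Polynomial.C d * Polynomial.X) * h2
  unfold symM
  rw [this, Polynomial.coeff_C_mul, Polynomial.comp_C_mul_X_coeff]
  ring

/-- If a matrix over Laurent polynomials has determinant `1` and trace `2 + σ (T - 2 + T⁻¹)`, then
`y_{n+1,k}(σ)` is the coefficient of `T ^ k` in the trace of its `n`-th symmetric power, since both
satisfy the same recurrence. -/
lemma dbY_eq_symT (σ : ℝ) (a b c d : ℝ[T;T⁻¹]) (htr : a + d = 2 + C σ * (T 1 - 2 + T (-1)))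
    (hdet : a * d - b * c = 1) (n : ℕ) :
    ∀ k, (symT a b c d n).coeff k = (dbY (n + 1) k).eval σ := by
  have hmul : ∀ (f : ℝ[T;T⁻¹]) k, ((a + d) * f).coeff k =
      2 * f.coeff k + σ * (f.coeff (k - 1) - 2 * f.coeff k + f.coeff (k + 1)) := by
    intro f k
    have : (a + d) * f = C 2 * f + C σ * (T 1 * f - C 2 * f + T (-1) * f) := by
      rw [htr]
      have : (C (2 : ℝ) : ℝ[T;T⁻¹]) = 2 := map_ofNat C 2
      rw [this]; ring
    rw [this]
    simp only [AddMonoidAlgebra.coeff_add, AddMonoidAlgebra.coeff_sub, Finsupp.add_apply,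
      Finsupp.sub_apply, laurent_coeff_C_mul, laurent_coeff_T_mul, sub_neg_eq_add]
  have h0 : ∀ k, (symT a b c d 0).coeff k = (dbY 1 k).eval σ := by
    intro k
    have : symT a b c d 0 = C 1 := by simp [symT, symM, symQ]
    rw [this, C_apply]
    simp only [dbY]
    split_ifs <;> simp
  induction n using Nat.twoStepInduction with
  | zero => exact h0
  | one =>
    intro k
    have : symT a b c d 1 = (a + d) * symT a b c d 0 := by
      simp [symT, symM, symQ, sum_range_succ]
    rw [this, hmul, h0, h0, h0]
    conv_rhs => rw [dbY]
    simp [show dbY 0 k = 0 from rfl]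
  | more n h1 h2 =>
    intro k
    rw [symT_rec, hdet, one_mul, AddMonoidAlgebra.coeff_sub, Finsupp.sub_apply, hmul, h1, h2, h2, h2]
    conv_rhs => rw [dbY]
    simp

/-- A sum-of-squares formula. The trace in `dbY_eq_symT` is realized by `R · D Rᵀ D⁻¹`, where `R` is
the rotation with cosine `√(1 - σ)` and sine `√σ`, and `D` is a diagonal matrix whose conjugation
multiplies the off-diagonal entries by `T` and `T⁻¹`. As `Sym^n Rᵀ` is the weighted transpose of
`Sym^n R`, the coefficient of `T ^ k` collects squares of the entries with `j - i = k`. -/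
lemma dbY_eval_eq (n : ℕ) (k : ℤ) {σ : ℝ} (h0 : 0 ≤ σ) (h1 : σ ≤ 1) :
    (dbY (n + 1) k).eval σ = ∑ i ∈ range (n + 1), ∑ j ∈ range (n + 1),
      if (j : ℤ) - i = k then (n.choose i : ℝ) / n.choose j *
        symM √(1 - σ) √σ (-√σ) √(1 - σ) n i j ^ 2 else 0 := by
  set c := √(1 - σ) with hc
  set s := √σ with hs
  have hc2 : c * c = 1 - σ := mul_self_sqrt (by linarith)
  have hs2 : s * s = σ := mul_self_sqrt h0
  have hC2 : C c * C c = 1 - C σ := by rw [← map_mul, hc2]; simp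
  have hS2 : C s * C s = C σ := by rw [← map_mul, hs2]
  have hT : (T (-1) * T 1 : ℝ[T;T⁻¹]) = 1 := by rw [← T_add]; simp
  rw [← dbY_eq_symT σ (C c * C c + C s * (C s * T 1)) (C c * (C (-s) * T (-1)) + C s * C c)
    (C (-s) * C c + C c * (C s * T 1)) (C (-s) * (C (-s) * T (-1)) + C c * C c)
    (by simp only [map_neg]; linear_combination 2 * hC2 + (T 1 + T (-1)) * hS2)
    (by
      simp only [map_neg]
      linear_combination (C c * C c + C s * C s) * (hC2 + hS2) + hC2 + hS2 +
        (C s * C s * C s * C s + C s * C s * C c * C c) * hT) n k, symT_mul]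
  rw [AddMonoidAlgebra.coeff_sum, Finsupp.finsetSum_apply]
  refine sum_congr rfl fun i hi => ?_
  rw [AddMonoidAlgebra.coeff_sum, Finsupp.finsetSum_apply]
  refine sum_congr rfl fun j hj => ?_
  have hi' : i ≤ n := by have := mem_range.1 hi; omega
  have hj' : j ≤ n := by have := mem_range.1 hj; omega
  rw [symM_map, symM_conj _ _ _ _ _ _ hT, symM_map, laurent_coeff_C_mul, T_pow, T_pow,
    ← T_add, mul_comm (T _), laurent_coeff_C_mul, T_apply]
  have hne : (n.choose j : ℝ) ≠ 0 := by exact_mod_cast (Nat.choose_pos hj').ne'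
  have ht := symM_transpose c s (-s) c n i j hi' hj'
  have : symM c (-s) s c n j i = n.choose i / n.choose j * symM c s (-s) c n i j := by
    field_simp; linarith
  rw [this]
  simp only [show ((j : ℤ) * 1 + (i : ℤ) * -1 = k) ↔ ((j : ℤ) - i = k) by
    constructor <;> intro h <;> linarith]
  split_ifs <;> ring

lemma dbY_nonneg (n : ℕ) (k : ℤ) {σ : ℝ} (h0 : 0 ≤ σ) (h1 : σ ≤ 1) :
    0 ≤ (dbY (n + 1) k).eval σ := by
  rw [dbY_eval_eq n k h0 h1]
  refine sum_nonneg fun i _ => sum_nonneg fun j _ => ?_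
  split_ifs <;> positivity

/-- The contribution of the single entry `(i, j) = (m, m + 1)` to `dbY_eval_eq`. -/
lemma dbY_one_ge (m : ℕ) {σ : ℝ} (h0 : 0 ≤ σ) (h1 : σ ≤ 1) :
    (m + 1) * σ * (1 - σ) ^ m ≤ (dbY (m + 2) 1).eval σ := by
  rw [dbY_eval_eq (m + 1) 1 h0 h1]
  refine le_trans ?_ (single_le_sum (fun i _ => sum_nonneg fun j _ => ?_)
    (mem_range.2 (by omega : m < m + 1 + 1)))
  · refine le_trans ?_ (single_le_sum (fun j _ => ?_)
      (mem_range.2 (by omega : m + 1 < m + 1 + 1)))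
    · rw [if_pos (by push_cast; ring)]
      have : symM √(1 - σ) √σ (-√σ) √(1 - σ) (m + 1) m (m + 1) = √σ * √(1 - σ) ^ m := by
        unfold symM
        rw [symQ_succ_left _ _ _ _ le_rfl, coeff_lin_succ, Polynomial.coeff_eq_zero_of_natDegree_lt
          (lt_of_le_of_lt (symQ_natDegree _ _ _ _ le_rfl) (Nat.lt_succ_self _)), mul_zero, zero_add]
        congr 1
        unfold symQ
        rw [Nat.sub_self, pow_zero, one_mul]
        have := Polynomial.coeff_pow_of_natDegree_le (n := 1) (m := m)
          (p := Polynomial.C (-√σ) + Polynomial.C √(1 - σ) * Polynomial.X) (by compute_degree)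
        rw [mul_one] at this
        rw [this]
        simp
      rw [this, mul_pow, ← pow_mul, mul_comm m 2, pow_mul, sq_sqrt h0, sq_sqrt (by linarith)]
      apply le_of_eq
      simp
      ring
    · split_ifs <;> positivity
  · split_ifs <;> positivity
end positivity

section weights
open Polynomial Finset

/-- Existence of weights of de Branges type, in the variable `s ∈ [0, 1]`:
`τ_k - τ_{k+1} = y_k + y_{k+1}` and `s τ_k' = k y_k`, with `y_k ≥ 0` and `τ_k(1) = m + 2 - k`.
The lower bounds on `y_1` and `τ_1` serve the strict form of Milin's inequality. -/
lemma exists_weights (m : ℕ) : ∃ y τ : ℕ → Polynomial ℝ,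
    (∀ k ≤ m + 1, τ k = τ (k + 1) + (y k + y (k + 1))) ∧
    τ (m + 2) = 0 ∧ y (m + 2) = 0 ∧
    (∀ k ≤ m + 2, X * derivative (τ k) = (k : Polynomial ℝ) * y k) ∧
    (∀ k ≤ m + 2, (τ k).eval 1 = m + 2 - k) ∧
    (∀ k, ∀ s : ℝ, 0 ≤ s → s ≤ 1 → 0 ≤ (y k).eval s) ∧
    (∀ s : ℝ, 0 ≤ s → s ≤ 1 → (m + 1) * s * (1 - s) ^ m ≤ (y 1).eval s) ∧
    (∀ k, ∀ s : ℝ, 0 ≤ s → s ≤ 1 → 0 ≤ (τ k).eval s) ∧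
    (∀ s : ℝ, 0 ≤ s → s ≤ 1 → s ≤ (τ 1).eval s) := by
  let y : ℕ → Polynomial ℝ := fun k => dbY (m + 2) k
  let τ : ℕ → Polynomial ℝ := fun k => ∑ j ∈ Ico k (m + 2), (y j + y (j + 1))
  have hτ : ∀ k ≤ m + 1, τ k = τ (k + 1) + (y k + y (k + 1)) := fun k hk => by
    simp only [τ]; rw [sum_eq_sum_Ico_succ_bot (by omega), add_comm]
  have hτ0 : τ (m + 2) = 0 := by simp [τ]
  have hy0 : y (m + 2) = 0 := dbY_eq_zero _ _ le_rfl
  have hder : ∀ k ≤ m + 2, X * derivative (τ k) = (k : Polynomial ℝ) * y k := by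
    intro k hk
    induction hk using Nat.decreasingInduction with
    | self => simp [hτ0, hy0]
    | of_succ k hk ih =>
      have := dbY_deriv (m + 2) k
      rw [hτ k (by omega), derivative_add, mul_add, ih]
      simp only [y] at *
      push_cast at *
      rw [this]; ring
  have hone : ∀ k ≤ m + 2, (τ k).eval 1 = m + 2 - k := by
    intro k hk
    induction hk using Nat.decreasingInduction with
    | self => simp [hτ0]
    | of_succ k hk ih =>
      have := dbY_one (m + 2) k
      rw [if_pos (by omega)] at this
      rw [hτ k (by omega), eval_add, ih, eval_add]
      simp only [y]
      push_cast at *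
      rw [this]; ring
  have hypos : ∀ k, ∀ s : ℝ, 0 ≤ s → s ≤ 1 → 0 ≤ (y k).eval s :=
    fun k s h0 h1 => dbY_nonneg (m + 1) k h0 h1
  have hy1 : ∀ s : ℝ, 0 ≤ s → s ≤ 1 → (m + 1) * s * (1 - s) ^ m ≤ (y 1).eval s :=
    fun s h0 h1 => dbY_one_ge m h0 h1
  have hτpos : ∀ k, ∀ s : ℝ, 0 ≤ s → s ≤ 1 → 0 ≤ (τ k).eval s := fun k s h0 h1 => by
    simp only [τ, eval_finsetSum, eval_add]
    exact sum_nonneg fun j _ => add_nonneg (hypos _ _ h0 h1) (hypos _ _ h0 h1)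
  refine ⟨y, τ, hτ, hτ0, hy0, hder, hone, hypos, hy1, hτpos, ?_⟩
  intro s h0 h1
  -- `τ₁ + (1 - s)^(m+1)` is monotone
  let q : Polynomial ℝ := τ 1 + (1 - X) ^ (m + 1)
  have hmono : MonotoneOn (fun s => q.eval s) (Set.Icc 0 1) := by
    apply monotoneOn_of_deriv_nonneg (convex_Icc 0 1) q.continuous.continuousOn
      q.differentiable.differentiableOn
    intro x hx
    rw [interior_Icc] at hx
    rw [Polynomial.deriv]
    have e := congrArg (fun p => p.eval x) (hder 1 (by omega))
    simp only [eval_mul, eval_X, Nat.cast_one, one_mul] at e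
    have e2 := hy1 x hx.1.le hx.2.le
    have e3 : (m + 1) * (1 - x) ^ m ≤ (derivative (τ 1)).eval x := by
      refine le_of_mul_le_mul_left ?_ hx.1
      rw [e]; linarith
    simp only [q, derivative_add, derivative_pow, derivative_sub, derivative_X, derivative_one]
    simp
    linarith
  have hb := hmono ⟨le_rfl, zero_le_one⟩ ⟨h0, h1⟩ h0
  have h00 := hτpos 1 0 le_rfl zero_le_one
  have hp : (1 - s) ^ (m + 1) ≤ 1 - s := by
    have := pow_le_pow_of_le_one (by linarith : 0 ≤ 1 - s) (by linarith) (by omega : 1 ≤ m + 1)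
    simpa using this
  simp [q] at hb
  linarith
end weights
end

/-! ### Taylor expansions to finite order -/

noncomputable section
section coef
open Polynomial Asymptotics Topology Filter

/-- `F z = P(z) + O(z^N)` near `0`: the power series `P` gives the Taylor coefficients of `F` of
order below `N`. Coefficients of `P` of order at least `N` are irrelevant. -/
def HasCoef (N : ℕ) (F : ℂ → ℂ) (P : PowerSeries ℂ) : Prop :=
  (fun z => F z - (P.trunc N).eval z) =O[𝓝 0] (fun z => z ^ N)

lemma eval_trunc (N : ℕ) (P : PowerSeries ℂ) (z : ℂ) :
    (P.trunc N).eval z = ∑ i ∈ Finset.range N, PowerSeries.coeff i P * z ^ i :=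
  PowerSeries.eval₂_trunc_eq_sum_range z (RingHom.id ℂ) N P

lemma isBigO_eval_of_coeff {N : ℕ} {p : Polynomial ℂ} (h : ∀ k < N, p.coeff k = 0) :
    (fun z => p.eval z) =O[𝓝 0] (fun z : ℂ => z ^ N) := by
  obtain ⟨q, rfl⟩ := X_pow_dvd_iff.2 h
  have hq : (fun z => q.eval z) =O[𝓝 0] (fun _ : ℂ => (1 : ℂ)) :=
    q.continuous.continuousAt.isBigO_one ℂ
  simpa using (isBigO_refl (fun z : ℂ => z ^ N) (𝓝 0)).mul hq

lemma HasCoef.of_poly_sub {N : ℕ} {F : ℂ → ℂ} {P : PowerSeries ℂ} (p : Polynomial ℂ)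
    (h : (fun z => F z - p.eval z) =O[𝓝 0] (fun z => z ^ N))
    (hp : ∀ k < N, p.coeff k = PowerSeries.coeff k P) : HasCoef N F P := by
  have h2 := isBigO_eval_of_coeff (N := N) (p := p - P.trunc N) (fun k hk => by
    rw [coeff_sub, PowerSeries.coeff_trunc, if_pos hk, hp k hk, sub_self])
  refine (h.add h2).congr_left fun z => ?_
  simp

lemma HasCoef.congr {N : ℕ} {F G : ℂ → ℂ} {P : PowerSeries ℂ} (h : HasCoef N F P)
    (hFG : F =ᶠ[𝓝 0] G) : HasCoef N G P := by
  refine IsBigO.congr' h ?_ EventuallyEq.rfl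
  filter_upwards [hFG] with z hz
  rw [hz]

lemma HasCoef.of_coeff {N : ℕ} {F : ℂ → ℂ} {P Q : PowerSeries ℂ} (h : HasCoef N F P)
    (hPQ : ∀ k < N, PowerSeries.coeff k P = PowerSeries.coeff k Q) : HasCoef N F Q :=
  HasCoef.of_poly_sub _ h fun k hk => by rw [PowerSeries.coeff_trunc, if_pos hk, hPQ k hk]

lemma HasCoef.of_poly (N : ℕ) (p : Polynomial ℂ) : HasCoef N (fun z => p.eval z) (p : PowerSeries ℂ) :=
  HasCoef.of_poly_sub p (by simpa using isBigO_zero _ _) (by simp)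

lemma HasCoef.const (N : ℕ) (w : ℂ) : HasCoef N (fun _ => w) (PowerSeries.C w) := by
  simpa using HasCoef.of_poly N (C w)

lemma HasCoef.id (N : ℕ) : HasCoef N (fun z => z) PowerSeries.X := by
  simpa using HasCoef.of_poly N X

lemma HasCoef.add {N : ℕ} {F G : ℂ → ℂ} {P Q : PowerSeries ℂ} (hF : HasCoef N F P)
    (hG : HasCoef N G Q) : HasCoef N (fun z => F z + G z) (P + Q) := by
  refine (IsBigO.add hF hG).congr_left fun z => ?_
  simp only [map_add, eval_add]; ring

lemma HasCoef.sub {N : ℕ} {F G : ℂ → ℂ} {P Q : PowerSeries ℂ} (hF : HasCoef N F P)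
    (hG : HasCoef N G Q) : HasCoef N (fun z => F z - G z) (P - Q) := by
  refine (IsBigO.sub hF hG).congr_left fun z => ?_
  simp only [map_sub, eval_sub]; ring

lemma HasCoef.isBigO_one {N : ℕ} {F : ℂ → ℂ} {P : PowerSeries ℂ} (hF : HasCoef N F P) :
    F =O[𝓝 0] (fun _ : ℂ => (1 : ℂ)) := by
  have h1 : (fun z : ℂ => z ^ N) =O[𝓝 0] (fun _ : ℂ => (1 : ℂ)) :=
    (by fun_prop : Continuous (fun z : ℂ => z ^ N)).continuousAt.isBigO_one ℂ
  have h2 : (fun z => (P.trunc N).eval z) =O[𝓝 0] (fun _ : ℂ => (1 : ℂ)) :=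
    (P.trunc N).continuous.continuousAt.isBigO_one ℂ
  simpa using (IsBigO.trans hF h1).add h2

lemma HasCoef.mul {N : ℕ} {F G : ℂ → ℂ} {P Q : PowerSeries ℂ} (hF : HasCoef N F P)
    (hG : HasCoef N G Q) : HasCoef N (fun z => F z * G z) (P * Q) := by
  refine HasCoef.of_poly_sub (P.trunc N * Q.trunc N) ?_ fun k hk => ?_
  · have h2 : (fun z => (P.trunc N).eval z) =O[𝓝 0] (fun _ : ℂ => (1 : ℂ)) :=
      (P.trunc N).continuous.continuousAt.isBigO_one ℂ
    have e1 := IsBigO.mul hF hG.isBigO_one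
    have e2 := h2.mul hG
    simp only [mul_one, one_mul] at e1 e2
    refine (e1.add e2).congr_left fun z => ?_
    simp only [eval_mul]; ring
  · rw [PowerSeries.coeff_mul_eq_coeff_trunc_mul_trunc P Q hk]
    exact (Polynomial.coeff_coe _ _).symm.trans (by simp)

lemma HasCoef.pow {N : ℕ} {F : ℂ → ℂ} {P : PowerSeries ℂ} (hF : HasCoef N F P) (j : ℕ) :
    HasCoef N (fun z => F z ^ j) (P ^ j) := by
  induction j with
  | zero => simpa using HasCoef.const N 1
  | succ j ih => simpa only [pow_succ] using ih.mul hF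

lemma HasCoef.sum {N : ℕ} {ι : Type*} (s : Finset ι) {F : ι → ℂ → ℂ} {P : ι → PowerSeries ℂ}
    (h : ∀ i ∈ s, HasCoef N (F i) (P i)) : HasCoef N (fun z => ∑ i ∈ s, F i z) (∑ i ∈ s, P i) := by
  classical
  induction s using Finset.induction_on with
  | empty => simpa using HasCoef.const N 0
  | insert i s hi ih =>
    simp only [Finset.sum_insert hi]
    exact (h i (by simp)).add (ih fun j hj => h j (by simp [hj]))

lemma HasCoef.unique {N : ℕ} {F : ℂ → ℂ} {P Q : PowerSeries ℂ} (hP : HasCoef N F P)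
    (hQ : HasCoef N F Q) : ∀ k < N, PowerSeries.coeff k P = PowerSeries.coeff k Q := by
  have key : ∀ (N : ℕ) (p : Polynomial ℂ), (fun z => p.eval z) =O[𝓝 0] (fun z : ℂ => z ^ N) →
      ∀ k < N, p.coeff k = 0 := by
    intro N
    induction N with
    | zero => intro p _ k hk; omega
    | succ N ih =>
      intro p hp
      have h0 : p.eval 0 = 0 := by
        have ht : Tendsto (fun z : ℂ => z ^ (N + 1)) (𝓝 0) (𝓝 0) := by
          have : Continuous (fun z : ℂ => z ^ (N + 1)) := by fun_prop
          simpa using this.tendsto 0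
        exact tendsto_nhds_unique (p.continuous.tendsto 0) (hp.trans_tendsto ht)
      obtain ⟨q, rfl⟩ := dvd_iff_isRoot.2 h0
      have hq : (fun z => q.eval z) =O[𝓝 0] (fun z : ℂ => z ^ N) := by
        obtain ⟨c, hc⟩ := hp.bound
        have h1 : ∀ᶠ z in 𝓝[≠] (0 : ℂ), ‖q.eval z‖ ≤ c * ‖z ^ N‖ := by
          filter_upwards [hc.filter_mono nhdsWithin_le_nhds, self_mem_nhdsWithin] with z hz hz0
          have : 0 < ‖z‖ := norm_pos_iff.2 hz0
          simp only [eval_mul, eval_sub, eval_X, eval_C, sub_zero, norm_mul, pow_succ] at hz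
          refine le_of_mul_le_mul_left ?_ this
          linarith
        refine IsBigO.of_bound c ?_
        rw [Filter.Eventually, ← insert_mem_nhds_iff] at h1
        have hcl : ‖q.eval 0‖ ≤ c * ‖(0 : ℂ) ^ N‖ := by
          have hf : ContinuousAt (fun z => c * ‖z ^ N‖ - ‖q.eval z‖) (0 : ℂ) := by
            have := q.continuous
            fun_prop
          have := ge_of_tendsto (b := (0 : ℝ)) (hf.tendsto.mono_left nhdsWithin_le_nhds)
            (f := fun z => c * ‖z ^ N‖ - ‖q.eval z‖) (x := 𝓝[≠] (0:ℂ)) ?_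
          · linarith
          · rw [insert_mem_nhds_iff] at h1
            filter_upwards [h1] with z hz
            have : ‖q.eval z‖ ≤ c * ‖z ^ N‖ := hz
            linarith
        filter_upwards [h1] with z hz
        rcases hz with rfl | hz
        · exact hcl
        · exact hz
      rintro (_ | k) hk
      · simp [mul_coeff_zero]
      · simp only [C_0, sub_zero]; rw [coeff_X_mul]; exact ih q hq k (by omega)
  intro k hk
  have := key N (Q.trunc N - P.trunc N) ((IsBigO.sub hP hQ).congr_left fun z => by simp) k hk
  rw [coeff_sub, PowerSeries.coeff_trunc, PowerSeries.coeff_trunc, if_pos hk, if_pos hk] at this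
  exact (sub_eq_zero.1 this).symm

lemma HasCoef.comp {N : ℕ} {A w : ℂ → ℂ} {P W : PowerSeries ℂ} (hA : HasCoef N A P)
    (hw : HasCoef N w W) (hw1 : w =O[𝓝 0] (fun z => z)) :
    HasCoef N (fun z => A (w z))
      (∑ j ∈ Finset.range N, PowerSeries.C (PowerSeries.coeff j P) * W ^ j) := by
  have h1 : HasCoef N (fun z => ∑ j ∈ Finset.range N, PowerSeries.coeff j P * w z ^ j)
      (∑ j ∈ Finset.range N, PowerSeries.C (PowerSeries.coeff j P) * W ^ j) :=
    HasCoef.sum _ fun j _ => (HasCoef.const N _).mul (hw.pow j)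
  have ht : Tendsto w (𝓝 0) (𝓝 0) := hw1.trans_tendsto tendsto_id
  have h2 : (fun z => A (w z) - (P.trunc N).eval (w z)) =O[𝓝 0] (fun z => z ^ N) :=
    (IsBigO.comp_tendsto hA ht).trans (hw1.pow N)
  refine (IsBigO.add h2 h1).congr_left fun z => ?_
  rw [eval_trunc]
  ring

lemma HasCoef.geom (N : ℕ) (a : ℂ) : HasCoef N (fun z => (1 - a * z)⁻¹) (PowerSeries.mk (a ^ ·)) := by
  have hb : (fun z => (1 - a * z)⁻¹) =O[𝓝 0] (fun _ : ℂ => (1 : ℂ)) := by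
    have h0 : (1 - a * 0) ≠ 0 := by simp
    have : ContinuousAt (fun z => (1 - a * z)⁻¹) 0 := by fun_prop (disch := assumption)
    exact this.isBigO_one ℂ
  have h2 := ((isBigO_refl (fun z : ℂ => z ^ N) (𝓝 0)).const_mul_left (a ^ N)).mul hb
  simp only [mul_one] at h2
  refine IsBigO.congr' h2 ?_ EventuallyEq.rfl
  have : ∀ᶠ z in 𝓝 (0 : ℂ), 1 - a * z ≠ 0 := by
    apply ContinuousAt.eventually_ne
    · fun_prop
    · simp
  filter_upwards [this] with z hz
  rw [eval_trunc]
  simp only [PowerSeries.coeff_mk]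
  have hg := mul_neg_geom_sum (a * z) N
  have : ∑ i ∈ Finset.range N, a ^ i * z ^ i = (1 - (a * z) ^ N) * (1 - a * z)⁻¹ := by
    rw [← hg]; field_simp; simp [mul_pow]
  rw [this, mul_pow]; ring

lemma HasCoef.log (N : ℕ) (a : ℂ) : HasCoef N (fun z => Complex.log (1 - a * z))
    (PowerSeries.mk fun k => -(a ^ k / k)) := by
  have hb : (fun z => Complex.log (1 - a * z) - logTaylor N (-(a * z))) =O[𝓝 0] (fun z => z ^ N) := by
    cases N with
    | zero =>
      simp only [pow_zero, logTaylor_zero, sub_zero]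
      have h0 : (1 - a * 0) ∈ slitPlane := by simp
      have : ContinuousAt (fun z => Complex.log (1 - a * z)) 0 := by fun_prop (disch := assumption)
      exact this.isBigO_one ℂ
    | succ n =>
      refine IsBigO.of_bound (‖a‖ ^ (n + 1) * 2) ?_
      have : ∀ᶠ z in 𝓝 (0 : ℂ), ‖-(a * z)‖ < 1 / 2 := by
        refine (Continuous.tendsto (by fun_prop) 0).eventually_lt_const ?_
        simp
      filter_upwards [this] with z hz
      have := Complex.norm_log_sub_logTaylor_le n (z := -(a * z)) (by linarith)
      rw [← sub_eq_add_neg] at this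
      refine this.trans ?_
      have h1 : (1 - ‖-(a * z)‖)⁻¹ ≤ 2 := by
        rw [inv_le_comm₀ (by linarith) (by norm_num)]; linarith
      rw [norm_neg, norm_mul, mul_pow, norm_pow] at *
      have h3 : (1 : ℝ) ≤ (n : ℝ) + 1 := by linarith [n.cast_nonneg (α := ℝ)]
      calc ‖a‖ ^ (n + 1) * ‖z‖ ^ (n + 1) * (1 - ‖a‖ * ‖z‖)⁻¹ / (n + 1)
          ≤ ‖a‖ ^ (n + 1) * ‖z‖ ^ (n + 1) * (1 - ‖a‖ * ‖z‖)⁻¹ := div_le_self (by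
            have : 0 ≤ (1 - ‖a‖ * ‖z‖)⁻¹ := inv_nonneg.2 (by linarith)
            positivity) h3
        _ ≤ ‖a‖ ^ (n + 1) * ‖z‖ ^ (n + 1) * 2 := by gcongr
        _ = _ := by ring
  refine hb.congr_left fun z => ?_
  rw [eval_trunc, logTaylor]
  congr 1
  refine Finset.sum_congr rfl fun k _ => ?_
  simp only [PowerSeries.coeff_mk]
  rw [neg_eq_neg_one_mul (a * z), mul_pow, mul_pow, pow_succ]
  have : ((-1 : ℂ) ^ k) * (-1) ^ k = 1 := by rw [← mul_pow]; simp
  linear_combination (-(a ^ k * z ^ k / k)) * this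

lemma HasCoef.of_analytic (N : ℕ) {F : ℂ → ℂ} (h : AnalyticAt ℂ F 0) :
    HasCoef N F (PowerSeries.mk fun k => iteratedDeriv k F 0 / k.factorial) := by
  have h1 := h.hasFPowerSeriesAt.isBigO_sub_partialSum_pow N
  have h2 : (fun z : ℂ => ‖z‖ ^ N) =O[𝓝 0] (fun z => z ^ N) :=
    IsBigO.of_bound 1 (by simp)
  refine (h1.trans h2).congr_left fun z => ?_
  rw [eval_trunc, FormalMultilinearSeries.partialSum]
  simp [FormalMultilinearSeries.ofScalars, mul_comm]

end coef
end

/-! ### One Koebe step and its action on logarithmic coefficients -/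

noncomputable section
section step
open Polynomial Asymptotics Topology Filter

/-- The power series `(a - ζ) / (1 - a ζ)` in `ζ`, with `a` the polynomial variable. -/
def phiP : PowerSeries ℝ[X] :=
  (PowerSeries.C X - PowerSeries.X) * PowerSeries.mk fun n => (X : ℝ[X]) ^ n

/-- The coefficient of `ζ ^ m` in `((a - ζ) / (1 - a ζ)) ^ j`, a polynomial in `a`. -/
def stepU (j m : ℕ) : ℝ[X] := PowerSeries.coeff m (phiP ^ j)

/-- The degree-two Blaschke product `z (a - x z) / (1 - a x z)`, for `0 < a < 1` and `|x| = 1`. It has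
derivative `a` at `0` and is the inverse of Koebe's square-root transform. -/
def omegaF (a : ℝ) (x z : ℂ) : ℂ := z * (a - x * z) / (1 - a * x * z)

/-- The power series whose first `K + 1` coefficients are `c`. The remaining coefficients, which
repeat `c` periodically because `Fin.ofNat` reduces modulo `K + 1`, are never used. -/
def toPS (K : ℕ) (c : Fin (K + 1) → ℂ) : PowerSeries ℂ :=
  PowerSeries.mk fun k => c (Fin.ofNat (K + 1) k)

/-- The effect of precomposition with `omegaF a x` on logarithmic coefficients: if
`Ω z = w z exp (A z)` with `c` the coefficients of `A`, then these are the coefficients of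
`A ∘ ω + log (ω z / (a z))`, the logarithm for `Ω ∘ ω`. At `k = 0` the last term vanishes through
division by zero. -/
def stepV (K : ℕ) (a : ℝ) (x : ℂ) (c : Fin (K + 1) → ℂ) : Fin (K + 1) → ℂ := fun k =>
  ∑ j ∈ Finset.range (k + 1), c (Fin.ofNat (K + 1) j) * (x ^ ((k : ℕ) - j) *
    (((stepU j (k - j)).eval a : ℝ) : ℂ)) + x ^ (k : ℕ) * (((a ^ (k : ℕ) - a⁻¹ ^ (k : ℕ)) / (k : ℕ) : ℝ) : ℂ)

/-- The derivative of `stepV K a x c` with respect to `a` at `a = 1`: the vector field which drives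
the logarithmic coefficients in Loewner's equation. -/
def ellV (K : ℕ) (x : ℂ) (c : Fin (K + 1) → ℂ) : Fin (K + 1) → ℂ := fun k =>
  ∑ j ∈ Finset.range (k + 1), c (Fin.ofNat (K + 1) j) * (x ^ ((k : ℕ) - j) *
    ((j * (if (k : ℕ) - j = 0 then 1 else 2) : ℝ) : ℂ)) +
      x ^ (k : ℕ) * ((if (k : ℕ) = 0 then 0 else 2 : ℝ) : ℂ)

/-- `Ω z = w z exp (A z)` near `0`, with `c` the Taylor coefficients of `A` up to order `K`. -/
def LogRel (K : ℕ) (Ω : ℂ → ℂ) (w : ℂ) (c : Fin (K + 1) → ℂ) : Prop :=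
  ∃ A : ℂ → ℂ, HasCoef (K + 1) A (toPS K c) ∧ ∀ᶠ z in 𝓝 0, Ω z = w * z * Complex.exp (A z)

lemma logRel_id (K : ℕ) : LogRel K (fun z => z) 1 0 := by
  refine ⟨fun _ => 0, (HasCoef.const (K + 1) 0).of_coeff fun k _ => ?_, ?_⟩
  · simp [toPS]
  · simp

lemma hasCoef_omega (N : ℕ) (a : ℝ) (x : ℂ) : HasCoef N (omegaF a x)
    (PowerSeries.X * PowerSeries.rescale x (PowerSeries.map
      ((algebraMap ℝ ℂ).comp (Polynomial.evalRingHom a)) phiP)) := by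
  have h := ((HasCoef.id N).mul ((HasCoef.const N a).sub ((HasCoef.const N x).mul (HasCoef.id N)))).mul
    (HasCoef.geom N (a * x))
  have e : (fun z : ℂ => z * ((a : ℂ) - x * z) * (1 - a * x * z)⁻¹) = omegaF a x := by
    funext z; rw [omegaF]; rw [div_eq_mul_inv]
  rw [e] at h
  convert h using 1
  simp only [phiP, map_mul, map_sub, mul_assoc]
  congr 2
  · congr 1
    · rw [PowerSeries.map_C]
      ext n; simp [PowerSeries.coeff_rescale, PowerSeries.coeff_C]
      split_ifs with h <;> simp [h]
    · rw [PowerSeries.map_X]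
      ext n; simp only [PowerSeries.coeff_rescale, PowerSeries.coeff_X, PowerSeries.coeff_C_mul]
      split_ifs with h <;> simp [h]
  · ext n; simp [PowerSeries.coeff_rescale, PowerSeries.coeff_map, mul_pow, mul_comm]

lemma omegaF_isBigO (a : ℝ) (x : ℂ) : omegaF a x =O[𝓝 0] (fun z => z) := by
  have h0 : (1 - a * x * 0) ≠ 0 := by simp
  have : ContinuousAt (fun z => (a - x * z) / (1 - a * x * z)) 0 := by fun_prop (disch := assumption)
  have := (isBigO_refl (fun z : ℂ => z) (𝓝 0)).mul (this.isBigO_one ℂ)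
  simp only [mul_one] at this
  refine this.congr_left fun z => ?_
  rw [omegaF]; ring

lemma LogRel.step {K : ℕ} {Ω : ℂ → ℂ} {w : ℂ} {c : Fin (K + 1) → ℂ} (h : LogRel K Ω w c) {a : ℝ}
    (ha : 0 < a) (x : ℂ) : LogRel K (fun z => Ω (omegaF a x z)) (w * a) (stepV K a x c) := by
  obtain ⟨A, hA, hΩ⟩ := h
  have ha' : (a : ℂ) ≠ 0 := by exact_mod_cast ha.ne'
  refine ⟨fun z => A (omegaF a x z) +
    (Complex.log (1 - x / a * z) - Complex.log (1 - a * x * z)), ?_, ?_⟩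
  · refine ((hA.comp (hasCoef_omega _ a x) (omegaF_isBigO a x)).add
      ((HasCoef.log _ _).sub (HasCoef.log _ _))).of_coeff fun k hk => ?_
    have hkk : ((Fin.ofNat (K + 1) k : Fin (K + 1)) : ℕ) = k := Nat.mod_eq_of_lt hk
    simp only [map_add, map_sub, map_sum, toPS, stepV, hkk, PowerSeries.coeff_mk,
      PowerSeries.coeff_C_mul]
    congr 1
    · symm
      rw [← Finset.sum_subset (Finset.range_mono hk : Finset.range (k + 1) ⊆ Finset.range (K + 1))]
      · refine Finset.sum_congr rfl fun j hj => ?_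
        have hj' : j ≤ k := Nat.lt_succ_iff.1 (Finset.mem_range.1 hj)
        rw [mul_pow, ← map_pow, ← map_pow, PowerSeries.coeff_X_pow_mul', if_pos hj',
          PowerSeries.coeff_rescale, PowerSeries.coeff_map]
        rfl
      · intro j _ hj
        rw [mul_pow, PowerSeries.coeff_X_pow_mul', if_neg, mul_zero]
        simpa using hj
    · push_cast
      simp only [div_eq_mul_inv, mul_pow]
      ring
  · have ht : Tendsto (omegaF a x) (𝓝 0) (𝓝 0) := (omegaF_isBigO a x).trans_tendsto tendsto_id
    have h1 : ∀ᶠ z in 𝓝 (0 : ℂ), 1 - x / a * z ≠ 0 :=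
      ContinuousAt.eventually_ne (by fun_prop) (by simp)
    have h2 : ∀ᶠ z in 𝓝 (0 : ℂ), 1 - a * x * z ≠ 0 :=
      ContinuousAt.eventually_ne (by fun_prop) (by simp)
    filter_upwards [ht.eventually hΩ, h1, h2] with z e0 e1 e2
    rw [e0, Complex.exp_add, Complex.exp_sub, Complex.exp_log e1, Complex.exp_log e2]
    rw [show omegaF a x z = a * z * ((1 - x / a * z) / (1 - a * x * z)) by
      rw [omegaF]; field_simp]
    ring

lemma stepU_one (j m : ℕ) : (stepU j m).eval 1 = if m = 0 then 1 else 0 := by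
  have h : PowerSeries.map (Polynomial.evalRingHom (1 : ℝ)) phiP = 1 := by
    rw [phiP, map_mul, map_sub, PowerSeries.map_C, PowerSeries.map_X, mul_comm]
    have := PowerSeries.mk_one_mul_one_sub_eq_one ℝ
    convert this using 2
    · ext n; simp [PowerSeries.coeff_map]
    · simp
  have := PowerSeries.coeff_map (Polynomial.evalRingHom (1 : ℝ)) m (phiP ^ j)
  rw [map_pow, h, one_pow, PowerSeries.coeff_one] at this
  simpa [stepU] using this.symm

lemma stepU_one_left (m : ℕ) : stepU 1 m = X ^ (m + 1) - if m = 0 then 0 else X ^ (m - 1) := by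
  rw [stepU, pow_one, phiP, sub_mul, map_sub, PowerSeries.coeff_C_mul, PowerSeries.coeff_mk, pow_succ,
    mul_comm]
  cases m with
  | zero => simp
  | succ m => rw [PowerSeries.coeff_succ_X_mul, PowerSeries.coeff_mk]; simp

lemma stepU_deriv_one (j m : ℕ) :
    (derivative (stepU j m)).eval 1 = j * if m = 0 then 1 else 2 := by
  have h1 : ∀ m, (derivative (stepU 1 m)).eval 1 = if m = 0 then 1 else 2 := by
    rintro (_ | m)
    · simp [stepU_one_left]
    · simp only [stepU_one_left, derivative_sub, derivative_X_pow, eval_sub, eval_mul, eval_pow,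
        eval_X, Nat.succ_ne_zero, if_false, Nat.add_sub_cancel]
      simp
      ring
  induction j generalizing m with
  | zero =>
    rw [stepU, pow_zero, PowerSeries.coeff_one]
    split_ifs <;> simp
  | succ j ih =>
    have e : stepU (j + 1) m = ∑ p ∈ Finset.HasAntidiagonal.antidiagonal m, stepU j p.1 * stepU 1 p.2 := by
      rw [stepU, pow_succ, PowerSeries.coeff_mul]; simp [stepU]
    rw [e, derivative_sum, eval_finsetSum]
    simp only [derivative_mul, eval_add, eval_mul, stepU_one]
    rw [Finset.sum_add_distrib]
    have s1 : ∑ p ∈ Finset.HasAntidiagonal.antidiagonal m, (derivative (stepU j p.1)).eval 1 *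
        (if p.2 = 0 then (1 : ℝ) else 0) = (derivative (stepU j m)).eval 1 := by
      rw [Finset.sum_eq_single (m, 0)]
      · simp
      · rintro ⟨p, q⟩ hp hne
        rw [if_neg, mul_zero]
        rintro rfl
        simp at hp; simp [hp] at hne
      · simp
    have s2 : ∑ p ∈ Finset.HasAntidiagonal.antidiagonal m, (if p.1 = 0 then (1 : ℝ) else 0) *
        (derivative (stepU 1 p.2)).eval 1 = (derivative (stepU 1 m)).eval 1 := by
      rw [Finset.sum_eq_single (0, m)]
      · simp
      · rintro ⟨p, q⟩ hp hne
        rw [if_neg, zero_mul]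
        rintro rfl
        simp at hp; simp [hp] at hne
      · simp
    rw [s1, s2, h1, ih]
    push_cast; ring

lemma stepV_one (K : ℕ) (x : ℂ) (c : Fin (K + 1) → ℂ) : stepV K 1 x c = c := by
  funext k
  rw [stepV]
  simp only [stepU_one, inv_one, one_pow, sub_self, zero_div, ofReal_zero, mul_zero, add_zero]
  rw [Finset.sum_range_succ, Finset.sum_eq_zero]
  · simp
  · intro j hj
    rw [if_neg (by have := Finset.mem_range.1 hj; omega)]; simp

lemma hasDerivAt_stepV (K : ℕ) (x : ℂ) (c : Fin (K + 1) → ℂ) :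
    HasDerivAt (fun a : ℝ => stepV K a x c) (ellV K x c) 1 := by
  rw [hasDerivAt_pi]
  intro k
  unfold stepV ellV
  refine HasDerivAt.add (HasDerivAt.fun_sum fun j _ => ?_) ?_
  · refine HasDerivAt.const_mul _ (HasDerivAt.const_mul _ (HasDerivAt.ofReal_comp ?_))
    rw [← stepU_deriv_one]
    exact Polynomial.hasDerivAt _ _
  · refine HasDerivAt.const_mul _ (HasDerivAt.ofReal_comp ?_)
    have h1 := (hasDerivAt_id (1 : ℝ)).pow (k : ℕ)
    have h2 := (hasDerivAt_inv (one_ne_zero (α := ℝ))).pow (k : ℕ)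
    have h3 := (h1.sub h2).div_const ((k : ℕ) : ℝ)
    have e : (if (k : ℕ) = 0 then (0 : ℝ) else 2) =
        (((k : ℕ) : ℝ) * id 1 ^ ((k : ℕ) - 1) * 1 - ((k : ℕ) : ℝ) * 1⁻¹ ^ ((k : ℕ) - 1) *
          -(1 ^ 2)⁻¹) / ((k : ℕ) : ℝ) := by
      split_ifs with h
      · simp [h]
      · have : ((k : ℕ) : ℝ) ≠ 0 := by exact_mod_cast h
        simp
        field_simp
        norm_num
    rw [e]
    exact h3
end step
end

/-! ### Monotone functionals along chains of Koebe steps -/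

noncomputable section
section chainBound
open Topology Filter

/-- The logarithmic coefficients of the composition of the maps `omegaF a x`, for `x` in the list;
the head of the list is the innermost map. -/
def chainV (K : ℕ) (a : ℝ) : List ℂ → (Fin (K + 1) → ℂ)
  | [] => 0
  | x :: l => stepV K a x (chainV K a l)

lemma stepV_norm_le (K : ℕ) : ∃ B : ℝ, 0 ≤ B ∧ ∀ a : ℝ, 1 / 2 ≤ a → a ≤ 1 → ∀ x : ℂ, ‖x‖ = 1 →
    ∀ c, ‖stepV K a x c‖ ≤ ‖c‖ + B * (1 - a) * (1 + ‖c‖) := by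
  have gen : ∀ h : ℝ → ℝ, ContDiffOn ℝ 1 h (Set.Icc (1 / 2) 1) → ∃ B : ℝ, 0 ≤ B ∧
      ∀ a : ℝ, 1 / 2 ≤ a → a ≤ 1 → |h a - h 1| ≤ B * (1 - a) := by
    intro h hh
    obtain ⟨L, hL⟩ := hh.exists_lipschitzOnWith one_ne_zero (convex_Icc _ _) isCompact_Icc
    refine ⟨L, L.2, fun a h1 h2 => ?_⟩
    have := hL.dist_le_mul a ⟨h1, h2⟩ 1 ⟨by norm_num, le_rfl⟩
    rwa [Real.dist_eq, Real.dist_eq, abs_sub_comm a 1, abs_of_nonneg (by linarith : 0 ≤ 1 - a)] at this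
  have g1 : ∀ j m : ℕ, ∃ B : ℝ, 0 ≤ B ∧ ∀ a : ℝ, 1 / 2 ≤ a → a ≤ 1 →
      |(stepU j m).eval a - (stepU j m).eval 1| ≤ B * (1 - a) := fun j m =>
    gen _ (by simpa using Polynomial.contDiff_aeval (R := ℝ) (𝕜 := ℝ) (stepU j _) 1 : ContDiff ℝ 1 fun a : ℝ => (stepU j _).eval a).contDiffOn
  have g2 : ∀ k : ℕ, ∃ B : ℝ, 0 ≤ B ∧ ∀ a : ℝ, 1 / 2 ≤ a → a ≤ 1 →
      |(a ^ k - a⁻¹ ^ k) / k - (1 ^ k - 1⁻¹ ^ k) / k| ≤ B * (1 - a) := fun k => by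
    refine gen (fun a => (a ^ k - a⁻¹ ^ k) / k) ?_
    have : ∀ a ∈ Set.Icc (1 / 2 : ℝ) 1, a ≠ 0 := fun a ha => by have := ha.1; positivity
    refine ContDiffOn.div_const (ContDiffOn.sub (contDiff_id.pow k).contDiffOn ?_) _
    exact (contDiffOn_id.inv this).pow k
  choose B1 hB1 hB1' using g1
  choose B2 hB2 hB2' using g2
  refine ⟨∑ k ∈ Finset.range (K + 1), (∑ j ∈ Finset.range (k + 1), B1 j (k - j) + B2 k),
    Finset.sum_nonneg fun k _ => add_nonneg (Finset.sum_nonneg fun j _ => hB1 _ _) (hB2 _), ?_⟩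
  intro a h1 h2 x hx c
  have hx' : ∀ n : ℕ, ‖x ^ n‖ = 1 := fun n => by rw [norm_pow, hx, one_pow]
  have hd : ‖stepV K a x c - c‖ ≤ (∑ k ∈ Finset.range (K + 1),
      (∑ j ∈ Finset.range (k + 1), B1 j (k - j) + B2 k)) * (1 - a) * (1 + ‖c‖) := by
    have ha : 0 ≤ 1 - a := by linarith
    have hS : ∀ k ∈ Finset.range (K + 1), 0 ≤ (∑ j ∈ Finset.range (k + 1), B1 j (k - j) + B2 k) :=
      fun k _ => add_nonneg (Finset.sum_nonneg fun j _ => hB1 _ _) (hB2 _)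
    rw [pi_norm_le_iff_of_nonneg (mul_nonneg (mul_nonneg (Finset.sum_nonneg hS) ha) (by positivity))]
    intro k
    have hle : ∑ j ∈ Finset.range ((k : ℕ) + 1), B1 j (k - j) + B2 k ≤ ∑ k ∈ Finset.range (K + 1),
      (∑ j ∈ Finset.range (k + 1), B1 j (k - j) + B2 k) :=
      Finset.single_le_sum (f := fun k => ∑ j ∈ Finset.range (k + 1), B1 j (k - j) + B2 k) hS
        (Finset.mem_range.2 k.2)
    refine le_trans ?_ (by gcongr : (∑ j ∈ Finset.range ((k : ℕ) + 1), B1 j (k - j) + B2 k) * (1 - a) *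
      (1 + ‖c‖) ≤ _)
    have e : (stepV K a x c - c) k = ∑ j ∈ Finset.range (k + 1), c (Fin.ofNat (K + 1) j) *
        (x ^ ((k : ℕ) - j) * (((stepU j (k - j)).eval a - (stepU j (k - j)).eval 1 : ℝ) : ℂ)) +
        x ^ (k : ℕ) * (((a ^ (k : ℕ) - a⁻¹ ^ (k : ℕ)) / (k : ℕ) -
          (1 ^ (k : ℕ) - 1⁻¹ ^ (k : ℕ)) / (k : ℕ) : ℝ) : ℂ) := by
      rw [Pi.sub_apply]
      nth_rewrite 2 [← stepV_one K x c]
      simp only [stepV]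
      push_cast
      simp only [mul_sub, Finset.sum_sub_distrib]
      ring
    rw [e]
    have t1 : ∀ j ∈ Finset.range ((k : ℕ) + 1), ‖c (Fin.ofNat (K + 1) j) *
        (x ^ ((k : ℕ) - j) * (((stepU j (k - j)).eval a - (stepU j (k - j)).eval 1 : ℝ) : ℂ))‖ ≤
        B1 j (k - j) * (1 - a) * (1 + ‖c‖) := fun j _ => by
      rw [norm_mul, norm_mul, hx', one_mul, Complex.norm_real, Real.norm_eq_abs, mul_comm]
      have := norm_le_pi_norm c (Fin.ofNat (K + 1) j)
      exact mul_le_mul (hB1' _ _ a h1 h2) (by linarith) (norm_nonneg _) (mul_nonneg (hB1 _ _) ha)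
    have t2 : ‖x ^ (k : ℕ) * (((a ^ (k : ℕ) - a⁻¹ ^ (k : ℕ)) / (k : ℕ) -
          (1 ^ (k : ℕ) - 1⁻¹ ^ (k : ℕ)) / (k : ℕ) : ℝ) : ℂ)‖ ≤ B2 k * (1 - a) * (1 + ‖c‖) := by
      rw [norm_mul, hx', one_mul, Complex.norm_real, Real.norm_eq_abs]
      refine (hB2' _ a h1 h2).trans (le_mul_of_one_le_right (mul_nonneg (hB2 _) ha) ?_)
      linarith [norm_nonneg c]
    refine (norm_add_le _ _).trans ((add_le_add (norm_sum_le_of_le _ t1) t2).trans (le_of_eq ?_))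
    rw [← Finset.sum_mul, ← Finset.sum_mul]; ring
  calc ‖stepV K a x c‖ = ‖c + (stepV K a x c - c)‖ := by rw [add_sub_cancel]
    _ ≤ _ := (norm_add_le _ _).trans (by gcongr)

/-- The first coefficient stays bounded by `3` along chains; this crude form of the sharp bound `2`
is what makes the differential inequalities below uniform. -/
lemma stepV_first {K : ℕ} (hK : 1 ≤ K) {a : ℝ} (h1 : 1 / 2 ≤ a) (h2 : a ≤ 1) {x : ℂ} (hx : ‖x‖ = 1)
    {c : Fin (K + 1) → ℂ} (hc : ‖c (Fin.ofNat (K + 1) 1)‖ ≤ 3) (hc0 : c (Fin.ofNat (K + 1) 0) = 0) :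
    ‖stepV K a x c (Fin.ofNat (K + 1) 1)‖ ≤ 3 := by
  have hk : ((Fin.ofNat (K + 1) 1 : Fin (K + 1)) : ℕ) = 1 := Nat.mod_eq_of_lt (by omega)
  have h0 : (0 : ℝ) < a := by linarith
  have e : stepV K a x c (Fin.ofNat (K + 1) 1) = c (Fin.ofNat (K + 1) 1) * a -
      x * ((a⁻¹ - a : ℝ) : ℂ) := by
    unfold stepV
    rw [hk, Finset.sum_range_succ, Finset.sum_range_succ, hc0]
    simp [stepU_one_left]
    ring
  rw [e]
  refine (norm_sub_le _ _).trans ?_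
  rw [norm_mul, norm_mul, hx, Complex.norm_real, Complex.norm_real, Real.norm_of_nonneg h0.le]
  have h4 : a ≤ a⁻¹ := h2.trans ((one_le_inv₀ h0).2 h2)
  rw [Real.norm_of_nonneg (by linarith)]
  have h5 : a⁻¹ - a ≤ 3 * (1 - a) := by
    have : a⁻¹ ≤ 3 - 2 * a := by
      rw [inv_le_iff_one_le_mul₀ h0]; nlinarith
    linarith
  nlinarith

lemma stepV_zero_comp {K : ℕ} {a : ℝ} {x : ℂ} {c : Fin (K + 1) → ℂ}
    (hc0 : c (Fin.ofNat (K + 1) 0) = 0) : stepV K a x c (Fin.ofNat (K + 1) 0) = 0 := by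
  have hk : ((Fin.ofNat (K + 1) 0 : Fin (K + 1)) : ℕ) = 0 := Nat.mod_eq_of_lt (by omega)
  unfold stepV
  rw [hk]
  simp [show c 0 = 0 from hc0]

/-- A `C¹` function `Ψ (s, c)` that does not decrease along the infinitesimal motion
`(-s, ellV K x c)` increases, under a step with parameter `a` near `1` in which `s` is also scaled,
by at most `ε (1 - a)`, uniformly on bounded sets. -/
lemma one_step (K : ℕ) (Ψ : ℝ × (Fin (K + 1) → ℂ) → ℝ) (hΨ : ContDiff ℝ 1 Ψ)
    (hD : ∀ s : ℝ, 0 ≤ s → s ≤ 1 → ∀ x : ℂ, ‖x‖ = 1 → ∀ c : Fin (K + 1) → ℂ,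
      ‖c (Fin.ofNat (K + 1) 1)‖ ≤ 3 →
      ∃ D : ℝ, 0 ≤ D ∧ HasDerivAt (fun r : ℝ => Ψ (s - r * s, c + r • ellV K x c)) D 0)
    (R ε : ℝ) (hε : 0 < ε) : ∃ δ : ℝ, 0 < δ ∧ ∀ a : ℝ, 1 - δ < a → a ≤ 1 → ∀ s : ℝ, 0 ≤ s → s ≤ 1 →
      ∀ x : ℂ, ‖x‖ = 1 → ∀ c : Fin (K + 1) → ℂ, ‖c‖ ≤ R → ‖c (Fin.ofNat (K + 1) 1)‖ ≤ 3 →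
      Ψ (s, stepV K a x c) ≤ Ψ (a * s, c) + ε * (1 - a) := by
  let E := Fin (K + 1) → ℂ
  let G : ℝ × (ℝ × ℂ × E) → ℝ := fun p =>
    Ψ (p.2.1, stepV K p.1 p.2.2.1 p.2.2.2) - Ψ (p.1 * p.2.1, p.2.2.2)
  let O : Set (ℝ × (ℝ × ℂ × E)) := {p | 0 < p.1}
  have hO : IsOpen O := isOpen_lt continuous_const continuous_fst
  have hG : ContDiffOn ℝ 1 G O := by
    have hst : ContDiffOn ℝ 1 (fun p : ℝ × (ℝ × ℂ × E) => stepV K p.1 p.2.2.1 p.2.2.2) O := by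
      rw [contDiffOn_pi]
      intro k
      unfold stepV
      refine ContDiffOn.add (ContDiffOn.sum fun j _ => ?_) (ContDiffOn.mul ?_ ?_)
      · refine ContDiff.contDiffOn (ContDiff.mul (by fun_prop) (ContDiff.mul (by fun_prop) ?_))
        exact Complex.ofRealCLM.contDiff.comp
          ((by simpa using Polynomial.contDiff_aeval (R := ℝ) (𝕜 := ℝ) (stepU j _) 1 :
            ContDiff ℝ 1 fun a : ℝ => (stepU j _).eval a).comp contDiff_fst)
      · exact ContDiff.contDiffOn (by fun_prop)
      · refine Complex.ofRealCLM.contDiff.comp_contDiffOn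
          (ContDiffOn.div_const (ContDiffOn.sub (ContDiff.contDiffOn (by fun_prop)) ?_) _)
        exact (contDiff_fst.contDiffOn.inv fun p hp => ne_of_gt hp).pow _
    refine ContDiffOn.sub (hΨ.comp_contDiffOn (ContDiffOn.prodMk (by fun_prop) hst)) ?_
    exact (hΨ.comp (by fun_prop)).contDiffOn
  have hDc : ContinuousOn (fun p => fderiv ℝ G p (1, 0)) O :=
    (hG.continuousOn_fderiv_of_isOpen hO le_rfl).clm_apply continuousOn_const
  have hder : ∀ b : ℝ, 0 < b → ∀ q, HasDerivAt (fun b => G (b, q)) (fderiv ℝ G (b, q) (1, 0)) b := by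
    intro b hb q
    have h1 : DifferentiableAt ℝ G (b, q) :=
      ((hG.differentiableOn one_ne_zero) (b, q) hb).differentiableAt (hO.mem_nhds hb)
    exact h1.hasFDerivAt.comp_hasDerivAt b ((hasDerivAt_id b).prodMk (hasDerivAt_const b q))
  let Q : Set (ℝ × ℂ × E) := {q | q.1 ∈ Set.Icc (0 : ℝ) 1 ∧ q.2.1 ∈ sphere (0 : ℂ) 1 ∧
    q.2.2 ∈ closedBall (0 : E) R ∧ ‖q.2.2 (Fin.ofNat (K + 1) 1)‖ ≤ 3}
  have hQ : IsCompact Q := by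
    have h1 : IsCompact (Set.Icc (0 : ℝ) 1 ×ˢ (sphere (0 : ℂ) 1 ×ˢ closedBall (0 : E) R)) :=
      isCompact_Icc.prod ((isCompact_sphere _ _).prod (isCompact_closedBall _ _))
    have h2 : IsClosed {q : ℝ × ℂ × E | ‖q.2.2 (Fin.ofNat (K + 1) 1)‖ ≤ 3} :=
      isClosed_le (by fun_prop) continuous_const
    refine (h1.inter_right h2).of_isClosed_subset ?_ ?_
    · refine IsClosed.inter (isClosed_Icc.preimage continuous_fst) (IsClosed.inter
        (isClosed_sphere.preimage (by fun_prop)) (IsClosed.inter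
        (isClosed_closedBall.preimage (by fun_prop)) h2))
    · rintro ⟨s, x, c⟩ ⟨a1, a2, a3, a4⟩
      exact ⟨⟨a1, a2, a3⟩, a4⟩
  have hat1 : ∀ q ∈ Q, 0 ≤ fderiv ℝ G (1, q) (1, 0) := by
    rintro ⟨s, x, c⟩ ⟨a1, a2, a3, a4⟩
    obtain ⟨D, hD0, hD1⟩ := hD s a1.1 a1.2 x (by simpa using a2) c a4
    have hΨd : HasFDerivAt Ψ (fderiv ℝ Ψ (s, c)) (s, c) :=
      (hΨ.differentiable one_ne_zero).differentiableAt.hasFDerivAt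
    have e1 : HasDerivAt (fun r : ℝ => Ψ (s - r * s, c + r • ellV K x c))
        (fderiv ℝ Ψ (s, c) (-s, ellV K x c)) 0 := by
      have hp : HasDerivAt (fun r : ℝ => (s - r * s, c + r • ellV K x c)) (-s, ellV K x c) 0 := by
        refine HasDerivAt.prodMk ?_ ?_
        · simpa using ((hasDerivAt_id (0 : ℝ)).mul_const s).const_sub s
        · simpa using ((hasDerivAt_id (0 : ℝ)).smul_const (ellV K x c)).const_add c
      have hΨ0 : HasFDerivAt Ψ (fderiv ℝ Ψ (s, c)) (s - 0 * s, c + (0 : ℝ) • ellV K x c) := by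
        simpa using hΨd
      exact hΨ0.comp_hasDerivAt (0 : ℝ) hp
    have e2 : HasDerivAt (fun b : ℝ => G (b, (s, x, c)))
        (fderiv ℝ Ψ (s, c) (0, ellV K x c) - fderiv ℝ Ψ (s, c) (s, 0)) 1 := by
      have hp1 : HasDerivAt (fun b : ℝ => (s, stepV K b x c)) (0, ellV K x c) 1 :=
        (hasDerivAt_const (1 : ℝ) s).prodMk (hasDerivAt_stepV K x c)
      have hp2 : HasDerivAt (fun b : ℝ => (b * s, c)) (s, 0) 1 := by
        refine HasDerivAt.prodMk ?_ (hasDerivAt_const (1 : ℝ) c)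
        simpa using (hasDerivAt_id (1 : ℝ)).mul_const s
      have hΨ1 : HasFDerivAt Ψ (fderiv ℝ Ψ (s, c)) (s, stepV K 1 x c) := by
        rw [stepV_one]; exact hΨd
      have hΨ2 : HasFDerivAt Ψ (fderiv ℝ Ψ (s, c)) (1 * s, c) := by
        rw [one_mul]; exact hΨd
      exact (hΨ1.comp_hasDerivAt (1 : ℝ) hp1).sub (hΨ2.comp_hasDerivAt (1 : ℝ) hp2)
    rw [(hder 1 one_pos _).unique e2, ← map_sub]
    have : ((0, ellV K x c) : ℝ × E) - (s, 0) = (-s, ellV K x c) := by simp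
    rw [this, e1.unique hD1]
    exact hD0
  -- The derivative of `G` in `a` is nonnegative at `a = 1`, hence by compactness of the parameter set
  -- `Q` it exceeds `-ε` for all `a` near `1`.
  have hev : ∀ᶠ a in 𝓝 (1 : ℝ), ∀ q ∈ Q, -ε < fderiv ℝ G (a, q) (1, 0) := by
    refine hQ.eventually_forall_of_forall_eventually fun q hq => ?_
    have : ContinuousAt (fun p => fderiv ℝ G p (1, 0)) (1, q) :=
      hDc.continuousAt (hO.mem_nhds (by simp [O]))
    exact this.eventually (lt_mem_nhds (by linarith [hat1 q hq]))
  obtain ⟨δ, hδ, hball⟩ := Metric.eventually_nhds_iff.1 hev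
  refine ⟨min δ (1 / 2), by positivity, ?_⟩
  intro a ha1 ha2 s hs0 hs1 x hx c hcR hc3
  have hq : (s, x, c) ∈ Q := ⟨⟨hs0, hs1⟩, by simpa using hx, by simpa using hcR, hc3⟩
  have hδ1 := min_le_left δ (1 / 2)
  have hδ2 := min_le_right δ (1 / 2)
  have hder2 : ∀ b ∈ Set.Icc a 1, HasDerivAt (fun b => G (b, (s, x, c)) + ε * b)
      (fderiv ℝ G (b, (s, x, c)) (1, 0) + ε) b := by
    intro b hb
    refine (hder b (by linarith [hb.1]) _).add ?_
    simpa using (hasDerivAt_id b).const_mul ε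
  have hmono : MonotoneOn (fun b => G (b, (s, x, c)) + ε * b) (Set.Icc a 1) := by
    apply monotoneOn_of_deriv_nonneg (convex_Icc a 1)
    · exact fun b hb => (hder2 b hb).continuousAt.continuousWithinAt
    · exact fun b hb => (hder2 b (interior_subset hb)).differentiableAt.differentiableWithinAt
    · intro b hb
      have hb' := interior_subset hb
      rw [(hder2 b hb').deriv]
      have := hball (y := b) (by
        rw [Real.dist_eq, abs_sub_comm, abs_of_nonneg (by linarith [hb'.2])]; linarith [hb'.1]) _ hq
      linarith
  have := hmono ⟨le_rfl, ha2⟩ ⟨ha2, le_rfl⟩ ha2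
  simp only [G, stepV_one, one_mul, sub_self, mul_one] at this
  linarith

lemma chainV_bound {K : ℕ} {B : ℝ} (hB : 0 ≤ B) (hBs : ∀ a : ℝ, 1 / 2 ≤ a → a ≤ 1 → ∀ x : ℂ, ‖x‖ = 1 →
    ∀ c, ‖stepV K a x c‖ ≤ ‖c‖ + B * (1 - a) * (1 + ‖c‖)) {a : ℝ} (h1 : 1 / 2 ≤ a) (h2 : a ≤ 1)
    (l : List ℂ) (hl : ∀ x ∈ l, ‖x‖ = 1) :
    1 + ‖chainV K a l‖ ≤ Real.exp (B * (l.length * (1 - a))) := by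
  induction l with
  | nil => simp [chainV]
  | cons x l ih =>
    have ih := ih fun y hy => hl y (by simp [hy])
    have hs := hBs a h1 h2 x (hl x (by simp)) (chainV K a l)
    have he := Real.add_one_le_exp (B * (1 - a))
    have : Real.exp (B * ((x :: l).length * (1 - a))) =
        Real.exp (B * (l.length * (1 - a))) * Real.exp (B * (1 - a)) := by
      rw [← Real.exp_add]; congr 1; push_cast [List.length_cons]; ring
    rw [this]
    calc 1 + ‖chainV K a (x :: l)‖ ≤ (1 + ‖chainV K a l‖) * (B * (1 - a) + 1) := by
          simp only [chainV]; linarith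
      _ ≤ _ := by
          have : 0 ≤ B * (1 - a) := mul_nonneg hB (by linarith)
          gcongr

lemma chainV_first {K : ℕ} (hK : 1 ≤ K) {a : ℝ} (h1 : 1 / 2 ≤ a) (h2 : a ≤ 1)
    (l : List ℂ) (hl : ∀ x ∈ l, ‖x‖ = 1) :
    ‖chainV K a l (Fin.ofNat (K + 1) 1)‖ ≤ 3 ∧ chainV K a l (Fin.ofNat (K + 1) 0) = 0 := by
  induction l with
  | nil => simp [chainV]
  | cons x l ih =>
    obtain ⟨i1, i2⟩ := ih fun y hy => hl y (by simp [hy])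
    exact ⟨stepV_first hK h1 h2 (hl x (by simp)) i1 i2, stepV_zero_comp i2⟩

/-- A discrete form of monotonicity along Loewner chains. If `Ψ` does not decrease along the
infinitesimal motion and `Ψ (s, 0) ≤ 0`, then `Ψ (1, c) ≤ 0` for every limit `c` of coefficient
vectors of chains of steps with `a → 1` and bounded total length `l.length * (1 - a)`. -/
theorem chain_bound {K : ℕ} (hK : 1 ≤ K) (Ψ : ℝ × (Fin (K + 1) → ℂ) → ℝ) (hΨ : ContDiff ℝ 1 Ψ)
    (hD : ∀ s : ℝ, 0 ≤ s → s ≤ 1 → ∀ x : ℂ, ‖x‖ = 1 → ∀ c : Fin (K + 1) → ℂ,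
      ‖c (Fin.ofNat (K + 1) 1)‖ ≤ 3 →
      ∃ D : ℝ, 0 ≤ D ∧ HasDerivAt (fun r : ℝ => Ψ (s - r * s, c + r • ellV K x c)) D 0)
    (h0 : ∀ s : ℝ, 0 ≤ s → s ≤ 1 → Ψ (s, 0) ≤ 0) (c : Fin (K + 1) → ℂ) (Λ : ℝ)
    (hc : ∀ η : ℝ, 0 < η → ∃ a : ℝ, 1 - η < a ∧ a < 1 ∧ ∃ l : List ℂ, (∀ x ∈ l, ‖x‖ = 1) ∧
      l.length * (1 - a) ≤ Λ ∧ ‖chainV K a l - c‖ < η) : Ψ (1, c) ≤ 0 := by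
  obtain ⟨B, hB, hBs⟩ := stepV_norm_le K
  set R := Real.exp (B * Λ)
  have hΛ : 0 ≤ Λ := by
    obtain ⟨a, -, ha, l, -, hl, -⟩ := hc 1 one_pos
    exact le_trans (mul_nonneg (Nat.cast_nonneg _) (by linarith)) hl
  refine le_of_forall_pos_le_add fun ε hε => ?_
  set ε' := ε / (2 * (Λ + 1)) with hε'
  have hε'0 : 0 < ε' := by positivity
  obtain ⟨δ, hδ, hstep⟩ := one_step K Ψ hΨ hD R ε' hε'0
  have hcont : ContinuousAt (fun c => Ψ (1, c)) c :=
    (hΨ.continuous.comp (by fun_prop : Continuous fun c : Fin (K + 1) → ℂ => ((1 : ℝ), c))).continuousAt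
  obtain ⟨η, hη, hηc⟩ := Metric.continuousAt_iff.1 hcont (ε / 2) (by positivity)
  obtain ⟨a, ha1, ha2, l, hl, hlen, hcl⟩ := hc (min η (min δ (1 / 2))) (by positivity)
  have m1 := min_le_left η (min δ (1 / 2))
  have m2 := (min_le_right η (min δ (1 / 2))).trans (min_le_left _ _)
  have m3 := (min_le_right η (min δ (1 / 2))).trans (min_le_right _ _)
  have hpos : 0 ≤ 1 - a := by linarith
  -- The error `ε' (1 - a)` of `one_step` accumulates to at most `ε' Λ` over the whole chain.
  have tele : ∀ l : List ℂ, (∀ x ∈ l, ‖x‖ = 1) → l.length * (1 - a) ≤ Λ → ∀ s : ℝ, 0 ≤ s → s ≤ 1 →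
      Ψ (s, chainV K a l) ≤ ε' * (l.length * (1 - a)) := by
    intro l
    induction l with
    | nil => intro _ _ s hs0 hs1; simpa [chainV] using h0 s hs0 hs1
    | cons x l ih =>
      intro hl hlen s hs0 hs1
      have hl' : ∀ y ∈ l, ‖y‖ = 1 := fun y hy => hl y (by simp [hy])
      push_cast [List.length_cons] at hlen ⊢
      have hlen' : l.length * (1 - a) ≤ Λ := by linarith
      have hR : ‖chainV K a l‖ ≤ R := by
        have := chainV_bound hB hBs (by linarith) ha2.le l hl'
        have h3 : Real.exp (B * (l.length * (1 - a))) ≤ R :=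
          Real.exp_le_exp.2 (mul_le_mul_of_nonneg_left hlen' hB)
        linarith
      have h4 := hstep a (by linarith) ha2.le s hs0 hs1 x (hl x (by simp)) (chainV K a l) hR
        (chainV_first hK (by linarith) ha2.le l hl').1
      have h5 := ih hl' hlen' (a * s) (mul_nonneg (by linarith) hs0)
        (mul_le_one₀ ha2.le hs0 hs1)
      simp only [chainV]
      linarith
  have h6 := tele l hl hlen 1 zero_le_one le_rfl
  have h7 := hηc (x := chainV K a l) (by rw [dist_eq_norm]; linarith)
  rw [Real.dist_eq, abs_lt] at h7
  have h8 : ε' * (l.length * (1 - a)) ≤ ε / 2 := by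
    calc ε' * (l.length * (1 - a)) ≤ ε' * (Λ + 1) := by
          apply mul_le_mul_of_nonneg_left _ hε'0.le; linarith
      _ = ε / 2 := by rw [hε']; field_simp
  linarith
end chainBound
end

/-! ### Univalent self-maps of the disk and Koebe chains -/

noncomputable section
open Filter Topology

/-- `g` is a univalent self-map of the unit disk with `g 0 = 0` and `g' 0 = b > 0`. -/
structure Good (g : ℂ → ℂ) (b : ℝ) : Prop where
  diff : DifferentiableOn ℂ g (ball 0 1)
  inj : Set.InjOn g (ball 0 1)
  maps : ∀ z ∈ ball (0 : ℂ) 1, ‖g z‖ < 1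
  zero : g 0 = 0
  der : HasDerivAt g (b : ℂ) 0
  pos : 0 < b

lemma zero_mem_disk : (0 : ℂ) ∈ ball (0 : ℂ) 1 := by simp

lemma Good.dslope_diff {g : ℂ → ℂ} {b : ℝ} (h : Good g b) :
    DifferentiableOn ℂ (dslope g 0) (ball 0 1) :=
  (Complex.differentiableOn_dslope (isOpen_ball.mem_nhds zero_mem_disk)).2 h.diff

lemma Good.eq_mul_dslope {g : ℂ → ℂ} {b : ℝ} (h : Good g b) (z : ℂ) :
    g z = z * dslope g 0 z := by
  have := sub_smul_dslope g 0 z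
  simpa [h.zero] using this.symm

lemma Good.dslope_zero {g : ℂ → ℂ} {b : ℝ} (h : Good g b) : dslope g 0 0 = b := by
  rw [dslope_same, h.der.deriv]

lemma Good.dslope_ne {g : ℂ → ℂ} {b : ℝ} (h : Good g b) {z : ℂ} (hz : z ∈ ball (0 : ℂ) 1) :
    dslope g 0 z ≠ 0 := by
  by_cases h0 : z = 0
  · rw [h0, h.dslope_zero]; exact_mod_cast h.pos.ne'
  · intro hd
    have h1 := h.eq_mul_dslope z
    rw [hd, mul_zero] at h1
    exact h0 (h.inj hz zero_mem_disk (by rw [h1, h.zero]))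

lemma Good.dslope_le {g : ℂ → ℂ} {b : ℝ} (h : Good g b) {z : ℂ} (hz : z ∈ ball (0 : ℂ) 1) :
    ‖dslope g 0 z‖ ≤ 1 := by
  have := Complex.norm_dslope_le_div_of_mapsTo_ball (f := g) (c := 0) (R₁ := 1) (R₂ := 1) (z := z) h.diff
    (fun z hz => by simpa [h.zero] using (h.maps z hz).le) hz
  simpa using this

lemma Good.le_one {g : ℂ → ℂ} {b : ℝ} (h : Good g b) : b ≤ 1 := by
  have := h.dslope_le zero_mem_disk
  rw [h.dslope_zero, norm_real, Real.norm_of_nonneg h.pos.le] at this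
  exact this

/-- If every value on the circle of radius `ρ` were attained, `g` would cover the disk of radius `ρ`
already on a smaller disk, and Schwarz's lemma for the inverse would give `ρ ≤ b`. In place of the
inverse, the maximum principle is applied to `z / g z`. -/
lemma Good.exists_omitted {g : ℂ → ℂ} {b : ℝ} (h : Good g b) {ρ : ℝ} (hb : b < ρ) :
    ∃ w : ℂ, ‖w‖ = ρ ∧ ∀ z ∈ ball (0 : ℂ) 1, g z ≠ w := by
  by_contra! hcon
  have hρ : 0 < ρ := h.pos.trans hb
  have han : AnalyticOnNhd ℂ g (ball 0 1) := h.diff.analyticOnNhd isOpen_ball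
  have hopen : ∀ s ⊆ ball (0 : ℂ) 1, IsOpen s → IsOpen (g '' s) := by
    rcases han.is_constant_or_isOpen (convex_ball _ _).isPreconnected with ⟨w, hw⟩ | h1
    · exfalso
      have h2 : (2⁻¹ : ℂ) ∈ ball (0 : ℂ) 1 := by rw [mem_ball_zero_iff]; norm_num
      have := h.inj h2 zero_mem_disk (by rw [hw _ h2, hw _ zero_mem_disk])
      norm_num at this
    · exact h1
  set rr : ℕ → ℝ := fun n => 1 - 1 / ((n : ℝ) + 1) with hrr
  have hrr1 : ∀ n, rr n < 1 := fun n => by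
    simp only [hrr]
    have : (0 : ℝ) < 1 / ((n : ℝ) + 1) := by positivity
    linarith
  have hmono : Monotone rr := fun m n hmn => by
    simp only [hrr]
    have : (m : ℝ) ≤ n := by exact_mod_cast hmn
    have : 1 / ((n : ℝ) + 1) ≤ 1 / ((m : ℝ) + 1) := by gcongr
    linarith
  have hsub : ∀ n, ball (0 : ℂ) (rr n) ⊆ ball 0 1 := fun n => ball_subset_ball (hrr1 n).le
  -- By compactness, a single disk of radius `r < 1` has an image containing the circle of radius `ρ`.
  obtain ⟨n, hn⟩ := (isCompact_sphere (0 : ℂ) ρ).elim_directed_cover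
    (fun n => g '' ball 0 (rr n)) (fun n => hopen _ (hsub n) isOpen_ball) (by
      intro w hw
      obtain ⟨z, hz, hzw⟩ := hcon w (by simpa using hw)
      have hz' : 0 < 1 - ‖z‖ := by simpa using hz
      obtain ⟨n, hn⟩ := exists_nat_one_div_lt hz'
      refine Set.mem_iUnion.2 ⟨n, z, ?_, hzw⟩
      simp only [mem_ball_zero_iff, hrr]; linarith)
    (by
      refine directed_of_isDirected_le fun m n hmn => ?_
      exact Set.image_mono (ball_subset_ball (hmono hmn)))
  generalize hr : rr n = r at hn
  have hr1 : r < 1 := hr ▸ hrr1 n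
  have hρs : ((ρ : ℂ)) ∈ sphere (0 : ℂ) ρ := by simp [abs_of_pos hρ]
  obtain ⟨z0, hz0, hgz0⟩ := hn hρs
  have hr0 : 0 < r := (norm_nonneg z0).trans_lt (by simpa using hz0)
  have hsph : ∀ z ∈ sphere (0 : ℂ) r, z ∈ ball (0 : ℂ) 1 := fun z hz => by
    rw [mem_sphere_zero_iff_norm] at hz
    rw [mem_ball_zero_iff, hz]; exact hr1
  have hcb : closedBall (0 : ℂ) r ⊆ ball 0 1 := closedBall_subset_ball hr1
  have hne : ∀ z ∈ sphere (0 : ℂ) r, ‖g z‖ ≠ ρ := by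
    intro z hz he
    obtain ⟨z', hz', hh⟩ := hn (show g z ∈ sphere (0 : ℂ) ρ by simpa using he)
    have h1 := h.inj (ball_subset_ball hr1.le hz') (hsph z hz) hh
    rw [mem_sphere_zero_iff_norm] at hz
    rw [h1, mem_ball_zero_iff, hz] at hz'
    exact lt_irrefl _ hz'
  have hcont : ContinuousOn (fun z => ‖g z‖) (sphere (0 : ℂ) r) :=
    (h.diff.continuousOn.mono hsph).norm
  have hpre : IsPreconnected (sphere (0 : ℂ) r) :=
    isPreconnected_sphere (by simp [Complex.rank_real_complex]) 0 r
  have hrs : (r : ℂ) ∈ sphere (0 : ℂ) r := by simp [abs_of_pos hr0]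
  -- By injectivity `‖g‖` avoids `ρ` on the connected circle of radius `r`.
  have hdich : (∀ z ∈ sphere (0 : ℂ) r, ‖g z‖ < ρ) ∨ ∀ z ∈ sphere (0 : ℂ) r, ρ < ‖g z‖ := by
    by_contra! hc
    obtain ⟨⟨z1, hz1, h1⟩, z2, hz2, h2⟩ := hc
    obtain ⟨z, hz, he⟩ := hpre.intermediate_value hz2 hz1 hcont ⟨h2, h1⟩
    exact hne z hz he
  rcases hdich with hlt | hgt
  · obtain ⟨zm, hzm, hmax⟩ := (isCompact_sphere (0 : ℂ) r).exists_isMaxOn ⟨_, hrs⟩ hcont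
    have hd : DiffContOnCl ℂ g (ball 0 r) := h.diff.diffContOnCl_ball hcb
    have := Complex.norm_le_of_forall_mem_frontier_norm_le isBounded_ball hd (C := ‖g zm‖) (by
      intro z hz
      rw [frontier_ball _ hr0.ne'] at hz
      exact hmax hz) (subset_closure hz0)
    rw [hgz0, norm_real, Real.norm_of_nonneg hρ.le] at this
    exact absurd (hlt zm hzm) (not_lt.2 this)
  · have hd : DiffContOnCl ℂ (fun z => (dslope g 0 z)⁻¹) (ball 0 r) :=
      (h.dslope_diff.inv fun z hz => h.dslope_ne hz).diffContOnCl_ball hcb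
    have := Complex.norm_le_of_forall_mem_frontier_norm_le isBounded_ball hd (C := r / ρ) (by
      intro z hz
      rw [frontier_ball _ hr0.ne'] at hz
      have h1 := hgt z hz
      rw [h.eq_mul_dslope z, norm_mul, mem_sphere_zero_iff_norm.1 hz] at h1
      have h2 : 0 < ‖dslope g 0 z‖ := norm_pos_iff.2 (h.dslope_ne (hsph z hz))
      rw [norm_inv, inv_eq_one_div, div_le_div_iff₀ h2 hρ]
      linarith) (subset_closure (mem_ball_self hr0))
    rw [h.dslope_zero, norm_inv, norm_real, Real.norm_of_nonneg h.pos.le, inv_eq_one_div,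
      div_le_div_iff₀ h.pos hρ] at this
    nlinarith [h.pos]

/-- A zero-free holomorphic function on the disk has a holomorphic square root with prescribed
value at `0`. -/
lemma exists_sqrt {h : ℂ → ℂ} (hd : DifferentiableOn ℂ h (ball 0 1))
    (hn : ∀ z ∈ ball (0 : ℂ) 1, h z ≠ 0) (w : ℂ) (hw : w ^ 2 = h 0) :
    ∃ s : ℂ → ℂ, DifferentiableOn ℂ s (ball 0 1) ∧ s 0 = w ∧ ∀ z ∈ ball (0 : ℂ) 1, s z ^ 2 = h z := by
  have hd' : DifferentiableOn ℂ (deriv h) (ball 0 1) := hd.deriv isOpen_ball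
  obtain ⟨L, hL⟩ := (hd'.div hd hn).isExactOn_ball
  have hL' : ∀ z ∈ ball (0 : ℂ) 1, HasDerivAt L (deriv h z / h z) z := hL
  set s : ℂ → ℂ := fun z => w * Complex.exp ((L z - L 0) / 2) with hs
  refine ⟨s, ?_, by simp [hs], ?_⟩
  · intro z hz
    have := (hL' z hz).differentiableAt
    exact DifferentiableAt.differentiableWithinAt (by simp only [hs]; fun_prop)
  · have hq : ∀ z ∈ ball (0 : ℂ) 1, HasDerivAt (fun z => Complex.exp (L z - L 0) / h z) 0 z := by
      intro z hz
      have h1 := (((hL' z hz).sub_const (L 0)).cexp).div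
        ((hd.differentiableAt (isOpen_ball.mem_nhds hz)).hasDerivAt) (hn z hz)
      refine h1.congr_deriv ?_
      rw [mul_assoc, div_mul_cancel₀ _ (hn z hz), sub_self, zero_div]
    intro z hz
    have hc := (convex_ball (0 : ℂ) 1).is_const_of_fderivWithin_eq_zero (𝕜 := ℂ)
      (f := fun z => Complex.exp (L z - L 0) / h z)
      (fun z hz => (hq z hz).differentiableAt.differentiableWithinAt) (by
        intro z hz
        rw [fderivWithin_of_isOpen isOpen_ball hz]
        ext
        simpa using (hq z hz).deriv) hz zero_mem_disk
    have h0 := hn z hz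
    have h00 := hn 0 zero_mem_disk
    simp only [sub_self, Complex.exp_zero] at hc
    rw [div_eq_div_iff h0 h00] at hc
    simp only [hs, mul_pow, hw, ← Complex.exp_nat_mul]
    push_cast
    rw [mul_div_cancel₀ _ (two_ne_zero), mul_comm, hc, one_mul]

lemma omegaF_hasDerivAt (a : ℝ) (x : ℂ) : HasDerivAt (omegaF a x) a 0 := by
  have h1 : HasDerivAt (fun z : ℂ => z * (a - x * z)) (1 * (a - x * 0) + 0 * (0 - x * 1)) 0 :=
    (hasDerivAt_id (0 : ℂ)).mul ((hasDerivAt_const _ _).sub ((hasDerivAt_id (0 : ℂ)).const_mul x))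
  have h2 : HasDerivAt (fun z : ℂ => 1 - a * x * z) (0 - a * x * 1) 0 :=
    (hasDerivAt_const _ _).sub ((hasDerivAt_id (0 : ℂ)).const_mul (a * x : ℂ))
  have := h1.div h2 (by simp)
  refine this.congr_deriv ?_
  simp

/-- The Möbius map `w ↦ (w + a) / (1 + a w)` preserves the exterior of the unit disk. -/
lemma norm_one_add_mul_le {a : ℝ} (ha0 : 0 < a) (ha1 : a < 1) {w : ℂ} (hw : 1 ≤ ‖w‖) :
    ‖1 + a * w‖ ≤ ‖w + a‖ := by
  have e1 : ‖w + a‖ ^ 2 - ‖1 + a * w‖ ^ 2 = (‖w‖ ^ 2 - 1) * (1 - a ^ 2) := by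
    simp only [← Complex.normSq_eq_norm_sq, Complex.normSq_apply]
    simp
    ring
  have h1 : 0 ≤ (‖w‖ ^ 2 - 1) * (1 - a ^ 2) := mul_nonneg (by nlinarith) (by nlinarith)
  exact (sq_le_sq₀ (norm_nonneg _) (norm_nonneg _)).1 (by linarith)

/-- Koebe's square-root transform: as `g` omits a value of modulus `ρ`, it factors through the
two-to-one map `omegaF a x` branched over that value, and the other factor has the larger
derivative `b / a`. -/
lemma Good.koebe_step {g : ℂ → ℂ} {b : ℝ} (h : Good g b) {ρ a : ℝ} (hb : b < ρ) (hρ1 : ρ < 1)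
    (ha : a = 2 * √ρ / (1 + ρ)) :
    ∃ x : ℂ, ‖x‖ = 1 ∧ ∃ g1 : ℂ → ℂ, Good g1 (b / a) ∧
      ∀ z ∈ ball (0 : ℂ) 1, g z = omegaF a x (g1 z) := by
  obtain ⟨w0, hw0, hom⟩ := h.exists_omitted hb
  have hρ : 0 < ρ := h.pos.trans hb
  set q := √ρ with hq
  have hq0 : 0 < q := Real.sqrt_pos.2 hρ
  have hqq : q ^ 2 = ρ := Real.sq_sqrt hρ.le
  have hq1 : q < 1 := by nlinarith
  have ha0 : 0 < a := by rw [ha]; positivity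
  have ha1 : a < 1 := by
    rw [ha, div_lt_one (by positivity)]; nlinarith [mul_pos (sub_pos.2 hq1) (sub_pos.2 hq1)]
  set x : ℂ := (starRingEnd ℂ) w0 / ρ with hx
  have hρc : (ρ : ℂ) ≠ 0 := by exact_mod_cast hρ.ne'
  have hx1 : ‖x‖ = 1 := by
    rw [hx, norm_div, RCLike.norm_conj, hw0, norm_real, Real.norm_of_nonneg hρ.le, div_self hρ.ne']
  have hxx : x * (starRingEnd ℂ) x = 1 := by
    rw [Complex.mul_conj, Complex.normSq_eq_norm_sq, hx1]; simp
  have hw0x : w0 = ρ * (starRingEnd ℂ) x := by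
    rw [hx, map_div₀, Complex.conj_conj, Complex.conj_ofReal, mul_div_cancel₀ _ hρc]
  set G : ℂ → ℂ := fun z => -x * g z with hG
  have hgG : ∀ z, g z = -(starRingEnd ℂ) x * G z := fun z => by
    simp only [hG]; linear_combination (-g z) * hxx
  have hGd : DifferentiableOn ℂ G (ball 0 1) := h.diff.const_mul (-x)
  have hGn : ∀ z ∈ ball (0 : ℂ) 1, ‖G z‖ < 1 := fun z hz => by
    simp only [hG, norm_mul, norm_neg, hx1, one_mul]; exact h.maps z hz
  have hGρ : ∀ z ∈ ball (0 : ℂ) 1, G z + ρ ≠ 0 := fun z hz he => by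
    apply hom z hz
    rw [hgG, hw0x, eq_neg_of_add_eq_zero_left he]; ring
  have hGρ2 : ∀ z ∈ ball (0 : ℂ) 1, 1 + ρ * G z ≠ 0 := fun z hz he => by
    have h1 : (ρ : ℂ) * G z = -1 := by linear_combination he
    have h2 := congrArg norm h1
    rw [norm_mul, norm_real, Real.norm_of_nonneg hρ.le, norm_neg, norm_one] at h2
    nlinarith [hGn z hz, norm_nonneg (G z)]
  have hG0 : G 0 = 0 := by simp [hG, h.zero]
  have hqc : (q : ℂ) ^ 2 = ρ := by exact_mod_cast hqq
  -- `G1` solves the quadratic equation `G1 (G1 + a) = G (1 + a G1)`, whose discriminant is the product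
  -- `(G + ρ) (1 + ρ G)` up to a constant factor; it has no zero since `G` omits `-ρ`.
  obtain ⟨s, hsd, hs0, hs⟩ := exists_sqrt (h := fun z => (G z + ρ) * (1 + ρ * G z))
    ((hGd.add_const _).mul ((hGd.const_mul _).const_add _))
    (fun z hz => mul_ne_zero (hGρ z hz) (hGρ2 z hz)) q (by simp [hG0, hqc])
  set G1 : ℂ → ℂ := fun z => (s z - q * (1 - G z)) / (1 + ρ) with hG1
  have h1ρ : (1 + ρ : ℂ) ≠ 0 := by exact_mod_cast (by positivity : (1 + ρ : ℝ) ≠ 0)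
  have hac : (a : ℂ) * (1 + ρ) = 2 * q := by
    rw [ha]; push_cast; field_simp
  have hG1d : DifferentiableOn ℂ G1 (ball 0 1) :=
    (hsd.sub ((hGd.const_sub 1).const_mul _)).div_const _
  have hG10 : G1 0 = 0 := by simp [hG1, hs0, hG0]
  have key : ∀ z ∈ ball (0 : ℂ) 1, G1 z * (G1 z + a) = G z * (1 + a * G1 z) := by
    intro z hz
    have h1 := hs z hz
    have h2 : G1 z * (1 + ρ) = s z - q * (1 - G z) := by
      simp only [hG1]; field_simp
    have h3 : (1 + (ρ : ℂ)) ^ 2 ≠ 0 := pow_ne_zero _ h1ρ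
    apply mul_left_cancel₀ h3
    linear_combination (G1 z * (1 + ρ) + s z - q * (1 - G z) + 2 * q * (1 - G z)) * h2 + h1
      - (1 - G z) ^ 2 * hqc + G1 z * (1 - G z) * (1 + ρ) * hac
  have hden : ∀ z ∈ ball (0 : ℂ) 1, 1 + a * G1 z ≠ 0 := by
    intro z hz he
    have h1 := key z hz
    rw [he, mul_zero] at h1
    have hac0 : (a : ℂ) ≠ 0 := by exact_mod_cast ha0.ne'
    rcases mul_eq_zero.1 h1 with h2 | h2
    · rw [h2] at he; simp at he
    · have h3 : (1 : ℂ) - a ^ 2 = 0 := by linear_combination he - a * h2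
      have h4 : (1 : ℝ) - a ^ 2 = 0 := by exact_mod_cast h3
      nlinarith
  have hG1n : ∀ z ∈ ball (0 : ℂ) 1, ‖G1 z‖ < 1 := by
    intro z hz
    by_contra! hc
    have h1 := congrArg norm (key z hz)
    rw [norm_mul, norm_mul] at h1
    have h2 := norm_one_add_mul_le ha0 ha1 hc
    have h3 : 0 < ‖1 + a * G1 z‖ := norm_pos_iff.2 (hden z hz)
    nlinarith [hGn z hz, mul_le_mul hc h2 h3.le (by linarith)]
  have hnx : ‖-(starRingEnd ℂ) x‖ = 1 := by rw [norm_neg, RCLike.norm_conj, hx1]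
  have hgo : ∀ z ∈ ball (0 : ℂ) 1, g z = omegaF a x (-(starRingEnd ℂ) x * G1 z) := by
    intro z hz
    have e1 : x * (-(starRingEnd ℂ) x * G1 z) = - G1 z := by linear_combination (-G1 z) * hxx
    rw [omegaF, mul_assoc (a : ℂ), e1, hgG z]
    have h1 := hden z hz
    have h2 : (1 : ℂ) - a * -G1 z ≠ 0 := by convert h1 using 1; ring
    rw [eq_div_iff h2]
    linear_combination (starRingEnd ℂ) x * key z hz
  refine ⟨x, hx1, fun z => -(starRingEnd ℂ) x * G1 z, ⟨hG1d.const_mul _, ?_, ?_, by simp [hG10], ?_,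
    div_pos h.pos ha0⟩, hgo⟩
  · intro z hz z' hz' he
    apply h.inj hz hz'
    rw [hgo z hz, hgo z' hz']
    exact congrArg _ he
  · intro z hz
    rw [norm_mul, hnx, one_mul]; exact hG1n z hz
  · have hd : DifferentiableAt ℂ (fun z => -(starRingEnd ℂ) x * G1 z) 0 :=
      (hG1d.const_mul _).differentiableAt (isOpen_ball.mem_nhds zero_mem_disk)
    have h1 := (HasDerivAt.comp (0 : ℂ) (h₂ := omegaF a x) (by simpa [hG10] using omegaF_hasDerivAt a x)
      hd.hasDerivAt)
    have h2 := (h.der.congr_of_eventuallyEq (f₁ := omegaF a x ∘ fun z => -(starRingEnd ℂ) x * G1 z) (by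
      filter_upwards [isOpen_ball.mem_nhds zero_mem_disk] with z hz
      exact (hgo z hz).symm)).unique h1
    have h3 := hd.hasDerivAt
    refine h3.congr_deriv ?_
    have hac0 : (a : ℂ) ≠ 0 := by exact_mod_cast ha0.ne'
    push_cast
    rw [h2]; field_simp

/-- The composition of the maps `omegaF a x`, with `x` running through the list; the head of the
list is applied first. -/
def chainF (a : ℝ) : List ℂ → ℂ → ℂ
  | [], z => z
  | x :: l, z => chainF a l (omegaF a x z)

lemma logRel_chainF (K : ℕ) {a : ℝ} (ha : 0 < a) (l : List ℂ) :
    LogRel K (chainF a l) ((a : ℂ) ^ l.length) (chainV K a l) := by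
  induction l with
  | nil => simpa [chainF, chainV] using logRel_id K
  | cons x l ih =>
    have := ih.step ha x
    simpa [chainF, chainV, pow_succ] using this

/-- Iterated Koebe steps: since each one multiplies the derivative by `1 / a`, and it never exceeds
`1`, finitely many of them raise it to at least `ρ`. -/
lemma Good.chain {f : ℂ → ℂ} {b : ℝ} (h : Good f b) {ρ a : ℝ} (hρ0 : 0 < ρ) (hρ1 : ρ < 1)
    (ha : a = 2 * √ρ / (1 + ρ)) :
    ∃ l : List ℂ, (∀ x ∈ l, ‖x‖ = 1) ∧ ∃ (g : ℂ → ℂ) (b' : ℝ), Good g b' ∧ ρ ≤ b' ∧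
      a ^ l.length * b' = b ∧ ∀ z ∈ ball (0 : ℂ) 1, f z = chainF a l (g z) := by
  have ha0 : 0 < a := by rw [ha]; positivity
  have ha1 : a < 1 := by
    have hqq : √ρ ^ 2 = ρ := Real.sq_sqrt hρ0.le
    have : √ρ < 1 := by nlinarith [Real.sqrt_nonneg ρ]
    rw [ha, div_lt_one (by positivity)]; nlinarith [mul_pos (sub_pos.2 this) (sub_pos.2 this)]
  have key : ∀ n : ℕ, ∃ l : List ℂ, (∀ x ∈ l, ‖x‖ = 1) ∧ ∃ (g : ℂ → ℂ) (b' : ℝ), Good g b' ∧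
      (ρ ≤ b' ∨ l.length = n) ∧
      a ^ l.length * b' = b ∧ ∀ z ∈ ball (0 : ℂ) 1, f z = chainF a l (g z) := by
    intro n
    induction n with
    | zero => exact ⟨[], by simp, f, b, h, by simp, by simp, fun z _ => rfl⟩
    | succ n ih =>
      obtain ⟨l, hl, g, b', hg, hor, hab, hf⟩ := ih
      by_cases hρb : ρ ≤ b'
      · exact ⟨l, hl, g, b', hg, Or.inl hρb, hab, hf⟩
      · obtain ⟨x, hx, g1, hg1, hgg⟩ := hg.koebe_step (not_le.1 hρb) hρ1 ha
        refine ⟨x :: l, ?_, g1, b' / a, hg1, Or.inr ?_, ?_, ?_⟩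
        · simpa [hx] using hl
        · simpa using hor.resolve_left hρb
        · rw [List.length_cons, pow_succ, mul_assoc, mul_div_cancel₀ _ ha0.ne', hab]
        · intro z hz
          rw [hf z hz, hgg z hz]; rfl
  obtain ⟨n, hn⟩ := exists_pow_lt_of_lt_one h.pos ha1
  obtain ⟨l, hl, g, b', hg, hor, hab, hf⟩ := key n
  refine ⟨l, hl, g, b', hg, ?_, hab, hf⟩
  rcases hor with h1 | h1
  · exact h1
  · rw [h1] at hab
    nlinarith [hg.le_one, pow_pos ha0 n]

end

/-! ### Density of Koebe chains -/

noncomputable section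
open Filter Topology Asymptotics

lemma HasCoef.tendsto {N : ℕ} {F : ℂ → ℂ} {P : PowerSeries ℂ} (h : HasCoef (N + 1) F P) :
    Tendsto F (𝓝 0) (𝓝 (PowerSeries.coeff 0 P)) := by
  have h1 : Tendsto (fun z : ℂ => z ^ (N + 1)) (𝓝 0) (𝓝 0) := by
    have := (continuous_pow (N + 1) (M := ℂ)).tendsto 0
    simpa using this
  have h2 := IsBigO.trans_tendsto h h1
  have h3 := ((P.trunc (N + 1)).continuous.tendsto 0)
  have h4 := h2.add h3
  have e : Polynomial.eval 0 (P.trunc (N + 1)) = PowerSeries.coeff 0 P := by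
    rw [← Polynomial.coeff_zero_eq_eval_zero, PowerSeries.coeff_trunc, if_pos (Nat.succ_pos _)]
  simpa [e] using h4

/-- The logarithm of `Ω z / (w z)` that vanishes at `0` is unique. -/
lemma LogRel.unique {K : ℕ} {Ω : ℂ → ℂ} {w : ℂ} (hw : w ≠ 0) {c c' : Fin (K + 1) → ℂ}
    (h : LogRel K Ω w c) (h' : LogRel K Ω w c') (h0 : c 0 = 0) (h0' : c' 0 = 0) : c = c' := by
  obtain ⟨A, hA, hΩ⟩ := h
  obtain ⟨A', hA', hΩ'⟩ := h'
  have t := hA.tendsto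
  have t' := hA'.tendsto
  have e0 : PowerSeries.coeff 0 (toPS K c) = 0 := by simp [toPS, h0]
  have e0' : PowerSeries.coeff 0 (toPS K c') = 0 := by simp [toPS, h0']
  rw [e0] at t
  rw [e0'] at t'
  have ht : Tendsto (fun z => A z - A' z) (𝓝 0) (𝓝 0) := by simpa using t.sub t'
  have hsm : ∀ᶠ z in 𝓝 (0 : ℂ), ‖A z - A' z‖ < 1 := by
    have := ht.eventually (ball_mem_nhds (0 : ℂ) one_pos)
    filter_upwards [this] with z hz
    simpa using hz
  have hAA : A =ᶠ[𝓝 0] A' := by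
    filter_upwards [hsm, hΩ, hΩ'] with z h1 h2 h3
    by_cases hz : z = 0
    · rw [hz, eq_of_tendsto_nhds t, eq_of_tendsto_nhds t']
    · rw [h2] at h3
      have h4 := mul_left_cancel₀ (mul_ne_zero hw hz) h3
      have h5 : Complex.exp (A z - A' z) = 1 := by
        rw [Complex.exp_sub, h4, div_self (Complex.exp_ne_zero _)]
      obtain ⟨n, hn⟩ := Complex.exp_eq_one_iff.1 h5
      have hn0 : n = 0 := by
        by_contra hne
        have h6 : (1 : ℝ) ≤ |(n : ℝ)| := by exact_mod_cast Int.one_le_abs hne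
        rw [hn] at h1
        simp only [norm_mul, Complex.norm_intCast, Complex.norm_real, Complex.norm_I, mul_one,
          Complex.norm_ofNat, Real.norm_of_nonneg Real.pi_pos.le] at h1
        nlinarith [Real.pi_gt_three]
      rw [hn0] at hn
      simpa [sub_eq_zero] using hn
  have hu := (hA.congr hAA).unique hA'
  funext k
  have := hu k k.2
  have hk : Fin.ofNat (K + 1) (k : ℕ) = k := Fin.ext (Nat.mod_eq_of_lt k.2)
  simpa [toPS, hk] using this

lemma norm_pow_sub_pow_le' {u v : ℂ} (hu : ‖u‖ ≤ 1) (hv : ‖v‖ ≤ 1) (j : ℕ) :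
    ‖u ^ j - v ^ j‖ ≤ j * ‖u - v‖ := by
  induction j with
  | zero => simp
  | succ j ih =>
    have e : u ^ (j + 1) - v ^ (j + 1) = u * (u ^ j - v ^ j) + (u - v) * v ^ j := by ring
    rw [e]
    refine (norm_add_le _ _).trans ?_
    rw [norm_mul, norm_mul, norm_pow]
    have h1 : ‖v‖ ^ j ≤ 1 := pow_le_one₀ (norm_nonneg _) hv
    have h2 : ‖u‖ * ‖u ^ j - v ^ j‖ ≤ ‖u ^ j - v ^ j‖ := mul_le_of_le_one_left (norm_nonneg _) hu
    have h3 : ‖u - v‖ * ‖v‖ ^ j ≤ ‖u - v‖ := mul_le_of_le_one_right (norm_nonneg _) h1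
    push_cast
    linarith

/-- A self-map with derivative close to `1` is close to the identity (Borel–Carathéodory). -/
lemma Good.dslope_close {g : ℂ → ℂ} {b ρ : ℝ} (h : Good g b) (hb : ρ ≤ b) (hρ1 : ρ < 1) {z : ℂ}
    (hz : ‖z‖ ≤ 1 / 2) : ‖dslope g 0 z - b‖ ≤ 2 * (1 - ρ) := by
  have hz1 : z ∈ ball (0 : ℂ) 1 := by rw [mem_ball_zero_iff]; linarith
  have := Complex.borelCaratheodory (f := fun z => dslope g 0 z - b) (M := 1 - ρ) (R := 1) (z := z)
    (by linarith) (h.dslope_diff.sub_const _) (by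
      intro w hw
      have h1 := (Complex.re_le_norm _).trans (h.dslope_le hw)
      simp only [Set.mem_ofPred_eq, sub_re, ofReal_re]
      linarith) one_pos hz1
  simp only [h.dslope_zero, sub_self, norm_zero, zero_mul, zero_div, add_zero] at this
  refine this.trans ?_
  rw [div_le_iff₀ (by linarith)]
  nlinarith [norm_nonneg z]

/-- Composing with a self-map of derivative at least `ρ` changes the logarithmic coefficients by
`O(1 - ρ)`, by Cauchy's estimates on the circle of radius `1 / 2`. -/
lemma Good.residual {g : ℂ → ℂ} {b ρ : ℝ} (h : Good g b) (hb : ρ ≤ b) (hρ9 : 9 / 10 ≤ ρ)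
    (hρ1 : ρ < 1) {K : ℕ} {A : ℂ → ℂ} {c : Fin (K + 1) → ℂ} (hA : HasCoef (K + 1) A (toPS K c)) :
    ∃ d : Fin (K + 1) → ℂ, ‖d‖ ≤ 2 ^ K * ((1 - ρ) * (3 * K * (K + 1) * ‖c‖ + 4)) ∧ d 0 = 0 ∧
      HasCoef (K + 1) (fun z => A (g z) + Complex.log (dslope g 0 z / b)) (toPS K (c + d)) := by
  have hb0 := h.pos
  have hbc : (b : ℂ) ≠ 0 := by exact_mod_cast hb0.ne'
  set p : Polynomial ℂ := (toPS K c).trunc (K + 1) with hp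
  have hpe : ∀ z, p.eval z = ∑ i ∈ Finset.range (K + 1), c (Fin.ofNat (K + 1) i) * z ^ i := fun z => by
    rw [hp, eval_trunc]; simp [toPS]
  set H : ℂ → ℂ := fun z => (p.eval (g z) - p.eval z) + Complex.log (1 + (dslope g 0 z / b - 1)) with hH
  have hu : ∀ z : ℂ, ‖z‖ ≤ 1 / 2 → ‖dslope g 0 z / b - 1‖ ≤ 2 * (1 - ρ) / ρ := by
    intro z hz
    have e : dslope g 0 z / b - 1 = (dslope g 0 z - b) / b := by field_simp
    rw [e, norm_div, norm_real, Real.norm_of_nonneg hb0.le]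
    have h1 := h.dslope_close hb hρ1 hz
    have : 0 < ρ := by linarith
    gcongr
  have hu2 : 2 * (1 - ρ) / ρ ≤ 1 / 2 := by rw [div_le_iff₀ (by linarith)]; linarith
  have hsub : ∀ z : ℂ, ‖z‖ ≤ 1 / 2 → z ∈ ball (0 : ℂ) 1 := fun z hz => by
    rw [mem_ball_zero_iff]; linarith
  have hcb : closedBall (0 : ℂ) (1 / 2) ⊆ ball 0 1 := fun z hz => hsub z (by simpa using hz)
  have hHd : ∀ z : ℂ, ‖z‖ ≤ 1 / 2 → DifferentiableAt ℂ H z := by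
    intro z hz
    have h1 : DifferentiableAt ℂ g z := h.diff.differentiableAt (isOpen_ball.mem_nhds (hsub z hz))
    have h2 : DifferentiableAt ℂ (dslope g 0) z :=
      h.dslope_diff.differentiableAt (isOpen_ball.mem_nhds (hsub z hz))
    have h3 : 1 + (dslope g 0 z / b - 1) ∈ slitPlane := by
      refine mem_slitPlane_of_norm_lt_one ?_
      linarith [hu z hz]
    have h4 : DifferentiableAt ℂ (fun z => 1 + (dslope g 0 z / b - 1)) z := by fun_prop
    have h5 := h4.clog h3
    have h6 : DifferentiableAt ℂ (fun z => p.eval (g z) - p.eval z) z :=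
      (p.differentiable.differentiableAt.comp z h1).sub p.differentiable.differentiableAt
    exact h6.add h5
  have hHb : ∀ z : ℂ, ‖z‖ ≤ 1 / 2 → ‖H z‖ ≤ (1 - ρ) * (3 * K * (K + 1) * ‖c‖ + 4) := by
    intro z hz
    have h1 : ‖g z‖ ≤ 1 := (h.maps z (hsub z hz)).le
    have h2 : ‖g z - z‖ ≤ 3 * (1 - ρ) := by
      have e : g z - z = z * ((dslope g 0 z - b) - ((1 - b : ℝ) : ℂ)) := by
        rw [h.eq_mul_dslope z]; push_cast; ring
      rw [e, norm_mul]
      have h3 := h.dslope_close hb hρ1 hz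
      have h4 : ‖(dslope g 0 z - b) - ((1 - b : ℝ) : ℂ)‖ ≤ 3 * (1 - ρ) := by
        refine (norm_sub_le _ _).trans ?_
        rw [norm_real, Real.norm_of_nonneg (by linarith [h.le_one])]
        linarith
      nlinarith [norm_nonneg z, norm_nonneg ((dslope g 0 z - b) - ((1 - b : ℝ) : ℂ))]
    have h3 : ‖p.eval (g z) - p.eval z‖ ≤ (1 - ρ) * (3 * K * (K + 1) * ‖c‖) := by
      rw [hpe, hpe, ← Finset.sum_sub_distrib]
      refine (norm_sum_le _ _).trans ?_
      have : ∀ i ∈ Finset.range (K + 1), ‖c (Fin.ofNat (K + 1) i) * g z ^ i -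
          c (Fin.ofNat (K + 1) i) * z ^ i‖ ≤ ‖c‖ * (K * (3 * (1 - ρ))) := by
        intro i hi
        rw [← mul_sub, norm_mul]
        have h4 := norm_pow_sub_pow_le' h1 (by linarith : ‖z‖ ≤ 1) i
        have h5 : (i : ℝ) ≤ K := by exact_mod_cast Nat.lt_succ_iff.1 (Finset.mem_range.1 hi)
        have h6 : (i : ℝ) * ‖g z - z‖ ≤ K * (3 * (1 - ρ)) :=
          mul_le_mul h5 h2 (norm_nonneg _) (Nat.cast_nonneg _)
        exact mul_le_mul (norm_le_pi_norm c _) (h4.trans h6) (norm_nonneg _) (norm_nonneg _)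
      refine (Finset.sum_le_card_nsmul _ _ _ this).trans (le_of_eq ?_)
      simp
      ring
    have h4 : ‖Complex.log (1 + (dslope g 0 z / b - 1))‖ ≤ (1 - ρ) * 4 := by
      refine (Complex.norm_log_one_add_half_le_self ((hu z hz).trans hu2)).trans ?_
      have h5 := hu z hz
      have h6 : 2 * (1 - ρ) / ρ ≤ 8 / 3 * (1 - ρ) := by
        rw [div_le_iff₀ (by linarith)]; nlinarith
      linarith
    calc ‖H z‖ ≤ _ := norm_add_le _ _
      _ ≤ _ := add_le_add h3 h4
      _ = _ := by ring
  have hHan : AnalyticAt ℂ H 0 := by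
    have : DifferentiableOn ℂ H (ball 0 (1 / 2)) := fun z hz =>
      (hHd z (by simpa using (mem_ball_zero_iff.1 hz).le)).differentiableWithinAt
    exact this.analyticAt (ball_mem_nhds _ (by norm_num))
  have hHcl : DiffContOnCl ℂ H (ball 0 (1 / 2)) := by
    refine DifferentiableOn.diffContOnCl_ball (U := closedBall 0 (1 / 2)) ?_ subset_rfl
    exact fun z hz => (hHd z (by simpa using hz)).differentiableWithinAt
  have hH0 : H 0 = 0 := by
    simp [hH, h.zero, h.der.deriv, div_self hbc]
  have hC0 : 0 ≤ (1 - ρ) * (3 * K * (K + 1) * ‖c‖ + 4) :=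
    mul_nonneg (by linarith) (by positivity)
  refine ⟨fun k => iteratedDeriv k H 0 / (k : ℕ).factorial, ?_, by simp [hH0], ?_⟩
  · refine (pi_norm_le_iff_of_nonneg (by positivity)).2 fun k => ?_
    have h1 := Complex.norm_iteratedDeriv_le_of_forall_mem_sphere_norm_le (k : ℕ)
      (by norm_num : (0 : ℝ) < 1 / 2) hHcl (C := (1 - ρ) * (3 * K * (K + 1) * ‖c‖ + 4))
      (fun z hz => hHb z (by simpa using (mem_sphere_zero_iff_norm.1 hz).le))
    have hf : (0 : ℝ) < (k : ℕ).factorial := by exact_mod_cast Nat.factorial_pos _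
    rw [norm_div, Complex.norm_natCast, div_le_iff₀ hf]
    refine h1.trans ?_
    rw [one_div, inv_pow, div_inv_eq_mul]
    have h2 : (2 : ℝ) ^ (k : ℕ) ≤ 2 ^ K := pow_le_pow_right₀ (by norm_num) (Nat.lt_succ_iff.1 k.2)
    calc _ = (2 : ℝ) ^ (k : ℕ) * (((1 - ρ) * (3 * K * (K + 1) * ‖c‖ + 4)) * (k : ℕ).factorial) := by ring
      _ ≤ 2 ^ K * (((1 - ρ) * (3 * K * (K + 1) * ‖c‖ + 4)) * (k : ℕ).factorial) := by gcongr
      _ = _ := by ring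
  · have hg0 : Tendsto g (𝓝 0) (𝓝 0) := by
      have := h.der.continuousAt.tendsto
      rwa [h.zero] at this
    have hgO : g =O[𝓝 0] (fun z => z) := by
      have := h.der.differentiableAt.isBigO_sub
      simpa [h.zero] using this
    have hR : HasCoef (K + 1) (fun z => A (g z) - p.eval (g z)) 0 := by
      have h1 := (IsBigO.comp_tendsto hA hg0).trans (hgO.pow (K + 1))
      unfold HasCoef
      simpa [Function.comp_def] using h1
    have h2 := (hR.add (HasCoef.of_poly (K + 1) p)).add (HasCoef.of_analytic (K + 1) hHan)
    refine (h2.congr ?_).of_coeff ?_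
    · refine Eventually.of_forall fun z => ?_
      simp only [hH]
      rw [add_sub_cancel]
      ring
    · intro k hk
      have hk' : k % (K + 1) = k := Nat.mod_eq_of_lt hk
      simp [toPS, hp, PowerSeries.coeff_trunc, hk', hk]

/-- The logarithmic coefficients of a univalent self-map are limits of those of Koebe chains of
total length at most `-log b`. -/
lemma Good.approx {f : ℂ → ℂ} {b : ℝ} (h : Good f b) {K : ℕ} (hK : 1 ≤ K) {c : Fin (K + 1) → ℂ}
    (hc : LogRel K f b c) (hc0 : c 0 = 0) {η : ℝ} (hη : 0 < η) :
    ∃ a : ℝ, 1 - η < a ∧ a < 1 ∧ ∃ l : List ℂ, (∀ x ∈ l, ‖x‖ = 1) ∧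
      l.length * (1 - a) ≤ -Real.log b ∧ ‖chainV K a l - c‖ < η := by
  obtain ⟨B, hB, hBs⟩ := stepV_norm_le K
  set R := Real.exp (B * (-Real.log b)) with hR
  have hcont : ContinuousAt (fun ρ : ℝ => 2 * √ρ / (1 + ρ)) 1 := by
    refine ContinuousAt.div ?_ ?_ (by norm_num)
    · exact (Real.continuous_sqrt.const_mul 2 : Continuous fun ρ => 2 * √ρ).continuousAt
    · fun_prop
  have t1 : Tendsto (fun ρ : ℝ => 2 * √ρ / (1 + ρ)) (𝓝[<] 1) (𝓝 1) := by
    have := hcont.tendsto.mono_left (nhdsWithin_le_nhds (s := Set.Iio 1))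
    simpa [show (2 : ℝ) / (1 + 1) = 1 by norm_num] using this
  have t2 : Tendsto (fun ρ : ℝ => 2 ^ K * ((1 - ρ) * (3 * K * (K + 1) * R + 4))) (𝓝[<] 1) (𝓝 0) := by
    have : ContinuousAt (fun ρ : ℝ => 2 ^ K * ((1 - ρ) * (3 * K * (K + 1) * R + 4))) 1 := by fun_prop
    have := this.tendsto.mono_left (nhdsWithin_le_nhds (s := Set.Iio 1))
    simpa using this
  have t3 : ∀ᶠ ρ : ℝ in 𝓝[<] 1, 9 / 10 < ρ :=
    nhdsWithin_le_nhds (lt_mem_nhds (by norm_num : (9 / 10 : ℝ) < 1))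
  obtain ⟨ρ, e1, e2, e3, e4, e5⟩ := ((t1.eventually (lt_mem_nhds (by linarith : 1 - η < 1))).and
    ((t1.eventually (lt_mem_nhds (by norm_num : (1 / 2 : ℝ) < 1))).and
    ((t2.eventually (gt_mem_nhds hη)).and
    (t3.and
    (self_mem_nhdsWithin : ∀ᶠ ρ : ℝ in 𝓝[<] 1, ρ < 1))))).exists
  have e5 : ρ < 1 := e5
  have e4 : 9 / 10 < ρ := e4
  generalize ha : 2 * √ρ / (1 + ρ) = a at e1 e2
  have ha0 : 0 < a := by linarith
  have ha1 : a < 1 := by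
    have hqq : √ρ ^ 2 = ρ := Real.sq_sqrt (by linarith)
    have : √ρ < 1 := by nlinarith [Real.sqrt_nonneg ρ]
    rw [← ha, div_lt_one (by positivity)]; nlinarith [mul_pos (sub_pos.2 this) (sub_pos.2 this)]
  obtain ⟨l, hl, g, b', hg, hρb, hab, hfg⟩ := h.chain (by linarith) e5 ha.symm
  have hlen : l.length * (1 - a) ≤ -Real.log b := by
    have h1 : b ≤ a ^ l.length := by
      rw [← hab]; exact mul_le_of_le_one_right (by positivity) hg.le_one
    have h2 := Real.log_le_log h.pos h1
    rw [Real.log_pow] at h2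
    have h3 := Real.log_le_sub_one_of_pos ha0
    nlinarith [mul_le_mul_of_nonneg_left h3 (Nat.cast_nonneg (α := ℝ) l.length)]
  refine ⟨a, e1, ha1, l, hl, hlen, ?_⟩
  have hRc : ‖chainV K a l‖ ≤ R := by
    have h1 := chainV_bound hB hBs e2.le ha1.le l hl
    have h2 : Real.exp (B * (l.length * (1 - a))) ≤ R :=
      Real.exp_le_exp.2 (mul_le_mul_of_nonneg_left hlen hB)
    linarith
  obtain ⟨A, hA, hΩ⟩ := logRel_chainF K ha0 l
  obtain ⟨d, hd, hd0, hdA⟩ := hg.residual hρb e4.le e5 hA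
  have hbc' : (b' : ℂ) ≠ 0 := by exact_mod_cast hg.pos.ne'
  have hch : LogRel K f b (chainV K a l + d) := by
    refine ⟨_, hdA, ?_⟩
    have hg0 : Tendsto g (𝓝 0) (𝓝 0) := by
      have := hg.der.continuousAt.tendsto
      rwa [hg.zero] at this
    filter_upwards [hg0.eventually hΩ, isOpen_ball.mem_nhds zero_mem_disk] with z hz hz1
    have hne : dslope g 0 z / b' ≠ 0 := div_ne_zero (hg.dslope_ne hz1) hbc'
    rw [hfg z hz1, hz, Complex.exp_add, Complex.exp_log hne, ← hab]
    nth_rewrite 1 [hg.eq_mul_dslope z]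
    push_cast
    field_simp
  have hzero : (chainV K a l) 0 = 0 := (chainV_first hK e2.le ha1.le l hl).2
  have hbc : (b : ℂ) ≠ 0 := by exact_mod_cast h.pos.ne'
  have heq := hch.unique hbc hc (by simp [hzero, hd0]) hc0
  rw [← heq, sub_add_cancel_left, norm_neg]
  refine (hd.trans ?_).trans_lt e3
  have : 0 ≤ 1 - ρ := by linarith
  gcongr

lemma LogRel.rescale {K : ℕ} {Ω : ℂ → ℂ} {w : ℂ} {c : Fin (K + 1) → ℂ} (h : LogRel K Ω w c)
    (r m : ℂ) : LogRel K (fun z => Ω (r * z) / m) (w * r / m)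
      (fun k => r ^ (k : ℕ) * c k) := by
  obtain ⟨A, hA, hΩ⟩ := h
  have t : Tendsto (fun z : ℂ => r * z) (𝓝 0) (𝓝 0) := by
    have : Continuous (fun z : ℂ => r * z) := by fun_prop
    simpa using this.tendsto 0
  refine ⟨fun z => A (r * z), ?_, ?_⟩
  · refine HasCoef.of_poly_sub (((toPS K c).trunc (K + 1)).comp (Polynomial.C r * Polynomial.X)) ?_ ?_
    · have h1 := IsBigO.comp_tendsto hA t
      have h2 : (fun z : ℂ => (r * z) ^ (K + 1)) =O[𝓝 0] fun z => z ^ (K + 1) := by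
        simp only [mul_pow]
        exact (isBigO_refl _ _).const_mul_left _
      have h3 := h1.trans h2
      simpa [Function.comp_def, Polynomial.eval_comp] using h3
    · intro k hk
      have hk' : k % (K + 1) = k := Nat.mod_eq_of_lt hk
      rw [Polynomial.comp_C_mul_X_coeff]
      simp [PowerSeries.coeff_trunc, hk, toPS, hk', mul_comm]
  · filter_upwards [t.eventually hΩ] with z hz
    rw [hz]; ring

/-- The principle of monotone functionals on the class `𝒮`. The dilations `f (r z) / (M + 1)` are
univalent self-maps of the disk, to which `Good.approx` and `chain_bound` apply; then `r → 1`. -/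
theorem classS_bound {f : ℂ → ℂ} (hfa : AnalyticOnNhd ℂ f (ball (0 : ℂ) 1))
    (hfi : Set.InjOn f (ball (0 : ℂ) 1)) (hf0 : f 0 = 0) (hf1 : deriv f 0 = 1)
    {K : ℕ} (hK : 1 ≤ K) (Ψ : ℝ × (Fin (K + 1) → ℂ) → ℝ) (hΨ : ContDiff ℝ 1 Ψ)
    (hD : ∀ s : ℝ, 0 ≤ s → s ≤ 1 → ∀ x : ℂ, ‖x‖ = 1 → ∀ c : Fin (K + 1) → ℂ,
      ‖c (Fin.ofNat (K + 1) 1)‖ ≤ 3 →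
      ∃ D : ℝ, 0 ≤ D ∧ HasDerivAt (fun r : ℝ => Ψ (s - r * s, c + r • ellV K x c)) D 0)
    (h0 : ∀ s : ℝ, 0 ≤ s → s ≤ 1 → Ψ (s, 0) ≤ 0) (c : Fin (K + 1) → ℂ)
    (hc : LogRel K f 1 c) (hc0 : c 0 = 0) : Ψ (1, c) ≤ 0 := by
  have key : ∀ r : ℝ, 0 < r → r < 1 → Ψ (1, fun k => (r : ℂ) ^ (k : ℕ) * c k) ≤ 0 := by
    intro r hr0 hr1
    have hcb : closedBall (0 : ℂ) r ⊆ ball 0 1 := closedBall_subset_ball hr1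
    obtain ⟨M, hM⟩ := (isCompact_closedBall (0 : ℂ) r).exists_bound_of_continuousOn
      (hfa.continuousOn.mono hcb)
    have hM0 : 0 ≤ M := (norm_nonneg _).trans (hM 0 (by simp [hr0.le]))
    have hMc : ((M + 1 : ℝ) : ℂ) ≠ 0 := by exact_mod_cast (by positivity : M + 1 ≠ 0)
    have hrc : (r : ℂ) ≠ 0 := by exact_mod_cast hr0.ne'
    have hmem : ∀ z ∈ ball (0 : ℂ) 1, (r : ℂ) * z ∈ closedBall (0 : ℂ) r := fun z hz => by
      rw [mem_ball_zero_iff] at hz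
      rw [mem_closedBall_zero_iff, norm_mul, norm_real, Real.norm_of_nonneg hr0.le]
      nlinarith
    have hgood : Good (fun z => f (r * z) / ((M + 1 : ℝ) : ℂ)) (r / (M + 1)) := by
      refine ⟨?_, ?_, ?_, by simp [hf0], ?_, by positivity⟩
      · refine DifferentiableOn.div_const (hfa.differentiableOn.comp
          (by fun_prop : DifferentiableOn ℂ (fun z : ℂ => (r : ℂ) * z) (ball 0 1)) ?_) _
        exact fun z hz => hcb (hmem z hz)
      · intro z hz z' hz' he
        have h1 := (div_left_inj' hMc).1 he
        exact mul_left_cancel₀ hrc (hfi (hcb (hmem z hz)) (hcb (hmem z' hz')) h1)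
      · intro z hz
        rw [norm_div, norm_real, Real.norm_of_nonneg (by positivity), div_lt_one (by positivity)]
        linarith [hM _ (hmem z hz)]
      · have h1 : HasDerivAt f 1 ((r : ℂ) * 0) := by
          rw [mul_zero, ← hf1]
          exact (hfa 0 zero_mem_disk).differentiableAt.hasDerivAt
        have h2 := (h1.comp (0 : ℂ) ((hasDerivAt_id (0 : ℂ)).const_mul (r : ℂ))).div_const ((M + 1 : ℝ) : ℂ)
        refine h2.congr_deriv ?_
        push_cast
        ring
    have hrel := hc.rescale (r : ℂ) ((M + 1 : ℝ) : ℂ)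
    refine chain_bound hK Ψ hΨ hD h0 _ (-Real.log (r / (M + 1))) ?_
    intro η hη
    refine hgood.approx hK ?_ (by simp [hc0]) hη
    convert hrel using 1
    push_cast
    ring
  have hcont : Continuous fun r : ℝ => Ψ (1, fun k => (r : ℂ) ^ (k : ℕ) * c k) := by
    refine hΨ.continuous.comp (continuous_const.prodMk (continuous_pi fun k => ?_))
    exact ((Complex.continuous_ofReal.pow _).mul continuous_const)
  have t := (hcont.tendsto 1).mono_left (nhdsWithin_le_nhds (s := Set.Iio 1))
  simp only [Complex.ofReal_one, one_pow, one_mul] at t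
  refine le_of_tendsto t ?_
  have h1 : ∀ᶠ r : ℝ in 𝓝[<] 1, 0 < r := nhdsWithin_le_nhds (lt_mem_nhds one_pos)
  filter_upwards [h1, self_mem_nhdsWithin] with r hr hr1
  exact key r hr hr1

end

/-! ### Milin's inequality -/

noncomputable section
open Filter Topology

/-- The `k`-th component of the vector field `ellV`, for an infinite sequence `q` of coefficients:
`k q_k + 2 ∑_{j<k} j q_j x^{k-j} + 2 x^k` for `k ≥ 1`. -/
def lN (x : ℂ) (q : ℕ → ℂ) (k : ℕ) : ℂ :=
  ∑ j ∈ Finset.range (k + 1), q j * (x ^ (k - j) *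
    ((j * (if k - j = 0 then 1 else 2) : ℝ) : ℂ)) + x ^ k * ((if k = 0 then 0 else 2 : ℝ) : ℂ)

/-- The partial sum `∑_{j ≤ k} j q_j x̄^j`. -/
def bN (x : ℂ) (q : ℕ → ℂ) (k : ℕ) : ℂ :=
  ∑ j ∈ Finset.range (k + 1), j * q j * (starRingEnd ℂ) x ^ j

lemma bN_zero (x : ℂ) (q : ℕ → ℂ) : bN x q 0 = 0 := by simp [bN]

lemma mul_conj_of_norm_one {x : ℂ} (hx : ‖x‖ = 1) : x * (starRingEnd ℂ) x = 1 := by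
  rw [Complex.mul_conj, Complex.normSq_eq_norm_sq, hx]; simp

lemma bN_succ_sub {x : ℂ} (hx : ‖x‖ = 1) (q : ℕ → ℂ) (k : ℕ) :
    ((k + 1 : ℕ) : ℂ) * q (k + 1) = x ^ (k + 1) * (bN x q (k + 1) - bN x q k) := by
  have h := mul_conj_of_norm_one hx
  have h2 : x ^ (k + 1) * (starRingEnd ℂ) x ^ (k + 1) = 1 := by rw [← mul_pow, h, one_pow]
  rw [bN, Finset.sum_range_succ, ← bN]
  linear_combination (-((k + 1 : ℕ) : ℂ) * q (k + 1)) * h2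

lemma lN_aux {x : ℂ} (q : ℕ → ℂ) (k : ℕ) :
    lN x q (k + 1) = ((k + 1 : ℕ) : ℂ) * q (k + 1) + 2 * x ^ (k + 1) +
      2 * ∑ j ∈ Finset.range (k + 1), x ^ (k + 1 - j) * (j * q j) := by
  rw [lN, Finset.sum_range_succ, Finset.mul_sum]
  have : ∀ j ∈ Finset.range (k + 1), q j * (x ^ (k + 1 - j) *
      ((j * (if k + 1 - j = 0 then 1 else 2) : ℝ) : ℂ)) = 2 * (x ^ (k + 1 - j) * (j * q j)) := by
    intro j hj
    have hj := Finset.mem_range.1 hj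
    rw [if_neg (by omega)]
    push_cast
    ring
  rw [Finset.sum_congr rfl this]
  simp
  ring

lemma lN_succ {x : ℂ} (hx : ‖x‖ = 1) (q : ℕ → ℂ) (k : ℕ) :
    lN x q (k + 1) = x ^ (k + 1) * (bN x q (k + 1) + bN x q k + 2) := by
  have h := mul_conj_of_norm_one hx
  rw [lN_aux, bN_succ_sub hx]
  have : ∑ j ∈ Finset.range (k + 1), x ^ (k + 1 - j) * (j * q j) = x ^ (k + 1) * bN x q k := by
    rw [bN, Finset.mul_sum]
    refine Finset.sum_congr rfl fun j hj => ?_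
    have hj := Finset.mem_range.1 hj
    have e : x ^ (k + 1) = x ^ (k + 1 - j) * x ^ j := by rw [← pow_add]; congr 1; omega
    have h2 : x ^ j * (starRingEnd ℂ) x ^ j = 1 := by rw [← mul_pow, h, one_pow]
    rw [e]
    linear_combination (-(x ^ (k + 1 - j)) * j * q j) * h2
  rw [this]; ring

lemma ofNat_val {K k : ℕ} (hk : k ≤ K) : ((Fin.ofNat (K + 1) k : Fin (K + 1)) : ℕ) = k :=
  Nat.mod_eq_of_lt (by omega)

lemma ellV_ofNat {K k : ℕ} (hk : k ≤ K) (x : ℂ) (c : Fin (K + 1) → ℂ) :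
    ellV K x c (Fin.ofNat (K + 1) k) = lN x (fun j => c (Fin.ofNat (K + 1) j)) k := by
  unfold ellV lN
  rw [ofNat_val hk]

lemma hasDerivAt_coord {K k : ℕ} (hk : k ≤ K) (x : ℂ) (c : Fin (K + 1) → ℂ) :
    HasDerivAt (fun r : ℝ => (c + r • ellV K x c) (Fin.ofNat (K + 1) k))
      (lN x (fun j => c (Fin.ofNat (K + 1) j)) k) 0 := by
  rw [← ellV_ofNat hk]
  have h := ((hasDerivAt_id (0 : ℝ)).smul_const (ellV K x c (Fin.ofNat (K + 1) k))).const_add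
    (c (Fin.ofNat (K + 1) k))
  refine (h.congr_deriv (by simp)).congr_of_eventuallyEq (Eventually.of_forall fun r => ?_)
  simp

lemma hasDerivAt_coord_sq {K k : ℕ} (hk : k ≤ K) (x : ℂ) (c : Fin (K + 1) → ℂ) :
    HasDerivAt (fun r : ℝ => ‖(c + r • ellV K x c) (Fin.ofNat (K + 1) k)‖ ^ 2)
      (2 * ((starRingEnd ℂ) (c (Fin.ofNat (K + 1) k)) *
        lN x (fun j => c (Fin.ofNat (K + 1) j)) k).re) 0 := by
  have h := (hasDerivAt_coord hk x c).norm_sq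
  refine h.congr_deriv ?_
  rw [Complex.inner]
  simp [mul_comm]

lemma hasDerivAt_time (s : ℝ) (p : Polynomial ℝ) :
    HasDerivAt (fun r : ℝ => p.eval (s - r * s)) (-(s * p.derivative.eval s)) 0 := by
  have h1 : HasDerivAt (fun r : ℝ => s - r * s) (-s) 0 := by
    have := ((hasDerivAt_id (0 : ℝ)).mul_const s).const_sub s
    simpa using this
  have h2 : HasDerivAt (fun t => p.eval t) (p.derivative.eval s) (s - 0 * s) := by
    simpa using p.hasDerivAt s
  refine (h2.comp (0 : ℝ) h1).congr_deriv ?_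
  ring

/-- Summation by parts turns the derivative of `milinPhi` along the flow, in which `b` are the
partial sums `bN`, into a combination of squares with coefficients `y`; the boundary term vanishes
for the weights of `exists_weights`. -/
lemma telescope_id (n : ℕ) (τ y : ℕ → ℝ) (b : ℕ → ℂ) (hb : b 0 = 0)
    (h : ∀ k < n, τ (k + 1) = τ (k + 2) + (y (k + 1) + y (k + 2))) :
    ∑ k ∈ Finset.range n, (-(y (k + 1)) * (‖b (k + 1) - b k‖ ^ 2 - 4) +
      τ (k + 1) * (2 * ((starRingEnd ℂ) (b (k + 1) - b k) * (b (k + 1) + b k + 2)).re)) =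
    ∑ k ∈ Finset.range n, y (k + 1) * ‖b (k + 1) + b k + 2‖ ^ 2 +
      2 * (τ (n + 1) + y (n + 1)) * (‖b n‖ ^ 2 + 2 * (b n).re) := by
  induction n with
  | zero => simp [hb]
  | succ n ih =>
    rw [Finset.sum_range_succ, Finset.sum_range_succ, ih fun k hk => h k (by omega),
      h n (by omega)]
    simp only [← Complex.normSq_eq_norm_sq, Complex.normSq_apply]
    simp
    ring

/-- De Branges' functional `∑_{k=1}^{m+1} τ_k(s) (k |c_k|² - 4 / k)` at `w = (s, c)`. -/
def milinPhi (m : ℕ) (τ : ℕ → Polynomial ℝ) (w : ℝ × (Fin (m + 1 + 1) → ℂ)) : ℝ :=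
  ∑ k ∈ Finset.range (m + 1), (τ (k + 1)).eval w.1 *
    (((k : ℝ) + 1) * ‖w.2 (Fin.ofNat (m + 1 + 1) (k + 1))‖ ^ 2 - 4 / ((k : ℝ) + 1))

lemma contDiff_coord {K : ℕ} (k : Fin (K + 1)) :
    ContDiff ℝ 1 fun w : ℝ × (Fin (K + 1) → ℂ) => w.2 k :=
  (contDiff_apply ℝ ℂ k).comp contDiff_snd

lemma contDiff_time {K : ℕ} (p : Polynomial ℝ) :
    ContDiff ℝ 1 fun w : ℝ × (Fin (K + 1) → ℂ) => p.eval w.1 :=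
  ContDiff.comp (g := fun t => p.eval t) (by
    simpa [Polynomial.coe_aeval_eq_eval] using Polynomial.contDiff_aeval (𝕜 := ℝ) p 1) contDiff_fst

lemma contDiff_milinPhi (m : ℕ) (τ : ℕ → Polynomial ℝ) : ContDiff ℝ 1 (milinPhi m τ) := by
  refine ContDiff.sum fun k _ => (contDiff_time _).mul ?_
  exact (contDiff_const.mul ((contDiff_coord _).norm_sq ℝ)).sub contDiff_const

/-- The derivative of the functional along the flow, as a sum of squares weighted by the `y_k`. -/
lemma hasDerivAt_milinPhi (m : ℕ) (τ y : ℕ → Polynomial ℝ)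
    (h1 : ∀ k ≤ m + 1, τ k = τ (k + 1) + (y k + y (k + 1))) (h2 : τ (m + 2) = 0) (h3 : y (m + 2) = 0)
    (h4 : ∀ k ≤ m + 2, Polynomial.X * Polynomial.derivative (τ k) = (k : Polynomial ℝ) * y k)
    (s : ℝ) {x : ℂ} (hx : ‖x‖ = 1) (c : Fin (m + 1 + 1) → ℂ) :
    HasDerivAt (fun r : ℝ => milinPhi m τ (s - r * s, c + r • ellV (m + 1) x c))
      (∑ k ∈ Finset.range (m + 1), (y (k + 1)).eval s *
        ‖bN x (fun j => c (Fin.ofNat (m + 1 + 1) j)) (k + 1) +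
          bN x (fun j => c (Fin.ofNat (m + 1 + 1) j)) k + 2‖ ^ 2) 0 := by
  set q : ℕ → ℂ := fun j => c (Fin.ofNat (m + 1 + 1) j) with hq
  have key : ∀ k ∈ Finset.range (m + 1), HasDerivAt (fun r : ℝ => (τ (k + 1)).eval (s - r * s) *
      (((k : ℝ) + 1) * ‖(c + r • ellV (m + 1) x c) (Fin.ofNat (m + 1 + 1) (k + 1))‖ ^ 2 - 4 / ((k : ℝ) + 1)))
      (-((y (k + 1)).eval s) * (‖bN x q (k + 1) - bN x q k‖ ^ 2 - 4) +
      (τ (k + 1)).eval s * (2 * ((starRingEnd ℂ) (bN x q (k + 1) - bN x q k) *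
        (bN x q (k + 1) + bN x q k + 2)).re)) 0 := by
    intro k hk
    have hk := Finset.mem_range.1 hk
    have d1 := hasDerivAt_time s (τ (k + 1))
    have d2 := ((hasDerivAt_coord_sq (by omega : k + 1 ≤ m + 1) x c).const_mul ((k : ℝ) + 1)).sub_const
      (4 / ((k : ℝ) + 1))
    refine (d1.mul d2).congr_deriv ?_
    have e1 : s * (Polynomial.derivative (τ (k + 1))).eval s = ((k : ℝ) + 1) * (y (k + 1)).eval s := by
      have := congrArg (Polynomial.eval s) (h4 (k + 1) (by omega))
      simpa using this
    have e2 : ((k : ℝ) + 1) * ‖q (k + 1)‖ = ‖bN x q (k + 1) - bN x q k‖ := by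
      have := congrArg norm (bN_succ_sub hx q k)
      rw [norm_mul, norm_mul, norm_pow, hx, Complex.norm_natCast] at this
      push_cast at this
      simpa using this
    have e3 : ((k : ℝ) + 1) * ((starRingEnd ℂ) (q (k + 1)) * lN x q (k + 1)).re =
        ((starRingEnd ℂ) (bN x q (k + 1) - bN x q k) * (bN x q (k + 1) + bN x q k + 2)).re := by
      rw [lN_succ hx]
      have e4 := congrArg (starRingEnd ℂ) (bN_succ_sub hx q k)
      rw [map_mul, map_mul, Complex.conj_natCast, map_pow] at e4
      have e5 : x ^ (k + 1) * (starRingEnd ℂ) x ^ (k + 1) = 1 := by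
        rw [← mul_pow, mul_conj_of_norm_one hx, one_pow]
      rw [← Complex.re_ofReal_mul]
      congr 1
      push_cast at e4 ⊢
      linear_combination (x ^ (k + 1) * (bN x q (k + 1) + bN x q k + 2)) * e4 +
        (starRingEnd ℂ) (bN x q (k + 1) - bN x q k) * (bN x q (k + 1) + bN x q k + 2) * e5
    have hk0 : ((k : ℝ) + 1) ≠ 0 := by positivity
    rw [e1, ← e2, ← e3]
    simp only [zero_mul, sub_zero, zero_smul, add_zero]
    change -(((k : ℝ) + 1) * (y (k + 1)).eval s) * (((k : ℝ) + 1) * ‖q (k + 1)‖ ^ 2 - _) +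
      _ * (((k : ℝ) + 1) * (2 * ((starRingEnd ℂ) (q (k + 1)) * lN x q (k + 1)).re)) = _
    field_simp
  have hs := HasDerivAt.fun_sum key
  refine hs.congr_deriv ?_
  rw [telescope_id (m + 1) (fun k => (τ k).eval s) (fun k => (y k).eval s) _ (bN_zero x q)]
  · simp [h2, h3]
  · intro k hk
    have := congrArg (Polynomial.eval s) (h1 (k + 1) (by omega))
    simpa using this

/-- Milin's inequality for the class `𝒮`; here `c_k = 2 γ_k`. -/
theorem milin_le {f : ℂ → ℂ} (hfa : AnalyticOnNhd ℂ f (ball (0 : ℂ) 1))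
    (hfi : Set.InjOn f (ball (0 : ℂ) 1)) (hf0 : f 0 = 0) (hf1 : deriv f 0 = 1)
    {m : ℕ} {c : Fin (m + 1 + 1) → ℂ} (hc : LogRel (m + 1) f 1 c) (hc0 : c 0 = 0) :
    ∑ k ∈ Finset.range (m + 1), ((m : ℝ) + 1 - k) *
    (((k : ℝ) + 1) * ‖c (Fin.ofNat (m + 1 + 1) (k + 1))‖ ^ 2 - 4 / ((k : ℝ) + 1)) ≤ 0 := by
  obtain ⟨y, τ, h1, h2, h3, h4, h5, h6, -, h8, -⟩ := exists_weights m
  have := classS_bound hfa hfi hf0 hf1 (by omega : 1 ≤ m + 1) (milinPhi m τ) (contDiff_milinPhi m τ)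
    (fun s hs0 hs1 x hx c _ => ⟨_, Finset.sum_nonneg fun k _ => mul_nonneg (h6 _ _ hs0 hs1) (sq_nonneg _),
      hasDerivAt_milinPhi m τ y h1 h2 h3 h4 s hx c⟩) (by
      intro s hs0 hs1
      refine Finset.sum_nonpos fun k _ => mul_nonpos_of_nonneg_of_nonpos (h8 _ _ hs0 hs1) ?_
      have : 0 < 4 / ((k : ℝ) + 1) := by positivity
      simpa using this.le) c hc hc0
  refine le_trans (le_of_eq (Finset.sum_congr rfl fun k hk => ?_)) this
  have hk := Finset.mem_range.1 hk
  congr 1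
  rw [h5 _ (by omega)]
  push_cast
  ring

set_option maxHeartbeats 1000000 in
/-- Milin's inequality is strict when `|c_1| < 2`. With `v₀ = 4 - |c_1|²` for the given `c`, the
functional is perturbed by `κ (s (4 - |c_1|²) - (v₀ / 2) s^N)`, equal to `κ v₀ / 2 > 0` at the end
point. Along the flow the first term loses `κ s |c_1 + 2 x|²`; this loss is covered by the `y_1` term
for `s ≤ 1 - ε`, and by the growth of `-s^N` for `s ≥ 1 - ε`, where `N` is large and
`ε = 1 / (2 N)`. -/
theorem milin_lt {f : ℂ → ℂ} (hfa : AnalyticOnNhd ℂ f (ball (0 : ℂ) 1))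
    (hfi : Set.InjOn f (ball (0 : ℂ) 1)) (hf0 : f 0 = 0) (hf1 : deriv f 0 = 1)
    {m : ℕ} {c : Fin (m + 1 + 1) → ℂ} (hc : LogRel (m + 1) f 1 c) (hc0 : c 0 = 0)
    (hlt : ‖c (Fin.ofNat (m + 1 + 1) 1)‖ < 2) :
    ∑ k ∈ Finset.range (m + 1), ((m : ℝ) + 1 - k) *
    (((k : ℝ) + 1) * ‖c (Fin.ofNat (m + 1 + 1) (k + 1))‖ ^ 2 - 4 / ((k : ℝ) + 1)) < 0 := by
  obtain ⟨y, τ, h1, h2, h3, h4, h5, h6, h7, h8, h9⟩ := exists_weights m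
  set v0 : ℝ := 4 - ‖c (Fin.ofNat (m + 1 + 1) 1)‖ ^ 2 with hv0
  have hv0p : 0 < v0 := by nlinarith [norm_nonneg (c (Fin.ofNat (m + 1 + 1) 1))]
  obtain ⟨N', hN'⟩ := exists_nat_ge (100 / v0)
  set N := N' + 1 with hN
  have hNv : 100 ≤ (N : ℝ) * v0 := by
    rw [div_le_iff₀ hv0p] at hN'
    rw [hN]; push_cast; nlinarith
  have hN1 : (1 : ℝ) ≤ N := by rw [hN]; push_cast; linarith [Nat.cast_nonneg (α := ℝ) N']
  set ε : ℝ := 1 / (2 * N) with hε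
  have hε0 : 0 < ε := by positivity
  have hε1 : ε ≤ 1 := by rw [hε, div_le_one (by positivity)]; linarith
  set κ : ℝ := ε ^ m with hκ
  have hκ0 : 0 < κ := by positivity
  have hκ1 : κ ≤ 1 := pow_le_one₀ hε0.le hε1
  set Ψ : ℝ × (Fin (m + 1 + 1) → ℂ) → ℝ := fun w => milinPhi m τ w +
    κ * ((Polynomial.X : Polynomial ℝ).eval w.1 * (4 - ‖w.2 (Fin.ofNat (m + 1 + 1) 1)‖ ^ 2) -
      v0 / 2 * (Polynomial.X ^ N : Polynomial ℝ).eval w.1) with hΨ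
  have hΨc : ContDiff ℝ 1 Ψ := by
    refine (contDiff_milinPhi m τ).add (contDiff_const.mul (ContDiff.sub (ContDiff.mul (contDiff_time _) ?_)
      (contDiff_const.mul (contDiff_time _))))
    exact contDiff_const.sub ((contDiff_coord _).norm_sq ℝ)
  have := classS_bound hfa hfi hf0 hf1 (by omega : 1 ≤ m + 1) Ψ hΨc ?_ ?_ c hc hc0
  · have e : ∑ k ∈ Finset.range (m + 1), ((m : ℝ) + 1 - k) *
      (((k : ℝ) + 1) * ‖c (Fin.ofNat (m + 1 + 1) (k + 1))‖ ^ 2 - 4 / ((k : ℝ) + 1)) =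
        milinPhi m τ (1, c) := by
      refine Finset.sum_congr rfl fun k hk => ?_
      have hk := Finset.mem_range.1 hk
      congr 1
      rw [h5 _ (by omega)]
      push_cast
      ring
    rw [e]
    simp only [hΨ, Polynomial.eval_X, Polynomial.eval_pow, one_pow, ← hv0] at this
    nlinarith [mul_pos hκ0 hv0p]
  · intro s hs0 hs1 x hx c hc3
    set q : ℕ → ℂ := fun j => c (Fin.ofNat (m + 1 + 1) j) with hq
    have hc3 : ‖q 1‖ ≤ 3 := hc3
    have d1 := hasDerivAt_milinPhi m τ y h1 h2 h3 h4 s hx c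
    have d2 := ((hasDerivAt_time s Polynomial.X).mul
      ((hasDerivAt_coord_sq (by omega : 1 ≤ m + 1) x c).const_sub 4)).sub
      ((hasDerivAt_time s (Polynomial.X ^ N)).const_mul (v0 / 2))
    refine ⟨_, ?_, d1.add (d2.const_mul κ)⟩
    have e1 : lN x q 1 = q 1 + 2 * x := by
      rw [lN_aux]; simp
    have e2 : bN x q 1 + bN x q 0 + 2 = q 1 * (starRingEnd ℂ) x + 2 := by
      simp [bN, Finset.sum_range_succ]
    set R := ‖q 1 + 2 * x‖ ^ 2 with hR
    have e3 : ‖bN x q 1 + bN x q 0 + 2‖ ^ 2 = R := by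
      rw [e2, hR]
      congr 1
      have : q 1 + 2 * x = x * (q 1 * (starRingEnd ℂ) x + 2) := by
        linear_combination (-q 1) * mul_conj_of_norm_one hx
      rw [this, norm_mul, hx, one_mul]
    have hR25 : R ≤ 25 := by
      have : ‖q 1 + 2 * x‖ ≤ 5 := by
        refine (norm_add_le _ _).trans ?_
        rw [norm_mul, hx]; simp; linarith
      rw [hR]; nlinarith [norm_nonneg (q 1 + 2 * x)]
    have hR0 : 0 ≤ R := sq_nonneg _
    have hsum : (y 1).eval s * R ≤ ∑ k ∈ Finset.range (m + 1), (y (k + 1)).eval s *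
        ‖bN x q (k + 1) + bN x q k + 2‖ ^ 2 := by
      rw [← e3]
      exact Finset.single_le_sum (f := fun k => (y (k + 1)).eval s *
        ‖bN x q (k + 1) + bN x q k + 2‖ ^ 2) (fun k _ => mul_nonneg (h6 _ _ hs0 hs1) (sq_nonneg _))
        (Finset.mem_range.2 (Nat.succ_pos m))
    have e4 : -(s * 1) * (4 - ‖q 1‖ ^ 2) + s * (-(2 * ((starRingEnd ℂ) (q 1) * lN x q 1).re)) =
        -(s * R) := by
      have hx2 : x.re * x.re + x.im * x.im = 1 := by
        rw [← Complex.normSq_apply, Complex.normSq_eq_norm_sq, hx]; norm_num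
      rw [e1, hR]
      simp only [← Complex.normSq_eq_norm_sq, Complex.normSq_apply]
      simp
      linear_combination (4 * s) * hx2
    have e5 : s * ((N : ℝ) * s ^ (N - 1)) = N * s ^ N := by
      rw [hN]; simp [pow_succ]; ring
    simp only [zero_mul, sub_zero, zero_smul, add_zero, Polynomial.derivative_X, Polynomial.eval_one,
      Polynomial.eval_X, Polynomial.derivative_X_pow, Polynomial.eval_mul, Polynomial.eval_pow,
      Polynomial.eval_natCast, map_natCast]
    change 0 ≤ _ + κ * (-(s * 1) * (4 - ‖q 1‖ ^ 2) + s * (-(2 * ((starRingEnd ℂ) (q 1) * lN x q 1).re)) -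
      v0 / 2 * -(s * (N * s ^ (N - 1))))
    rw [e4, e5]
    refine le_trans ?_ (add_le_add_left hsum _)
    rcases le_total s (1 - ε) with hs | hs
    · have hy := h7 s hs0 hs1
      have h10 : κ ≤ (1 - s) ^ m := pow_le_pow_left₀ hε0.le (by linarith) m
      have h11 : κ * s ≤ (y 1).eval s := by
        have h12 : s * κ ≤ s * (1 - s) ^ m := mul_le_mul_of_nonneg_left h10 hs0
        have h13 : 0 ≤ s * (1 - s) ^ m := mul_nonneg hs0 (pow_nonneg (by linarith) _)
        nlinarith [mul_nonneg (Nat.cast_nonneg (α := ℝ) m) h13]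
      have h14 := mul_le_mul_of_nonneg_right h11 hR0
      have h15 : 0 ≤ κ * (v0 / 2 * (N * s ^ N)) := by positivity
      linarith
    · have h10 : s / 2 ≤ s ^ N := by
        have hB := one_add_mul_le_pow (by linarith : (-2 : ℝ) ≤ s - 1) N'
        rw [add_sub_cancel] at hB
        have h11 : (N' : ℝ) * ε ≤ 1 / 2 := by
          rw [hε, mul_one_div, div_le_div_iff₀ (by positivity) (by norm_num), hN]
          push_cast; linarith
        have h12 : 1 / 2 ≤ s ^ N' := by
          nlinarith [mul_le_mul_of_nonneg_left (by linarith : -ε ≤ s - 1) (Nat.cast_nonneg (α := ℝ) N')]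
        rw [hN, pow_succ]; nlinarith
      have h13 : s * R ≤ v0 / 2 * (N * s ^ N) := by
        have h14 : (N : ℝ) * v0 * (s / 2) ≤ N * v0 * s ^ N :=
          mul_le_mul_of_nonneg_left h10 (by positivity)
        nlinarith [mul_le_mul_of_nonneg_right hNv hs0, mul_le_mul_of_nonneg_left hR25 hs0]
      have h15 : 0 ≤ (y 1).eval s * R := mul_nonneg (h6 _ _ hs0 hs1) hR0
      have h16 := mul_nonneg hκ0.le (sub_nonneg.2 h13)
      linarith
  · intro s hs0 hs1
    have h10 : milinPhi m τ (s, 0) ≤ -(4 * s) := by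
      have h11 : ∀ k ∈ Finset.range (m + 1), (τ (k + 1)).eval s *
        (((k : ℝ) + 1) * ‖(0 : Fin (m + 1 + 1) → ℂ) (Fin.ofNat (m + 1 + 1) (k + 1))‖ ^ 2 - 4 / ((k : ℝ) + 1)) ≤ 0 := by
        intro k _
        refine mul_nonpos_of_nonneg_of_nonpos (h8 _ _ hs0 hs1) ?_
        have : 0 < 4 / ((k : ℝ) + 1) := by positivity
        simpa using this.le
      have h12 := h9 s hs0 hs1
      rw [milinPhi, Finset.sum_range_succ']
      have h13 := Finset.sum_nonpos fun k (hk : k ∈ Finset.range m) =>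
        h11 (k + 1) (Finset.mem_range.2 (by have := Finset.mem_range.1 hk; omega))
      refine (add_le_add_left h13 _).trans ?_
      simp
      linarith
    have h14 : 0 ≤ s ^ N := pow_nonneg hs0 N
    simp only [hΨ, Polynomial.eval_X, Polynomial.eval_pow, Pi.zero_apply, norm_zero]
    nlinarith [mul_nonneg (mul_nonneg hκ0.le hv0p.le) h14, mul_le_mul_of_nonneg_right hκ1 hs0]
end

/-! ### Rigidity of the extremal first coefficient -/

noncomputable section
open Filter Topology

/-- Multipliers for a triangular system: if each `T_k` dominates `w_k / 2` up to a multiple of the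
earlier `w_j`, then a suitable positive combination of the `T_k` dominates a multiple of the sum of
all `w_k`. -/
lemma exists_multipliers (C : ℕ → ℝ) (hC : ∀ k, 0 ≤ C k) (n : ℕ) :
    ∃ (μ : ℕ → ℝ) (η : ℝ), 0 < η ∧ μ 0 = 1 ∧ (∀ k, 0 < μ k) ∧ ∀ w T : ℕ → ℝ, (∀ k, 0 ≤ w k) →
      w 0 ≤ T 0 → (∀ k, 1 ≤ k → k ≤ n → w k / 2 - C k * ∑ j ∈ Finset.range k, w j ≤ T k) →
      η * ∑ k ∈ Finset.range (n + 1), w k ≤ ∑ k ∈ Finset.range (n + 1), μ k * T k := by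
  induction n with
  | zero =>
    refine ⟨fun _ => 1, 1, one_pos, rfl, fun _ => one_pos, fun w T _ h0 _ => ?_⟩
    simpa using h0
  | succ n ih =>
    obtain ⟨μ, η, hη, hμ0, hμ, H⟩ := ih
    set ν : ℝ := η / (2 * (C (n + 1) + 1)) with hν
    have hC1 := hC (n + 1)
    have hν0 : 0 < ν := by positivity
    have hνC : ν * C (n + 1) ≤ η / 2 := by
      have : ν * (C (n + 1) + 1) = η / 2 := by rw [hν]; field_simp
      nlinarith
    refine ⟨Function.update μ (n + 1) ν, min (η / 2) (ν / 2), by positivity, ?_, ?_, ?_⟩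
    · rw [Function.update_of_ne (by omega), hμ0]
    · intro k
      by_cases hk : k = n + 1
      · rw [hk, Function.update_self]; exact hν0
      · rw [Function.update_of_ne hk]; exact hμ k
    · intro w T hw h0 hT
      have h1 := H w T hw h0 fun k hk1 hk2 => hT k hk1 (by omega)
      have h2 := hT (n + 1) (by omega) le_rfl
      rw [Finset.sum_range_succ, Finset.sum_range_succ _ (n + 1), Function.update_self]
      have h3 : ∑ k ∈ Finset.range (n + 1), Function.update μ (n + 1) ν k * T k =
          ∑ k ∈ Finset.range (n + 1), μ k * T k := Finset.sum_congr rfl fun k hk => by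
        rw [Function.update_of_ne (by have := Finset.mem_range.1 hk; omega)]
      rw [h3]
      set W := ∑ k ∈ Finset.range (n + 1), w k
      have hW : 0 ≤ W := Finset.sum_nonneg fun k _ => hw k
      have h4 := mul_le_mul_of_nonneg_left h2 hν0.le
      have h5 := mul_le_mul_of_nonneg_right hνC hW
      have h6 := mul_le_mul_of_nonneg_right (min_le_left (η / 2) (ν / 2)) hW
      have h7 := mul_le_mul_of_nonneg_right (min_le_right (η / 2) (ν / 2)) (hw (n + 1))
      linarith

/-- The deviation of `k q_k` from its value `2 (q_1 / 2)^k` for a rotation of the Koebe function. -/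
def eN (q : ℕ → ℂ) (k : ℕ) : ℂ := k * q k - 2 * (q 1 / 2) ^ k

/-- The derivative of `eN q (i + 1)` along the flow. -/
def eDot (x : ℂ) (q : ℕ → ℂ) (i : ℕ) : ℂ :=
  ((i + 1 : ℕ) : ℂ) * lN x q (i + 1) - 2 * (((i + 1 : ℕ) : ℂ) * (q 1 / 2) ^ i * (lN x q 1 / 2))

lemma lN_one (x : ℂ) (q : ℕ → ℂ) : lN x q 1 = q 1 + 2 * x := by
  rw [lN_aux]; simp

lemma eN_one (q : ℕ → ℂ) : eN q 1 = 0 := by simp [eN]; ring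

lemma eDot_eq (x : ℂ) (q : ℕ → ℂ) (i : ℕ) :
    eDot x q i - ((i + 1 : ℕ) : ℂ) * eN q (i + 1) = ((i + 1 : ℕ) : ℂ) *
      (2 * ∑ j ∈ Finset.range i, x ^ (i - j) * eN q (j + 1) +
        (q 1 + 2 * x) * (∑ j ∈ Finset.range (i + 1), x ^ (i - j) * (q 1 / 2) ^ j - (q 1 / 2) ^ i)) := by
  set u := q 1 / 2 with hu
  have hq : q 1 = 2 * u := by rw [hu]; ring
  have e1 : ∑ j ∈ Finset.range (i + 1), x ^ (i + 1 - j) * (j * q j) =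
      ∑ j ∈ Finset.range i, x ^ (i - j) * eN q (j + 1) +
        2 * ∑ j ∈ Finset.range i, x ^ (i - j) * u ^ (j + 1) := by
    rw [Finset.sum_range_succ']
    simp only [Nat.cast_zero, zero_mul, mul_zero, add_zero]
    rw [Finset.mul_sum, ← Finset.sum_add_distrib]
    refine Finset.sum_congr rfl fun j _ => ?_
    rw [Nat.add_sub_add_right, eN, ← hu]
    ring
  have e2 : x * ∑ j ∈ Finset.range (i + 1), x ^ (i - j) * u ^ j = x ^ (i + 1) +
      ∑ j ∈ Finset.range i, x ^ (i - j) * u ^ (j + 1) := by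
    rw [Finset.sum_range_succ', mul_add, Finset.mul_sum, add_comm]
    congr 1
    · simp; ring
    · refine Finset.sum_congr rfl fun j hj => ?_
      have hj := Finset.mem_range.1 hj
      have : x ^ (i - j) = x * x ^ (i - (j + 1)) := by
        rw [← pow_succ']; congr 1; omega
      rw [this]; ring
  have e3 : u * ∑ j ∈ Finset.range (i + 1), x ^ (i - j) * u ^ j = u ^ (i + 1) +
      ∑ j ∈ Finset.range i, x ^ (i - j) * u ^ (j + 1) := by
    rw [Finset.sum_range_succ, mul_add, Finset.mul_sum, add_comm]
    congr 1
    · simp; ring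
    · refine Finset.sum_congr rfl fun j hj => by ring
  rw [eDot, lN_one, lN_aux, e1, eN, ← hu, hq]
  push_cast
  linear_combination (-2 * (i + 1 : ℂ)) * (e2 + e3)

/-- Along the flow, `eN q (i + 1)` grows at rate `i + 1`, up to an error controlled by the earlier
deviations and by `|q_1 + 2 x|`. -/
lemma eDot_bound {x : ℂ} (hx : ‖x‖ = 1) {q : ℕ → ℂ} (hq : ‖q 1‖ ≤ 3) (i : ℕ) :
    ‖eDot x q i - ((i + 1 : ℕ) : ℂ) * eN q (i + 1)‖ ≤ ((i : ℝ) + 1) * (i + 2) * 2 ^ (i + 1) *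
      (∑ j ∈ Finset.range i, ‖eN q (j + 1)‖ + ‖q 1 + 2 * x‖) := by
  rw [eDot_eq, norm_mul, Complex.norm_natCast]
  have hu : ‖q 1 / 2‖ ≤ 2 := by rw [norm_div]; simp; linarith
  have h1 : ‖∑ j ∈ Finset.range i, x ^ (i - j) * eN q (j + 1)‖ ≤ ∑ j ∈ Finset.range i, ‖eN q (j + 1)‖ := by
    refine norm_sum_le_of_le _ fun j _ => ?_
    rw [norm_mul, norm_pow, hx, one_pow, one_mul]
  have h2 : ‖∑ j ∈ Finset.range (i + 1), x ^ (i - j) * (q 1 / 2) ^ j - (q 1 / 2) ^ i‖ ≤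
      (i + 2) * 2 ^ i := by
    have h3 : ‖∑ j ∈ Finset.range (i + 1), x ^ (i - j) * (q 1 / 2) ^ j‖ ≤ (i + 1) * 2 ^ i := by
      refine (norm_sum_le_of_le (n := fun _ => (2 : ℝ) ^ i) _ fun j hj => ?_).trans (by simp)
      have hj := Finset.mem_range.1 hj
      rw [norm_mul, norm_pow, norm_pow, hx, one_pow, one_mul]
      exact (pow_le_pow_left₀ (norm_nonneg _) hu j).trans (pow_le_pow_right₀ (by norm_num) (by omega))
    have h4 : ‖(q 1 / 2) ^ i‖ ≤ 2 ^ i := by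
      rw [norm_pow]; exact pow_le_pow_left₀ (norm_nonneg _) hu i
    refine (norm_sub_le _ _).trans ?_
    linarith
  set E := ∑ j ∈ Finset.range i, ‖eN q (j + 1)‖ with hE
  have hE0 : 0 ≤ E := Finset.sum_nonneg fun _ _ => norm_nonneg _
  set ρ := ‖q 1 + 2 * x‖
  have hρ0 : 0 ≤ ρ := norm_nonneg _
  have h5 : ‖2 * ∑ j ∈ Finset.range i, x ^ (i - j) * eN q (j + 1) +
        (q 1 + 2 * x) * (∑ j ∈ Finset.range (i + 1), x ^ (i - j) * (q 1 / 2) ^ j - (q 1 / 2) ^ i)‖ ≤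
      2 * E + ρ * ((i + 2) * 2 ^ i) := by
    refine (norm_add_le _ _).trans (add_le_add ?_ ?_)
    · rw [norm_mul]; simp; linarith
    · rw [norm_mul]; exact mul_le_mul_of_nonneg_left h2 hρ0
  have hp : (1 : ℝ) ≤ 2 ^ i := one_le_pow₀ (by norm_num)
  have hi : (0 : ℝ) ≤ i := Nat.cast_nonneg i
  have h6 : 2 * E + ρ * ((i + 2) * 2 ^ i) ≤ (i + 2) * 2 ^ (i + 1) * (E + ρ) := by
    have h7 : (2 : ℝ) ≤ (i + 2) * 2 ^ i := by nlinarith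
    rw [pow_succ]
    nlinarith [mul_le_mul_of_nonneg_right h7 hE0, mul_nonneg hρ0 (by positivity : (0 : ℝ) ≤ (i + 2) * 2 ^ i)]
  calc _ ≤ ((i + 1 : ℕ) : ℝ) * ((i + 2) * 2 ^ (i + 1) * (E + ρ)) :=
        mul_le_mul_of_nonneg_left (h5.trans h6) (by positivity)
    _ = _ := by push_cast; ring

/-- The derivative of `s^{2i+1} |e_{i+1}|²` along the flow, bounded below in the triangular form
required by `exists_multipliers`. -/
lemma dissipation {x : ℂ} (hx : ‖x‖ = 1) {q : ℕ → ℂ} (hq : ‖q 1‖ ≤ 3) {s : ℝ} (hs0 : 0 ≤ s)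
    (hs1 : s ≤ 1) {i : ℕ} (hi : 1 ≤ i) {F : ℕ → ℝ}
    (hF : F = fun j => if j = 0 then ‖q 1 + 2 * x‖ else ‖eN q (j + 1)‖) :
    s ^ (2 * i + 1) * F i ^ 2 / 2 - 2 * (((i : ℝ) + 1) * (i + 2) * 2 ^ (i + 1)) ^ 2 * i *
      ∑ j ∈ Finset.range i, s ^ (2 * j + 1) * F j ^ 2 ≤
    -((2 * i + 1) * s ^ (2 * i + 1)) * ‖eN q (i + 1)‖ ^ 2 +
      s ^ (2 * i + 1) * (2 * ((starRingEnd ℂ) (eN q (i + 1)) * eDot x q i).re) := by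
  set C : ℝ := ((i : ℝ) + 1) * (i + 2) * 2 ^ (i + 1) with hC
  have hC0 : 0 ≤ C := by positivity
  set e := eN q (i + 1) with he
  have hFi : F i = ‖e‖ := by rw [hF]; simp [show i ≠ 0 by omega, he]
  set S := ∑ j ∈ Finset.range i, F j with hS
  have hF0 : ∀ j, 0 ≤ F j := fun j => by rw [hF]; dsimp only; split_ifs <;> exact norm_nonneg _
  have hS0 : 0 ≤ S := Finset.sum_nonneg fun j _ => hF0 j
  have hSe : ∑ j ∈ Finset.range i, ‖eN q (j + 1)‖ + ‖q 1 + 2 * x‖ = S := by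
    obtain ⟨i, rfl⟩ : ∃ i', i = i' + 1 := ⟨i - 1, by omega⟩
    rw [hS, Finset.sum_range_succ', Finset.sum_range_succ']
    simp [hF, eN_one]
  have hb := eDot_bound hx hq i
  rw [hSe, ← hC, ← he] at hb
  have hre : ((i : ℝ) + 1) * ‖e‖ ^ 2 - ‖e‖ * (C * S) ≤ ((starRingEnd ℂ) e * eDot x q i).re := by
    have h1 : (starRingEnd ℂ) e * eDot x q i = ((((i : ℝ) + 1) * ‖e‖ ^ 2 : ℝ) : ℂ) +
        (starRingEnd ℂ) e * (eDot x q i - ((i + 1 : ℕ) : ℂ) * e) := by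
      have := Complex.mul_conj e
      rw [Complex.normSq_eq_norm_sq] at this
      push_cast at this ⊢
      rw [← this]; ring
    have h2 := Complex.abs_re_le_norm ((starRingEnd ℂ) e * (eDot x q i - ((i + 1 : ℕ) : ℂ) * e))
    rw [norm_mul, RCLike.norm_conj] at h2
    have h3 := mul_le_mul_of_nonneg_left hb (norm_nonneg e)
    rw [h1, Complex.add_re, Complex.ofReal_re]
    linarith [neg_abs_le ((starRingEnd ℂ) e * (eDot x q i - ((i + 1 : ℕ) : ℂ) * e)).re]
  have hCS : S ^ 2 ≤ i * ∑ j ∈ Finset.range i, F j ^ 2 := by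
    have := sq_sum_le_card_mul_sum_sq (s := Finset.range i) (f := F)
    simpa using this
  have hs : s ^ (2 * i + 1) * ∑ j ∈ Finset.range i, F j ^ 2 ≤
      ∑ j ∈ Finset.range i, s ^ (2 * j + 1) * F j ^ 2 := by
    rw [Finset.mul_sum]
    refine Finset.sum_le_sum fun j hj => ?_
    have hj := Finset.mem_range.1 hj
    exact mul_le_mul_of_nonneg_right (pow_le_pow_of_le_one hs0 hs1 (by omega)) (sq_nonneg _)
  rw [hFi]
  set σ := s ^ (2 * i + 1)
  have hσ : 0 ≤ σ := pow_nonneg hs0 _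
  set Q := ∑ j ∈ Finset.range i, F j ^ 2
  set W := ∑ j ∈ Finset.range i, s ^ (2 * j + 1) * F j ^ 2
  have h1 : ‖e‖ ^ 2 / 2 - 2 * C ^ 2 * (i * Q) ≤ -(2 * i + 1) * ‖e‖ ^ 2 +
      2 * ((starRingEnd ℂ) e * eDot x q i).re := by
    have h2 : 2 * C ^ 2 * S ^ 2 ≤ 2 * C ^ 2 * (i * Q) := mul_le_mul_of_nonneg_left hCS (by positivity)
    nlinarith [sq_nonneg (‖e‖ - 2 * C * S)]
  have h3 := mul_le_mul_of_nonneg_left h1 hσ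
  have h4 : 2 * C ^ 2 * i * (σ * Q) ≤ 2 * C ^ 2 * i * W := mul_le_mul_of_nonneg_left hs (by positivity)
  linarith

/-- If `|c_1| = 2` then all deviations from the Koebe function vanish. The functional
`∑_{i≥1} μ_i s^{2i+1} |e_{i+1}|² + μ_0 s (|c_1|² - 4)` is monotone along the flow: the last term has
derivative `s |c_1 + 2 x|²` up to the factor `μ_0`, and the multipliers absorb the errors of the other
terms. Hence it is nonpositive at the end point, where the last term is zero. -/
theorem rigidity {f : ℂ → ℂ} (hfa : AnalyticOnNhd ℂ f (ball (0 : ℂ) 1))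
    (hfi : Set.InjOn f (ball (0 : ℂ) 1)) (hf0 : f 0 = 0) (hf1 : deriv f 0 = 1)
    {n : ℕ} {c : Fin (n + 1 + 1) → ℂ} (hc : LogRel (n + 1) f 1 c) (hc0 : c 0 = 0)
    (h2 : ‖c (Fin.ofNat (n + 1 + 1) 1)‖ = 2) :
    ∀ i ≤ n, eN (fun j => c (Fin.ofNat (n + 1 + 1) j)) (i + 1) = 0 := by
  obtain ⟨μ, η, hη, hμ0, hμ, H⟩ := exists_multipliers
    (fun i => 2 * (((i : ℝ) + 1) * (i + 2) * 2 ^ (i + 1)) ^ 2 * i) (fun i => by positivity) n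
  set ee : ℕ → (Fin (n + 1 + 1) → ℂ) → ℂ := fun k c => eN (fun j => c (Fin.ofNat (n + 1 + 1) j)) k with hee
  set Ψ : ℝ × (Fin (n + 1 + 1) → ℂ) → ℝ := fun w =>
    ∑ i ∈ Finset.range n, μ (i + 1) * ((Polynomial.X ^ (2 * (i + 1) + 1) : Polynomial ℝ).eval w.1 *
      ‖ee (i + 1 + 1) w.2‖ ^ 2) +
    μ 0 * ((Polynomial.X : Polynomial ℝ).eval w.1 * (‖w.2 (Fin.ofNat (n + 1 + 1) 1)‖ ^ 2 - 4)) with hΨ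
  have hΨc : ContDiff ℝ 1 Ψ := by
    refine ContDiff.add (ContDiff.sum fun i _ => contDiff_const.mul ((contDiff_time _).mul
      (ContDiff.norm_sq ℝ ?_))) (contDiff_const.mul ((contDiff_time _).mul
      (((contDiff_coord _).norm_sq ℝ).sub contDiff_const)))
    exact (contDiff_const.mul (contDiff_coord _)).sub
      (contDiff_const.mul (((contDiff_coord _).div_const 2).pow _))
  have := classS_bound hfa hfi hf0 hf1 (by omega : 1 ≤ n + 1) Ψ hΨc ?_ ?_ c hc hc0
  · intro i hi
    cases i with
    | zero => exact eN_one _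
    | succ i =>
      simp only [hΨ, Polynomial.eval_X, Polynomial.eval_pow, one_pow, h2, one_mul] at this
      have h3 : ∑ i ∈ Finset.range n, μ (i + 1) * ‖ee (i + 1 + 1) c‖ ^ 2 ≤ 0 := by linarith
      have h4 : ∀ i ∈ Finset.range n, 0 ≤ μ (i + 1) * ‖ee (i + 1 + 1) c‖ ^ 2 :=
        fun i _ => mul_nonneg (hμ _).le (sq_nonneg _)
      have h5 := (Finset.sum_eq_zero_iff_of_nonneg h4).1 (le_antisymm h3 (Finset.sum_nonneg h4)) i
        (Finset.mem_range.2 (by omega))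
      have h6 := (mul_eq_zero.1 h5).resolve_left (hμ _).ne'
      exact norm_eq_zero.1 ((pow_eq_zero_iff two_ne_zero).1 h6)
  · intro s hs0 hs1 x hx c hc3
    set q : ℕ → ℂ := fun j => c (Fin.ofNat (n + 1 + 1) j) with hq
    have hc3 : ‖q 1‖ ≤ 3 := hc3
    set F : ℕ → ℝ := fun j => if j = 0 then ‖q 1 + 2 * x‖ else ‖eN q (j + 1)‖ with hF
    have dsq : ∀ i ≤ n, HasDerivAt (fun r : ℝ => ‖ee (i + 1) (c + r • ellV (n + 1) x c)‖ ^ 2)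
        (2 * ((starRingEnd ℂ) (eN q (i + 1)) * eDot x q i).re) 0 := by
      intro i hi
      have d0 := ((hasDerivAt_coord (by omega : i + 1 ≤ n + 1) x c).const_mul ((i + 1 : ℕ) : ℂ)).sub
        ((((hasDerivAt_coord (by omega : 1 ≤ n + 1) x c).div_const 2).pow (i + 1)).const_mul 2)
      have d1 : HasDerivAt (fun r : ℝ => ee (i + 1) (c + r • ellV (n + 1) x c)) (eDot x q i) 0 := by
        refine d0.congr_deriv ?_
        simp [eDot, hq]
      refine d1.norm_sq.congr_deriv ?_
      rw [Complex.inner]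
      simp [mul_comm, hee, hq]
    set T : ℕ → ℝ := fun i => if i = 0 then s * ‖q 1 + 2 * x‖ ^ 2 else
      -((2 * i + 1) * s ^ (2 * i + 1)) * ‖eN q (i + 1)‖ ^ 2 +
      s ^ (2 * i + 1) * (2 * ((starRingEnd ℂ) (eN q (i + 1)) * eDot x q i).re) with hT
    have dT : ∀ i ∈ Finset.range n, HasDerivAt (fun r : ℝ => μ (i + 1) *
        ((Polynomial.X ^ (2 * (i + 1) + 1) : Polynomial ℝ).eval (s - r * s) *
        ‖ee (i + 1 + 1) (c + r • ellV (n + 1) x c)‖ ^ 2)) (μ (i + 1) * T (i + 1)) 0 := by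
      intro i hi
      have hi := Finset.mem_range.1 hi
      have d := ((hasDerivAt_time s (Polynomial.X ^ (2 * (i + 1) + 1))).mul
        (dsq (i + 1) (by omega))).const_mul (μ (i + 1))
      refine d.congr_deriv ?_
      simp only [zero_mul, sub_zero, zero_smul, add_zero, Polynomial.derivative_X_pow,
        Polynomial.eval_mul, Polynomial.eval_pow, Polynomial.eval_X, Polynomial.eval_natCast,
        Polynomial.eval_C, hT, if_neg (Nat.succ_ne_zero i)]
      change μ (i + 1) * (_ * ‖eN q (i + 1 + 1)‖ ^ 2 + _) = _
      rw [show 2 * (i + 1) + 1 - 1 = 2 * (i + 1) by omega, pow_succ]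
      push_cast
      ring
    have d0 := ((hasDerivAt_time s Polynomial.X).mul
      ((hasDerivAt_coord_sq (by omega : 1 ≤ n + 1) x c).sub_const 4)).const_mul (μ 0)
    refine ⟨∑ i ∈ Finset.range (n + 1), μ i * T i, ?_, ?_⟩
    · refine le_trans (mul_nonneg hη.le (Finset.sum_nonneg fun i _ => ?_))
        (H (fun i => s ^ (2 * i + 1) * F i ^ 2) T ?_ ?_ ?_)
      · exact mul_nonneg (pow_nonneg hs0 _) (sq_nonneg _)
      · exact fun i => mul_nonneg (pow_nonneg hs0 _) (sq_nonneg _)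
      · simp [hF, hT]
      · intro i hi1 hi2
        refine (dissipation hx hc3 hs0 hs1 hi1 hF).trans (le_of_eq ?_)
        simp [hT, show i ≠ 0 by omega]
    · rw [Finset.sum_range_succ']
      have dd := (HasDerivAt.fun_sum dT).add d0
      refine dd.congr_deriv ?_
      congr 2
      have hx2 : x.re * x.re + x.im * x.im = 1 := by
        rw [← Complex.normSq_apply, Complex.normSq_eq_norm_sq, hx]; norm_num
      simp only [zero_mul, sub_zero, zero_smul, add_zero, Polynomial.derivative_X, Polynomial.eval_one,
        Polynomial.eval_X, hT, if_true]
      change -(s * 1) * (‖q 1‖ ^ 2 - 4) + s * (2 * ((starRingEnd ℂ) (q 1) * lN x q 1).re) = _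
      rw [lN_one]
      simp only [← Complex.normSq_eq_norm_sq, Complex.normSq_apply]
      simp
      linear_combination (-4 * s) * hx2
  · intro s hs0 hs1
    have : ∀ k, ee (k + 1) (0 : Fin (n + 1 + 1) → ℂ) = 0 := fun k => by simp [hee, eN]
    simp [hΨ, this, hμ0]
    linarith
end

/-! ### Summation by parts with a convex weight -/

noncomputable section
section abel
open Topology Filter

lemma exists_small_of_summable {P : ℕ → ℝ} (hs : Summable (fun n : ℕ => P n / ((n : ℝ) + 1)))
    {ε : ℝ} (hε : 0 < ε) (k : ℕ) : ∃ n ≥ k, P n < ε := by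
  by_contra! h
  have h1 : Summable (fun n : ℕ => P (n + k) / (((n + k : ℕ) : ℝ) + 1)) :=
    (summable_nat_add_iff (f := fun n : ℕ => P n / ((n : ℝ) + 1)) k).2 hs
  have h2 : Summable (fun n : ℕ => ε / (((n + k : ℕ) : ℝ) + 1)) :=
    h1.of_nonneg_of_le (fun n => by positivity)
      (fun n => div_le_div_of_nonneg_right (h _ (by omega)) (by positivity))
  have h3 : Summable (fun n : ℕ => ε / ((n : ℝ) + 1)) :=
    (summable_nat_add_iff (f := fun n : ℕ => ε / ((n : ℝ) + 1)) k).1 h2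
  have h4 : Summable (fun n : ℕ => 1 / (((n + 1 : ℕ) : ℝ))) := by
    refine (h3.mul_left ε⁻¹).congr fun n => ?_
    push_cast
    field_simp
  exact Real.not_summable_one_div_natCast
    ((summable_nat_add_iff (f := fun n : ℕ => 1 / (n : ℝ)) 1).1 h4)

variable {P : ℕ → ℝ}

lemma antitone_of_convex (hc : ∀ n, 0 ≤ P n - 2 * P (n + 1) + P (n + 2)) (hP : ∀ n, 0 ≤ P n)
    (hs : Summable (fun n : ℕ => P n / ((n : ℝ) + 1))) : Antitone P := by
  refine antitone_nat_of_succ_le fun k => ?_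
  by_contra! h
  have h1 : ∀ i, P (k + i) < P (k + i + 1) ∧ P (k + 1) ≤ P (k + i + 1) := by
    intro i
    induction i with
    | zero => exact ⟨h, le_rfl⟩
    | succ i ih =>
      have := hc (k + i)
      have e1 : P (k + (i + 1)) = P (k + i + 1) := rfl
      have e2 : P (k + (i + 1) + 1) = P (k + i + 2) := rfl
      rw [e1, e2]
      constructor <;> linarith [ih.1, ih.2]
  obtain ⟨n, hn, hn2⟩ := exists_small_of_summable hs ((hP k).trans_lt h) (k + 1)
  obtain ⟨i, rfl⟩ := Nat.exists_eq_add_of_le hn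
  have := (h1 i).2
  rw [show k + 1 + i = k + i + 1 by omega] at hn2
  linarith

lemma tendsto_zero_of_convex (ha : Antitone P) (hP : ∀ n, 0 ≤ P n)
    (hs : Summable (fun n : ℕ => P n / ((n : ℝ) + 1))) : Tendsto P atTop (𝓝 0) := by
  rw [Metric.tendsto_atTop]
  intro ε hε
  obtain ⟨N, -, hN⟩ := exists_small_of_summable hs hε 0
  refine ⟨N, fun n hn => ?_⟩
  rw [Real.dist_eq, sub_zero, abs_of_nonneg (hP n)]
  exact (ha hn).trans_lt hN

/-- A convex sequence lies above its tangent line; here the tangent at `m + i` is evaluated at `m`. -/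
lemma tangent_le (hc : ∀ n, 0 ≤ P n - 2 * P (n + 1) + P (n + 2)) (m i : ℕ) :
    (i : ℝ) * (P (m + i) - P (m + i + 1)) ≤ P m - P (m + i) := by
  induction i with
  | zero => simp
  | succ i ih =>
    have := hc (m + i)
    have e1 : P (m + (i + 1)) = P (m + i + 1) := rfl
    have e2 : P (m + (i + 1) + 1) = P (m + i + 2) := rfl
    rw [e1, e2]
    push_cast
    have hi : (0 : ℝ) ≤ i := Nat.cast_nonneg i
    nlinarith [mul_nonneg hi this]

lemma tendsto_mul_diff (hc : ∀ n, 0 ≤ P n - 2 * P (n + 1) + P (n + 2)) (ha : Antitone P)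
    (hP : ∀ n, 0 ≤ P n) (ht : Tendsto P atTop (𝓝 0)) :
    Tendsto (fun N : ℕ => (N : ℝ) * (P N - P (N + 1))) atTop (𝓝 0) := by
  have h1 : Tendsto (fun N : ℕ => 2 * P (N / 2)) atTop (𝓝 0) := by
    have := (ht.comp (Nat.tendsto_div_const_atTop (two_ne_zero))).const_mul 2
    simpa using this
  refine squeeze_zero (fun N => mul_nonneg (Nat.cast_nonneg N)
    (sub_nonneg.2 (ha (Nat.le_succ N)))) (fun N => ?_) h1
  have h2 := tangent_le hc (N / 2) (N - N / 2)
  rw [show N / 2 + (N - N / 2) = N by omega] at h2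
  have h3 : (N : ℝ) ≤ 2 * ((N - N / 2 : ℕ) : ℝ) := by exact_mod_cast (by omega)
  have h4 := sub_nonneg.2 (ha (Nat.le_succ N))
  nlinarith [mul_le_mul_of_nonneg_right h3 h4, hP N]

/-- Summation by parts, twice. -/
lemma abel_identity (P a : ℕ → ℝ) (N : ℕ) :
    ∑ m ∈ Finset.range N, (P m - 2 * P (m + 1) + P (m + 2)) *
      ∑ k ∈ Finset.range (m + 1), ((m : ℝ) + 1 - k) * a k =
    ∑ j ∈ Finset.range N, (P j - P N - ((N : ℝ) - j) * (P N - P (N + 1))) * a j := by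
  induction N with
  | zero => simp
  | succ N ih =>
    rw [Finset.sum_range_succ, ih, Finset.sum_range_succ (fun k => ((N : ℝ) + 1 - k) * a k),
      Finset.sum_range_succ, mul_add, Finset.mul_sum, ← add_assoc, ← Finset.sum_add_distrib]
    congr 1
    · refine Finset.sum_congr rfl fun j _ => ?_
      push_cast; ring
    · push_cast; ring

/-- Double summation by parts: bounds `M_m ≤ 0` of Milin's type imply the inequality with any convex
weight `P` for which the right-hand side converges. Equality forces `Δ²P_m M_m = 0` for all `m`, and
some `Δ²P_m` is nonzero since `P` is not constantly zero and tends to zero. -/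
theorem weighted_bound (hc : ∀ n, 0 ≤ P n - 2 * P (n + 1) + P (n + 2)) (hP : ∀ n, 0 ≤ P n)
    (hP0 : 0 < P 0) (hs : Summable (fun n : ℕ => P n / ((n : ℝ) + 1))) {b : ℕ → ℝ}
    (hb : ∀ n, 0 ≤ b n)
    (hM : ∀ m : ℕ, ∑ k ∈ Finset.range (m + 1), ((m : ℝ) + 1 - k) * (b k - 1 / ((k : ℝ) + 1)) ≤ 0) :
    ∑' n, P n * b n ≤ ∑' n : ℕ, P n / ((n : ℝ) + 1) ∧
    (∑' n, P n * b n = ∑' n : ℕ, P n / ((n : ℝ) + 1) → ∃ m : ℕ,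
      ∑ k ∈ Finset.range (m + 1), ((m : ℝ) + 1 - k) * (b k - 1 / ((k : ℝ) + 1)) = 0) := by
  have ha := antitone_of_convex hc hP hs
  have ht := tendsto_zero_of_convex ha hP hs
  have hd := tendsto_mul_diff hc ha hP ht
  have hΔ : ∀ n, 0 ≤ P n - P (n + 1) := fun n => sub_nonneg.2 (ha (Nat.le_succ n))
  set M : ℕ → ℝ := fun m => ∑ k ∈ Finset.range (m + 1), ((m : ℝ) + 1 - k) * (b k - 1 / ((k : ℝ) + 1))
    with hMdef
  set S : ℕ → ℝ := fun N => ∑ m ∈ Finset.range N, (P m - 2 * P (m + 1) + P (m + 2)) * M m with hS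
  set D := ∑' n : ℕ, P n / ((n : ℝ) + 1) with hD
  have hSanti : Antitone S := antitone_nat_of_succ_le fun N => by
    rw [hS]; dsimp only; rw [Finset.sum_range_succ]
    linarith [mul_nonpos_of_nonneg_of_nonpos (hc N) (hM N)]
  -- The weights produced by `abel_identity` at stage `N`; they satisfy `0 ≤ W N j ≤ P j` and tend to
  -- `P j` as `N → ∞`.
  set W : ℕ → ℕ → ℝ := fun N j => P j - P N - ((N : ℝ) - j) * (P N - P (N + 1)) with hW
  have hW0 : ∀ N j, j ≤ N → 0 ≤ W N j := by
    intro N j hj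
    obtain ⟨i, rfl⟩ := Nat.exists_eq_add_of_le hj
    have := tangent_le hc j i
    simp only [hW]; push_cast
    linarith
  have hW1 : ∀ N j, j ≤ N → W N j ≤ P j := by
    intro N j hj
    have : (j : ℝ) ≤ N := Nat.cast_le.2 hj
    simp only [hW]
    nlinarith [hP N, mul_nonneg (sub_nonneg.2 this) (hΔ N)]
  have hWt : ∀ j, Tendsto (fun N => W N j) atTop (𝓝 (P j)) := by
    intro j
    have h1 : Tendsto (fun N => P N - P (N + 1)) atTop (𝓝 0) := by
      simpa using ht.sub (ht.comp (tendsto_add_atTop_nat 1))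
    have := ((tendsto_const_nhds (x := P j)).sub ht).sub (hd.sub (h1.const_mul (j : ℝ)))
    simp only [mul_zero, sub_zero] at this
    refine this.congr fun N => ?_
    simp only [hW]; ring
  have hpart : ∀ N0 J, ∑ j ∈ Finset.range J, P j * b j ≤ D + S N0 := by
    intro N0 J
    have h1 : Tendsto (fun N => ∑ j ∈ Finset.range J, W N j * b j) atTop
        (𝓝 (∑ j ∈ Finset.range J, P j * b j)) :=
      tendsto_finsetSum _ fun j _ => (hWt j).mul_const _
    refine le_of_tendsto h1 ?_
    filter_upwards [eventually_ge_atTop (max N0 J)] with N hN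
    have hN0 : N0 ≤ N := (le_max_left _ _).trans hN
    have hJ : J ≤ N := (le_max_right _ _).trans hN
    have h2 : ∑ j ∈ Finset.range J, W N j * b j ≤ ∑ j ∈ Finset.range N, W N j * b j :=
      Finset.sum_le_sum_of_subset_of_nonneg (Finset.range_mono hJ) fun j hj _ =>
        mul_nonneg (hW0 N j (Finset.mem_range.1 hj).le) (hb j)
    have h3 : S N = ∑ j ∈ Finset.range N, W N j * b j -
        ∑ j ∈ Finset.range N, W N j * (1 / ((j : ℝ) + 1)) := by
      rw [← Finset.sum_sub_distrib]
      refine (abel_identity P _ N).trans (Finset.sum_congr rfl fun j _ => ?_)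
      simp only [hW]; ring
    have h4 : ∑ j ∈ Finset.range N, W N j * (1 / ((j : ℝ) + 1)) ≤ D := by
      refine le_trans (Finset.sum_le_sum fun j hj => ?_)
        (hs.sum_le_tsum (Finset.range N) fun j _ => div_nonneg (hP j) (by positivity))
      rw [div_eq_mul_one_div (P j)]
      exact mul_le_mul_of_nonneg_right (hW1 N j (Finset.mem_range.1 hj).le) (by positivity)
    linarith [hSanti hN0]
  have hnn : ∀ n, 0 ≤ P n * b n := fun n => mul_nonneg (hP n) (hb n)
  have hts : ∀ N0, ∑' n, P n * b n ≤ D + S N0 := fun N0 =>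
    Real.tsum_le_of_sum_range_le hnn (hpart N0)
  refine ⟨by simpa [hS] using hts 0, fun heq => ?_⟩
  have hS0 : ∀ N, S N = 0 := fun N => by
    have h1 := hSanti (Nat.zero_le N)
    have h2 : S 0 = 0 := by simp [hS]
    linarith [hts N]
  have hCM : ∀ m, (P m - 2 * P (m + 1) + P (m + 2)) * M m = 0 := fun m => by
    have h1 := hS0 (m + 1)
    have h2 := hS0 m
    simp only [hS, Finset.sum_range_succ] at h1 h2
    linarith
  by_contra! hne
  have hC0 : ∀ m, P m - 2 * P (m + 1) + P (m + 2) = 0 := fun m =>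
    (mul_eq_zero.1 (hCM m)).resolve_right (hne m)
  have hlin : ∀ n, P n - P (n + 1) = P 0 - P 1 := by
    intro n
    induction n with
    | zero => rfl
    | succ n ih => linarith [hC0 n]
  have hlin2 : ∀ n : ℕ, P n + n * (P n - P (n + 1)) = P 0 := by
    intro n
    induction n with
    | zero => simp
    | succ n ih =>
      rw [hlin] at ih ⊢
      push_cast
      linarith [hlin n]
  have h5 := ht.add hd
  simp only [hlin2, add_zero] at h5
  exact hP0.ne' (tendsto_nhds_unique tendsto_const_nhds h5)

end abel
end

/-! ### Logarithmic coefficients of the class `𝒮` -/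

section final
open Topology Filter

/-- The vector `(0, 2γ₁, …, 2γ_K)` of the first Taylor coefficients of `log (f z / z)`. -/
def logVec (γ : ℕ → ℂ) (K : ℕ) : Fin (K + 1) → ℂ := fun k => if (k : ℕ) = 0 then 0 else 2 * γ k

lemma logRel_of_isLogCoeffs {f g : ℂ → ℂ} {γ : ℕ → ℂ} (hf0 : f 0 = 0)
    (hg : AnalyticOnNhd ℂ g (ball (0 : ℂ) 1)) (hg0 : g 0 = 0)
    (hgf : ∀ z ∈ ball (0 : ℂ) 1, z ≠ 0 → Complex.exp (g z) = f z / z)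
    (hγ : ∀ n : ℕ, 1 ≤ n → iteratedDeriv n g 0 = (n.factorial : ℂ) * (2 * γ n)) (K : ℕ) :
    LogRel K f 1 (logVec γ K) := by
  refine ⟨g, (HasCoef.of_analytic (K + 1) (hg 0 (mem_ball_self one_pos))).of_coeff fun k hk => ?_, ?_⟩
  · have hk' : ((Fin.ofNat (K + 1) k : Fin (K + 1)) : ℕ) = k := by
      simp [Fin.ofNat, Nat.mod_eq_of_lt hk]
    simp only [toPS, logVec, PowerSeries.coeff_mk, hk']
    rcases Nat.eq_zero_or_pos k with rfl | h
    · simp [hg0]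
    · rw [if_neg h.ne', hγ k h, mul_div_cancel_left₀]
      exact_mod_cast k.factorial_ne_zero
  · filter_upwards [ball_mem_nhds (0 : ℂ) one_pos] with z hz
    by_cases h : z = 0
    · simp [h, hf0]
    · rw [hgf z hz h]; field_simp

/-- The relations `n γ_n = γ_1^n` with `|γ_1| = 1` say that `log (f z / z) = -2 log (1 - γ_1 z)`. -/
lemma koebe_of_coeffs {f g : ℂ → ℂ} {γ : ℕ → ℂ} (hf0 : f 0 = 0)
    (hg : AnalyticOnNhd ℂ g (ball (0 : ℂ) 1)) (hg0 : g 0 = 0)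
    (hgf : ∀ z ∈ ball (0 : ℂ) 1, z ≠ 0 → Complex.exp (g z) = f z / z)
    (hγ : ∀ n : ℕ, 1 ≤ n → iteratedDeriv n g 0 = (n.factorial : ℂ) * (2 * γ n))
    (h1 : ‖γ 1‖ = 1) (h : ∀ n : ℕ, 1 ≤ n → (n : ℂ) * γ n = γ 1 ^ n) : IsKoebeRotation f := by
  refine ⟨Complex.arg (γ 1), fun z hz => ?_⟩
  have hu : Complex.exp (Complex.arg (γ 1) * Complex.I) = γ 1 := by
    have := Complex.norm_mul_exp_arg_mul_I (γ 1)
    rwa [h1, Complex.ofReal_one, one_mul] at this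
  simp only [hu]
  by_cases hz0 : z = 0
  · simp [hz0, hf0]
  have hz1 : ‖z‖ < 1 := by simpa using hz
  have huz : ‖γ 1 * z‖ < 1 := by rw [norm_mul, h1, one_mul]; exact hz1
  have t1 := Complex.hasSum_taylorSeries_on_ball (hg.differentiableOn) hz
  have t2 := (Complex.hasSum_taylorSeries_neg_log huz).mul_left 2
  have hgz : g z = 2 * -Complex.log (1 - γ 1 * z) := by
    refine t1.unique (t2.congr_fun fun n => ?_)
    simp only [sub_zero, smul_eq_mul]
    rcases Nat.eq_zero_or_pos n with rfl | hn
    · simp [hg0]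
    · have hn1 : (n : ℂ) ≠ 0 := by exact_mod_cast hn.ne'
      have hn2 : (n.factorial : ℂ) ≠ 0 := by exact_mod_cast n.factorial_ne_zero
      rw [hγ n hn, mul_pow, ← h n hn]
      field_simp
  have hne : 1 - γ 1 * z ≠ 0 := fun h0 => by
    rw [sub_eq_zero] at h0
    rw [← h0] at huz; simp at huz
  have h2 := hgf z hz hz0
  rw [hgz, show 2 * -Complex.log (1 - γ 1 * z) = -(((2 : ℕ) : ℂ) * Complex.log (1 - γ 1 * z)) by
    push_cast; ring, Complex.exp_neg, Complex.exp_nat_mul, Complex.exp_log hne] at h2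
  rw [eq_div_iff hz0] at h2
  rw [← h2]; field_simp

end final

theorem logcoeff_convex_weight
    (p : ℕ → ℝ) (hpos : ∀ n : ℕ, 1 ≤ n → 0 ≤ p n) (hp1 : 0 < p 1)
    (hconv : ∀ n : ℕ, 1 ≤ n → 0 ≤ p n - 2 * p (n + 1) + p (n + 2))
    (hsum : Summable (fun n : ℕ => p (n + 1) / ((n : ℝ) + 1)))
    (f : ℂ → ℂ) (γ : ℕ → ℂ) (hf : InClassS f) (hγ : IsLogCoeffs f γ) :
    (∑' n : ℕ, ((n : ℝ) + 1) * p (n + 1) * ‖γ (n + 1)‖ ^ 2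
        ≤ ∑' n : ℕ, p (n + 1) / ((n : ℝ) + 1)) ∧
    (∑' n : ℕ, ((n : ℝ) + 1) * p (n + 1) * ‖γ (n + 1)‖ ^ 2
        = ∑' n : ℕ, p (n + 1) / ((n : ℝ) + 1) → IsKoebeRotation f) := by
  obtain ⟨hfa, hfi, hf0, hf1⟩ := hf
  obtain ⟨g, hg, hg0, hgf, hγ⟩ := hγ
  have hrel := logRel_of_isLogCoeffs hf0 hg hg0 hgf hγ
  have hcoord : ∀ m k : ℕ, k ≤ m → logVec γ (m + 1)
      (Fin.ofNat (m + 1 + 1) (k + 1)) = 2 * γ (k + 1) := by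
    intro m k hk
    have hk' : ((Fin.ofNat (m + 1 + 1) (k + 1) : Fin (m + 1 + 1)) : ℕ) = k + 1 := by
      simp [Fin.ofNat]; omega
    rw [logVec, hk', if_neg (Nat.succ_ne_zero k)]
  have hcoord1 : ∀ m : ℕ, logVec γ (m + 1) (Fin.ofNat (m + 1 + 1) 1) = 2 * γ 1 :=
    fun m => hcoord m 0 (Nat.zero_le m)
  have hscale : ∀ m : ℕ, ∑ k ∈ Finset.range (m + 1), ((m : ℝ) + 1 - k) * (((k : ℝ) + 1) *
      ‖logVec γ (m + 1)
        (Fin.ofNat (m + 1 + 1) (k + 1))‖ ^ 2 - 4 / ((k : ℝ) + 1)) =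
      4 * ∑ k ∈ Finset.range (m + 1), ((m : ℝ) + 1 - k) *
        (((k : ℝ) + 1) * ‖γ (k + 1)‖ ^ 2 - 1 / ((k : ℝ) + 1)) := by
    intro m
    rw [Finset.mul_sum]
    refine Finset.sum_congr rfl fun k hk => ?_
    rw [hcoord m k (by have := Finset.mem_range.1 hk; omega), norm_mul, Complex.norm_ofNat]
    ring
  have hM : ∀ m : ℕ, ∑ k ∈ Finset.range (m + 1), ((m : ℝ) + 1 - k) *
        (((k : ℝ) + 1) * ‖γ (k + 1)‖ ^ 2 - 1 / ((k : ℝ) + 1)) ≤ 0 := by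
    intro m
    have := milin_le hfa hfi hf0 hf1 (hrel (m + 1)) (by simp [logVec])
    rw [hscale] at this
    linarith
  have hmain := weighted_bound (P := fun n => p (n + 1)) (b := fun n => ((n : ℝ) + 1) * ‖γ (n + 1)‖ ^ 2)
    (fun n => hconv (n + 1) (by omega)) (fun n => hpos _ (by omega)) hp1 hsum
    (fun n => by positivity) hM
  have hre : ∀ n : ℕ, p (n + 1) * (((n : ℝ) + 1) * ‖γ (n + 1)‖ ^ 2) =
      ((n : ℝ) + 1) * p (n + 1) * ‖γ (n + 1)‖ ^ 2 := fun n => by ring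
  simp only [hre] at hmain
  refine ⟨hmain.1, fun heq => ?_⟩
  -- Equality makes some Milin sum vanish, which by strictness needs `‖γ 1‖ = 1`.
  obtain ⟨m, hm⟩ := hmain.2 heq
  have hγ1 : ‖γ 1‖ = 1 := by
    refine le_antisymm ?_ ?_
    · have := hM 0
      simp at this
      nlinarith [norm_nonneg (γ 1)]
    · by_contra! hlt
      have := milin_lt hfa hfi hf0 hf1 (hrel (m + 1)) (by simp [logVec]) (by
        rw [hcoord1, norm_mul, Complex.norm_ofNat]; linarith)
      rw [hscale, hm] at this
      linarith
  refine koebe_of_coeffs hf0 hg hg0 hgf hγ hγ1 fun n hn => ?_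
  obtain ⟨i, rfl⟩ : ∃ i, n = i + 1 := ⟨n - 1, by omega⟩
  have h1 := rigidity hfa hfi hf0 hf1 (hrel (i + 1)) (by simp [logVec]) (by
    rw [hcoord1, norm_mul, Complex.norm_ofNat, hγ1, mul_one]) i le_rfl
  rw [eN] at h1
  rw [hcoord i i le_rfl, hcoord1, mul_div_cancel_left₀ _ two_ne_zero] at h1
  linear_combination h1 / 2
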